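/- For every finite set J with |J| ≥ 2 and every δ > 0, there exist c > 0 and η > 0 such that the following holds. Let Z, Z' be finite additive abelian groups and let φ_j : Z → Z' (j ∈ J) be group homomorphisms such that the set {φ_i(d) − φ_j(d) : i, j ∈ J, d ∈ Z} generates Z' as an abelian group. Let ν : Z' → ℝ_{≥0} be such that the induced weighted hypergraph (ν_e)_{e∈H} satisfies the H-linear forms condition within η. Then for every f : Z' → ℝ_{≥0} with 0 ≤ f(x) ≤ ν(x) for all x ∈ Z' and E[f(x) | x ∈ Z'] ≥ δ, one has E[∏_{j∈J} f(a + φ_j(d)) | a ∈ Z', d ∈ Z] ≥ c. -/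

import Mathlib

/-!
The proof transfers the problem to functions on `J → Z`. The homomorphism
`x ↦ (∑ φ_i(x_i), -∑ x_i)` onto `Z' × Z` is surjective by the generation hypothesis (`param_surjective`),
so base point `a` and dilation `d` may be sampled through `x`. The point `a + φ_j(d)` becomes
`y_j = ∑ φ_i(x_i) - φ_j(∑ x_i)`, which does not depend on `x_j`, and `ν(y_j)` is the induced weight
of the edge opposite to `j`. So a lower bound is needed for `E ∏_j f(y_j)`. Closeness of functions on
such an edge is measured by *box tests* (`IsTest`): products of bounded functions that each ignore
one further coordinate.

* **Pseudorandomness** (`lf_test`). Repeated weighted Cauchy–Schwarz and the linear forms condition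
  show that `ν(y_j) - 1` is nearly orthogonal to all box tests.
* **Dense model** (`dense_model`). Hence `f(y_j)` agrees with some `g_j` taking values in `[0, 1]`,
  up to `t` against box tests. The model is one side of a saddle point of `(g, ψ) ↦ E (f - g) ψ`
  over the closed convex hull of the tests; its value is bounded through a polynomial approximation
  of the positive part of `ψ`, the tests being closed under products.
* **Relative counting** (`counting`). `E ∏ f(y_j)` is close to `E ∏ g_j`, replacing one weighted
  factor at a time.
* **Removal** (`measure_removal`). On the subgroup `∑ x_i = 0` all points `y_j` coincide, and the
  measure there with density `f` looks like `f(y_j)` to every function ignoring `x_j`. It is thus a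
  probability density, up to the factor `δ`, whose image on every face is close to `g_j`. A removal
  lemma gives `E ∏ g_j ≥ c`.

The removal lemma is proved by compactness. From a sample of `n + 1` independent values per
coordinate one records, for all points with coordinates in the sample, which of the level sets
`{κ < g_j}` contain them; this is a random array of bits. Two laws are compared: `P`, for uniform
samples, and `Q`, for which the zeroth row has the given density. If `c` could not be chosen, a
limit of these laws would make the events that `g_j > κ` at the zeroth row have null intersection under
`P`, while on each face `Q` is dominated by `P` restricted to such an event up to a small error, and
`P` is exchangeable in each coordinate. Exchangeability gives conditional independence of the bits
given those using the zeroth row in fewer coordinates (`condExp_sig`, `condExp_peel_prod`), and a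
descending induction on the number of such coordinates (`exists_pattern`, `limit_step`) turns
positivity under `Q` into positivity under `P` (`limit_thm`), a contradiction.
-/

open Finset

/-- The average (expectation with respect to the uniform measure) of `f` over `α`. -/
noncomputable def avg {α : Type*} [Fintype α] (f : α → ℝ) : ℝ :=
  (∑ x, f x) / (Fintype.card α)

variable {J : Type} [Fintype J] [DecidableEq J] {V : J → Type}

/-- Restriction (projection) of a full tuple `x ∈ V_J` to the coordinates in `e`. -/
def restr (e : Finset J) (x : (j : J) → V j) : (i : ↥e) → V i := fun i => x i.1

/-- Projection of a tuple indexed by `e` to the coordinates in the face `e.erase j`. -/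
def faceProj {e : Finset J} (j : J) (x : (i : ↥e) → V i) :
    (i : ↥(e.erase j)) → V i :=
  fun i => x ⟨i.1, Finset.mem_of_mem_erase i.2⟩

/-- The product `∏_{f ∈ ∂e} 1_{B_f}(x_f)` of the indicators of the sets `B_f ⊆ V_f`
over the faces `f = e.erase j`, `j ∈ e`, of `e`. -/
noncomputable def faceInd (e : Finset J)
    (B : (j : J) → Set ((i : ↥(e.erase j)) → V i)) (x : (i : ↥e) → V i) : ℝ :=
  ∏ j ∈ e, Set.indicator (B j) (fun _ => (1 : ℝ)) (faceProj j x)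

/-- `(g, g')` is an `ε`-discrepancy pair on the edge `e`: for all choices of
`B_f ⊆ V_f` (`f ∈ ∂e`), `|E[(g(x_e) - g'(x_e)) ∏_{f ∈ ∂e} 1_{B_f}(x_f)]| ≤ ε`. -/
noncomputable def EdgeDiscrepancy [∀ j, Fintype (V j)] (e : Finset J)
    (g g' : ((i : ↥e) → V i) → ℝ) (ε : ℝ) : Prop :=
  ∀ B : (j : J) → Set ((i : ↥(e.erase j)) → V i),
    |avg (fun x : (i : ↥e) → V i => (g x - g' x) * faceInd e B x)| ≤ ε

/-- `g` is upper `η`-regular on the edge `e`: for all choices of `B_f ⊆ V_f`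
(`f ∈ ∂e`), `E[(g(x_e) - 1) ∏_{f ∈ ∂e} 1_{B_f}(x_f)] ≤ η`. -/
noncomputable def EdgeUpperRegular [∀ j, Fintype (V j)] (e : Finset J)
    (g : ((i : ↥e) → V i) → ℝ) (η : ℝ) : Prop :=
  ∀ B : (j : J) → Set ((i : ↥(e.erase j)) → V i),
    avg (fun x : (i : ↥e) → V i => (g x - 1) * faceInd e B x) ≤ η

/-- `E ⊆ V_e` is the set of `r`-cliques of some `(r-1)`-uniform hypergraph: there are
sets `B_f ⊆ V_f` for the faces `f ∈ ∂e` with `1_E(x_e) = ∏_{f ∈ ∂e} 1_{B_f}(x_f)`. -/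
def IsCliqueSet (e : Finset J) (E : Set ((i : ↥e) → V i)) : Prop :=
  ∃ B : (j : J) → Set ((i : ↥(e.erase j)) → V i),
    ∀ x, x ∈ E ↔ ∀ j ∈ e, faceProj j x ∈ B j

/-- `E ⊆ V_e` has complexity at most `T`: it can be partitioned into `T` (possibly
empty) clique sets. -/
def ComplexityLE (e : Finset J) (E : Set ((i : ↥e) → V i)) (T : ℕ) : Prop :=
  ∃ P : Fin T → Set ((i : ↥e) → V i),
    (∀ i, IsCliqueSet e (P i)) ∧
    (∀ i₁ i₂, i₁ ≠ i₂ → P i₁ ∩ P i₂ = ∅) ∧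
    (⋃ i, P i) = E

/-- The weighted hypergraph `ν` satisfies the `H`-linear forms condition within `η`:
for every choice of exponents `n (e, ω) ∈ {0,1}` (`e ∈ H`, `ω ∈ {0,1}^e`),
`|E[∏_{e ∈ H} ∏_{ω ∈ {0,1}^e} ν_e(x_e^{(ω)})^{n_{e,ω}} | x⁰, x¹ ∈ V_J] - 1| ≤ η`. -/
noncomputable def HLinearForms [∀ j, Fintype (V j)] (H : Finset (Finset J))
    (ν : (e : Finset J) → ((i : ↥e) → V i) → ℝ) (η : ℝ) : Prop :=
  ∀ n : (e : Finset J) → (↥e → Bool) → Bool,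
    |avg (fun x : ((j : J) → V j) × ((j : J) → V j) =>
      ∏ e ∈ H, ∏ ω : ↥e → Bool,
        if n e ω then ν e (fun i => if ω i then x.2 i.1 else x.1 i.1) else 1) - 1| ≤ η

/-- The weighted hypergraph on the hypergraph system `(J, (Z)_{j ∈ J}, |J| - 1, H)`
induced by `ν : Z' → ℝ` and homomorphisms `φ_j : Z →+ Z'`: on an edge
`e = J ∖ {j}` it is given by
`ν_e(x) = ν(∑_{i ∈ e} (φ_i(x_i) - φ_j(x_i)))`. (For an arbitrary `e ⊆ J` the formula
below subtracts `φ_j(∑_{i ∈ e} x_i)` for every `j ∉ e`; when `e` has exactly one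
missing element this agrees with the displayed formula.) -/
noncomputable def inducedNu {J : Type} [Fintype J] [DecidableEq J] {Z Z' : Type}
    [AddCommGroup Z] [AddCommGroup Z'] (φ : J → Z →+ Z') (ν : Z' → ℝ) :
    (e : Finset J) → ((i : ↥e) → Z) → ℝ :=
  fun e x =>
    ν ((∑ i : ↥e, φ i.1 (x i)) - ∑ j ∈ Finset.univ \ e, φ j (∑ i : ↥e, x i))

open MeasureTheory

set_option linter.unusedSectionVars false

/-! ### Exchangeable arrays of bits -/

/-- Indices of the arrays: a colour in `J` together with a row number for every coordinate. -/
abbrev Idx (J : Type) : Type := J × (J → ℕ)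

/-- Arrays of bits. The bit at `(j, m)` records whether the point with coordinates `x i (m i)`,
built from a sample `x`, lies in the `j`-th set. -/
abbrev Arr (J : Type) : Type := Idx J → Bool

/-- The coordinates at which `m` uses row `0`. -/
def zeroSet (m : J → ℕ) : Finset J := univ.filter fun i => m i = 0

/-- The σ-algebra generated by the bits whose zero set belongs to `D`. -/
abbrev sig (D : Set (Finset J)) : MeasurableSpace (Arr J) :=
  cylinderEvents {ι : Idx J | zeroSet ι.2 ∈ D}

/-- The array obtained by relabelling rows along `T`. -/
def shiftArr (T : J → ℕ → ℕ) (ω : Arr J) : Arr J := fun ι => ω (ι.1, fun i => T i (ι.2 i))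

/-- Invariance under injective relabellings of the rows, separately in each coordinate. -/
def Exchangeable (P : Measure (Arr J)) : Prop :=
  ∀ T : J → ℕ → ℕ, (∀ i, Function.Injective (T i)) → P.map (shiftArr T) = P

/-- The real-valued indicator function of `A`. -/
noncomputable abbrev ind {Ω : Type*} (A : Set Ω) : Ω → ℝ := A.indicator fun _ => 1

lemma sig_le (D : Set (Finset J)) : sig D ≤ MeasurableSpace.pi := cylinderEvents_le_pi

lemma sig_mono {D D' : Set (Finset J)} (h : D ⊆ D') : sig D ≤ sig D' :=
  cylinderEvents_mono fun _ hi => h hi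

lemma measurable_shiftArr (T : J → ℕ → ℕ) : Measurable (shiftArr T : Arr J → Arr J) := by
  unfold shiftArr; fun_prop

/-- An event depending on the coordinates in `S` is decided by them. -/
lemma cyl_mem_iff {ι : Type*} {S : Set ι} {A : Set (ι → Bool)}
    (hA : MeasurableSet[cylinderEvents S] A) {ω ω' : ι → Bool} (h : ∀ i ∈ S, ω i = ω' i) :
    ω ∈ A ↔ ω' ∈ A := by
  let m' : MeasurableSpace (ι → Bool) :=
    { MeasurableSet' := fun A => ∀ ω ω' : ι → Bool, (∀ i ∈ S, ω i = ω' i) → (ω ∈ A ↔ ω' ∈ A)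
      measurableSet_empty := by simp
      measurableSet_compl := fun s hs ω ω' h => by simp [hs ω ω' h]
      measurableSet_iUnion := fun s hs ω ω' h => by simp [fun i => hs i ω ω' h] }
  have hle : cylinderEvents S ≤ m' := by
    refine iSup₂_le fun i hi => ?_
    rintro _ ⟨t, -, rfl⟩ ω ω' h
    simp [h i hi]
  exact hle _ hA ω ω' h

/-- Events in a cylinder σ-algebra are approximated by events depending on finitely many of its
coordinates. -/
lemma approx_cyl {ι : Type*} (Δ : Set ι) (μ : Measure (ι → Bool)) [IsFiniteMeasure μ]
    {A : Set (ι → Bool)} (hA : MeasurableSet[cylinderEvents Δ] A) {ε : ℝ} (hε : 0 < ε) :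
    ∃ S : Finset ι, (S : Set ι) ⊆ Δ ∧ ∃ A' : Set (ι → Bool),
      MeasurableSet[cylinderEvents (S : Set ι)] A' ∧ μ (symmDiff A A') < ENNReal.ofReal ε := by
  classical
  let 𝒜 : Set (Set (ι → Bool)) := {A | ∃ S : Finset ι, (S : Set ι) ⊆ Δ ∧
    MeasurableSet[cylinderEvents (S : Set ι)] A}
  have halg : IsSetAlgebra 𝒜 := by
    refine ⟨⟨∅, by simp, MeasurableSpace.measurableSet_empty _⟩, ?_, ?_⟩
    · rintro s ⟨S, hS, hs⟩
      exact ⟨S, hS, MeasurableSpace.measurableSet_compl _ _ hs⟩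
    · rintro s t ⟨S, hS, hs⟩ ⟨S', hS', ht⟩
      refine ⟨S ∪ S', by simp [hS, hS'], ?_⟩
      exact @MeasurableSet.union _ (cylinderEvents ((S ∪ S' : Finset ι) : Set ι)) _ _
        (cylinderEvents_mono (by simp) _ hs) (cylinderEvents_mono (by simp) _ ht)
  have hgen : cylinderEvents Δ = MeasurableSpace.generateFrom 𝒜 := by
    apply le_antisymm
    · refine iSup₂_le fun i hi => ?_
      rintro s hs
      refine MeasurableSpace.measurableSet_generateFrom ⟨{i}, by simpa using hi, ?_⟩
      have : MeasurableSpace.comap (fun σ : ι → Bool => σ i) inferInstance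
          ≤ cylinderEvents (({i} : Finset ι) : Set ι) :=
        (measurable_cylinderEvent_apply (i := i) (by simp)).comap_le
      exact this _ hs
    · refine MeasurableSpace.generateFrom_le ?_
      rintro s ⟨S, hS, hs⟩
      exact cylinderEvents_mono hS _ hs
  have hle : cylinderEvents Δ ≤ (MeasurableSpace.pi : MeasurableSpace (ι → Bool)) :=
    cylinderEvents_le_pi
  have hd := @Measure.MeasureDense.of_generateFrom_isSetAlgebra_finite _ (cylinderEvents Δ)
    (μ.trim hle) 𝒜 (isFiniteMeasure_trim hle) halg hgen
  obtain ⟨t, ⟨S, hS, ht⟩, h⟩ := 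
    @Measure.MeasureDense.approx _ (cylinderEvents Δ) _ _ hd A hA (by
      have := isFiniteMeasure_trim (μ := μ) hle
      exact measure_ne_top _ _) ε hε
  refine ⟨S, hS, t, ht, ?_⟩
  rwa [trim_measurableSet_eq hle] at h
  exact @MeasurableSet.symmDiff _ (cylinderEvents Δ) _ _ hA (cylinderEvents_mono hS _ ht)

section
variable {Ω : Type*} {m0 : MeasurableSpace Ω} {P : Measure Ω} [IsProbabilityMeasure P]

lemma integrable_ind {A : Set Ω} (hA : MeasurableSet A) : Integrable (ind A) P :=
  (integrable_const 1).indicator hA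

lemma memLp_ind {A : Set Ω} (hA : MeasurableSet A) : MemLp (ind A) 2 P :=
  (memLp_const 1).indicator hA

lemma integral_ind {A : Set Ω} (hA : MeasurableSet A) : ∫ ω, ind A ω ∂P = P.real A :=
  integral_indicator_one hA

lemma condExp_ind_nonneg (A : Set Ω) (m : MeasurableSpace Ω) : 0 ≤ᵐ[P] P[ind A | m] :=
  condExp_nonneg (ae_of_all _ fun ω => Set.indicator_nonneg (by simp) ω)

/-- Testing against an `m`-measurable function does not see the difference between `X` and its
conditional expectation. -/
lemma integral_mul_condExp {m : MeasurableSpace Ω} (hm : m ≤ m0) {X Y : Ω → ℝ}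
    (hX : MemLp X 2 P) (hY : MemLp Y 2 P) (hYm : StronglyMeasurable[m] Y) :
    ∫ ω, Y ω * X ω ∂P = ∫ ω, Y ω * (P[X | m]) ω ∂P := by
  have hYX : Integrable (Y * X) P := hY.integrable_mul hX
  have h := condExp_mul_of_stronglyMeasurable_left hYm hYX (hX.integrable (by norm_num))
  calc ∫ ω, Y ω * X ω ∂P = ∫ ω, (P[Y * X | m]) ω ∂P := (integral_condExp hm).symm
    _ = _ := integral_congr_ae h
end

/-- The case of `condExp_sig` in which `A` depends on finitely many bits. -/
lemma condExp_sig_fin {P : Measure (Arr J)} [IsProbabilityMeasure P] (hP : Exchangeable P)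
    (e : Finset J) {D : Set (Finset J)} (hD : IsLowerSet D) {A : Set (Arr J)}
    (S : Finset (Idx J)) (hS : ∀ ι ∈ S, zeroSet ι.2 ⊆ e)
    (hA : MeasurableSet[cylinderEvents (S : Set (Idx J))] A) :
    P[ind A | sig D] =ᵐ[P] P[ind A | sig (D ∩ {Z | Z ⊆ e})] := by
  obtain ⟨M, hM⟩ : ∃ M : ℕ, ∀ ι ∈ S, ∀ i, ι.2 i ≤ M := by
    refine ⟨S.sup fun ι => univ.sup ι.2, fun ι hι i => ?_⟩
    exact (Finset.le_sup (f := ι.2) (mem_univ i)).trans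
      (Finset.le_sup (f := fun ι : Idx J => univ.sup ι.2) hι)
  -- Off `e` the relabelling `T` moves row `0` beyond all rows that `A` uses and fixes those rows.
  -- Hence `A` is invariant, while `sig D` is pulled back into `sig (D ∩ {Z | Z ⊆ e})`; comparing
  -- `L²` norms of the two conditional expectations then forces them to agree.
  let T : J → ℕ → ℕ := fun i n => if i ∈ e then n else if n = 0 then M + 1 else
    if n ≤ M then n else n + 1
  have hT : ∀ i, Function.Injective (T i) := by
    intro i a b hab
    simp only [T] at hab
    split_ifs at hab <;> omega
  have hAm : MeasurableSet A := cylinderEvents_le_pi _ hA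
  set X : Arr J → ℝ := ind A with hXdef
  set Y := P[X | sig D] with hY
  set Z := P[X | sig (D ∩ {Z | Z ⊆ e})] with hZ
  have hX2 : MemLp X 2 P := memLp_ind hAm
  have hY2 : MemLp Y 2 P := hX2.condExp (by norm_num)
  have hZ2 : MemLp Z 2 P := hX2.condExp (by norm_num)
  have hXT : ∀ ω, X (shiftArr T ω) = X ω := by
    intro ω
    have hmem : shiftArr T ω ∈ A ↔ ω ∈ A := by
      refine cyl_mem_iff hA fun ι hι => ?_
      have : (fun i => T i (ι.2 i)) = ι.2 := by
        funext i
        by_cases hi : i ∈ e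
        · simp [T, hi]
        · have h0 : ι.2 i ≠ 0 := fun h0 => hi (hS ι hι (by simp [zeroSet, h0]))
          simp [T, hi, h0, hM ι hι i]
      simp [shiftArr, this]
    by_cases h : ω ∈ A
    · simp [X, ind, h, hmem.2 h]
    · simp [X, ind, h, mt hmem.1 h]
  have hTm : @Measurable _ _ (sig (D ∩ {Z | Z ⊆ e})) (sig D) (shiftArr T) := by
    rw [measurable_cylinderEvents_iff]
    intro ι hι
    have hz : zeroSet (fun i => T i (ι.2 i)) ⊆ zeroSet ι.2 ∩ e := by
      intro i hi
      simp only [zeroSet, mem_filter, mem_univ, true_and, T, mem_inter] at hi ⊢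
      split_ifs at hi <;> simp_all
    exact measurable_cylinderEvent_apply (i := ((ι.1, fun i => T i (ι.2 i)) : Idx J))
      ⟨hD (hz.trans inter_subset_left) hι, hz.trans inter_subset_right⟩
  have hle : sig (D ∩ {Z | Z ⊆ e}) ≤ sig D := sig_mono Set.inter_subset_left
  have hYs : StronglyMeasurable[sig D] Y := stronglyMeasurable_condExp
  have hYT : StronglyMeasurable[sig (D ∩ {Z | Z ⊆ e})] (Y ∘ shiftArr T) :=
    hYs.comp_measurable hTm
  have hmp : MeasurePreserving (shiftArr T) P P := ⟨measurable_shiftArr T, hP T hT⟩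
  have hYT2 : MemLp (Y ∘ shiftArr T) 2 P := hY2.comp_measurePreserving hmp
  have h1 : ∫ ω, Y ω * X ω ∂P = ∫ ω, Y ω * Y ω ∂P :=
    integral_mul_condExp (sig_le D) hX2 hY2 hYs
  have hcomp : ∀ F : Arr J → ℝ, AEStronglyMeasurable F P →
      ∫ ω, F (shiftArr T ω) ∂P = ∫ ω, F ω ∂P := by
    intro F hF
    have := integral_map (μ := P) (measurable_shiftArr T).aemeasurable
      (f := F) (by rw [hP T hT]; exact hF)
    rw [hP T hT] at this
    exact this.symm
  have h2 : ∫ ω, Y ω * X ω ∂P = ∫ ω, (Y ∘ shiftArr T) ω * X ω ∂P := by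
    rw [← hcomp (fun ω => Y ω * X ω)]
    · simp [hXT]
    · exact (hY2.aestronglyMeasurable.mul hX2.aestronglyMeasurable)
  have h3 : ∫ ω, (Y ∘ shiftArr T) ω * X ω ∂P = ∫ ω, (Y ∘ shiftArr T) ω * Z ω ∂P :=
    integral_mul_condExp (sig_le _) hX2 hYT2 hYT
  have h4 : ∫ ω, (Y ∘ shiftArr T) ω * (Y ∘ shiftArr T) ω ∂P = ∫ ω, Y ω * Y ω ∂P :=
    hcomp (fun ω => Y ω * Y ω) (hY2.aestronglyMeasurable.mul hY2.aestronglyMeasurable)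
  have h5 : ∫ ω, Z ω * Y ω ∂P = ∫ ω, Z ω * Z ω ∂P := by
    rw [integral_mul_condExp (sig_le _) hY2 hZ2 stronglyMeasurable_condExp]
    refine integral_congr_ae ?_
    have : P[Y | sig (D ∩ {Z | Z ⊆ e})] =ᵐ[P] Z := condExp_condExp_of_le hle (sig_le _)
    filter_upwards [this] with ω h
    rw [h]
  have iYY : Integrable (fun ω => Y ω * Y ω) P := hY2.integrable_mul hY2
  have iZZ : Integrable (fun ω => Z ω * Z ω) P := hZ2.integrable_mul hZ2
  have iZY : Integrable (fun ω => Z ω * Y ω) P := hZ2.integrable_mul hY2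
  have iTT : Integrable (fun ω => (Y ∘ shiftArr T) ω * (Y ∘ shiftArr T) ω) P :=
    hYT2.integrable_mul hYT2
  have iTZ : Integrable (fun ω => (Y ∘ shiftArr T) ω * Z ω) P := hYT2.integrable_mul hZ2
  have h6 : 0 ≤ ∫ ω, ((Y ∘ shiftArr T) ω - Z ω) ^ 2 ∂P := integral_nonneg fun ω => sq_nonneg _
  have e6 : ∫ ω, ((Y ∘ shiftArr T) ω - Z ω) ^ 2 ∂P =
      ∫ ω, (Y ∘ shiftArr T) ω * (Y ∘ shiftArr T) ω ∂P -
        2 * ∫ ω, (Y ∘ shiftArr T) ω * Z ω ∂P + ∫ ω, Z ω * Z ω ∂P := by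
    rw [← integral_const_mul, ← integral_sub iTT (iTZ.const_mul 2)]
    refine Eq.trans ?_ (integral_add (iTT.sub (iTZ.const_mul 2)) iZZ)
    exact integral_congr_ae (ae_of_all _ fun ω => by beta_reduce; ring)
  have e7 : ∫ ω, (Y ω - Z ω) ^ 2 ∂P =
      ∫ ω, Y ω * Y ω ∂P - 2 * ∫ ω, Z ω * Y ω ∂P + ∫ ω, Z ω * Z ω ∂P := by
    rw [← integral_const_mul, ← integral_sub iYY (iZY.const_mul 2)]
    refine Eq.trans ?_ (integral_add (iYY.sub (iZY.const_mul 2)) iZZ)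
    exact integral_congr_ae (ae_of_all _ fun ω => by beta_reduce; ring)
  have h8 : ∫ ω, (Y ω - Z ω) ^ 2 ∂P ≤ 0 := by rw [e7]; linarith
  have i8 : Integrable (fun ω => (Y ω - Z ω) ^ 2) P := (hY2.sub hZ2).integrable_sq
  have h9 := (integral_eq_zero_iff_of_nonneg (fun ω => sq_nonneg _) i8).1
    (le_antisymm h8 (integral_nonneg fun ω => sq_nonneg _))
  filter_upwards [h9] with ω hω
  have : Y ω - Z ω = 0 := by simpa using hω
  linarith

/-- Conditional independence from exchangeability: for an event determined by the bits with zero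
set inside `e`, conditioning on a downward closed family `D` of zero sets only uses the members of
`D` inside `e`. -/
theorem condExp_sig {P : Measure (Arr J)} [IsProbabilityMeasure P] (hP : Exchangeable P)
    (e : Finset J) {D : Set (Finset J)} (hD : IsLowerSet D) {A : Set (Arr J)}
    (hA : MeasurableSet[sig {Z | Z ⊆ e}] A) :
    P[ind A | sig D] =ᵐ[P] P[ind A | sig (D ∩ {Z | Z ⊆ e})] := by
  have hAm : MeasurableSet A := sig_le _ _ hA
  set D' := D ∩ {Z | Z ⊆ e}
  have key : ∀ ε : ℝ, 0 < ε →
      ∫ ω, |(P[ind A | sig D]) ω - (P[ind A | sig D']) ω| ∂P ≤ 2 * ε := by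
    intro ε hε
    obtain ⟨S, hS, A', hA', hlt⟩ := approx_cyl _ P hA hε
    have hA'm : MeasurableSet A' := cylinderEvents_le_pi _ hA'
    have hfin := condExp_sig_fin hP e hD S (fun ι hι => hS hι) hA'
    have hd : ∫ ω, |(ind A - ind A') ω| ∂P ≤ ε := by
      have : ∀ ω, |(ind A - ind A') ω| = ind (symmDiff A A') ω := by
        intro ω
        by_cases h : ω ∈ A <;> by_cases h' : ω ∈ A' <;> simp [ind, Set.mem_symmDiff, h, h']
      simp_rw [this]
      rw [integral_ind (hAm.symmDiff hA'm)]
      exact (ENNReal.toReal_le_of_le_ofReal hε.le hlt.le)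
    have hb : ∀ D₀ : Set (Finset J),
        ∫ ω, |(P[ind A | sig D₀]) ω - (P[ind A' | sig D₀]) ω| ∂P ≤ ε := by
      intro D₀
      refine le_trans (le_of_eq ?_) ((integral_abs_condExp_le (m := sig D₀)
        (ind A - ind A')).trans hd)
      refine integral_congr_ae ?_
      filter_upwards [condExp_sub (integrable_ind hAm) (integrable_ind hA'm) (sig D₀)
        (μ := P)] with ω hω
      rw [hω]; rfl
    have iD : ∀ (D₀ : Set (Finset J)) , Integrable
        (fun ω => |(P[ind A | sig D₀]) ω - (P[ind A' | sig D₀]) ω|) P := fun D₀ =>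
      (integrable_condExp.sub integrable_condExp).abs
    calc _ ≤ ∫ ω, (|(P[ind A | sig D]) ω - (P[ind A' | sig D]) ω| +
          |(P[ind A | sig D']) ω - (P[ind A' | sig D']) ω|) ∂P := by
          refine integral_mono_ae (integrable_condExp.sub integrable_condExp).abs
            ((iD _).add (iD _)) ?_
          filter_upwards [hfin] with ω hω
          rw [hω, abs_sub_comm ((P[ind A | sig D']) ω)]
          exact abs_sub_le _ _ _
      _ = _ := integral_add (iD _) (iD _)
      _ ≤ ε + ε := add_le_add (hb _) (hb _)
      _ = 2 * ε := by ring
  have h0 : ∫ ω, |(P[ind A | sig D]) ω - (P[ind A | sig D']) ω| ∂P ≤ 0 := by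
    refine le_of_forall_pos_le_add fun ε hε => ?_
    have := key (ε / 2) (by linarith)
    linarith
  have h9 := (integral_eq_zero_iff_of_nonneg (fun ω => abs_nonneg _)
    (integrable_condExp.sub integrable_condExp).abs).1
    (le_antisymm h0 (integral_nonneg fun ω => abs_nonneg _))
  filter_upwards [h9] with ω hω
  have : (P[ind A | sig D]) ω - (P[ind A | sig D']) ω = 0 := by simpa using hω
  linarith

/-! ### Conditional independence -/

lemma ind_inter {Ω : Type*} (A B : Set Ω) : ind (A ∩ B) = ind A * ind B := by
  funext ω
  by_cases h : ω ∈ A <;> by_cases h' : ω ∈ B <;> simp [ind, h, h']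

/-- Given the bits with at most `d` zeros, an event living on a set `f` of size `d + 1` is
independent of the bits with at most `d + 1` zeros and zero set different from `f`. -/
lemma condExp_peel {P : Measure (Arr J)} [IsProbabilityMeasure P] (hP : Exchangeable P)
    {d : ℕ} {f : Finset J} (hf : f.card = d + 1) {A Y : Set (Arr J)}
    (hA : MeasurableSet[sig {Z | Z ⊆ f}] A)
    (hY : MeasurableSet[sig {Z | Z.card ≤ d + 1 ∧ Z ≠ f}] Y) :
    P[ind (Y ∩ A) | sig {Z : Finset J | Z.card ≤ d}] =ᵐ[P]
      P[ind A | sig {Z : Finset J | Z.card ≤ d}] * P[ind Y | sig {Z : Finset J | Z.card ≤ d}] := by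
  have hAm : MeasurableSet A := sig_le _ _ hA
  have hYm : MeasurableSet Y := sig_le _ _ hY
  set 𝓖 := sig {Z : Finset J | Z.card ≤ d}
  set 𝓒 := sig {Z : Finset J | ¬ f ⊆ Z}
  have hGC : 𝓖 ≤ 𝓒 := sig_mono fun Z hZ h => by
    have := card_le_card h
    simp only [Set.mem_ofPred_eq] at hZ
    omega
  have hYC : MeasurableSet[𝓒] Y := by
    refine sig_mono (fun Z hZ h => ?_) _ hY
    exact hZ.2 (eq_of_subset_of_card_le h (by rw [hf]; exact hZ.1)).symm
  have hAC : P[ind A | 𝓒] =ᵐ[P] P[ind A | 𝓖] := by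
    have h1 := condExp_sig hP f (D := {Z : Finset J | ¬ f ⊆ Z})
      (fun a b hba ha h => ha (h.trans hba)) hA
    have h2 := condExp_sig hP f (D := {Z : Finset J | Z.card ≤ d})
      (fun a b hba ha => (card_le_card hba).trans ha) hA
    have h3 : ({Z : Finset J | ¬ f ⊆ Z} ∩ {Z | Z ⊆ f} : Set (Finset J)) =
        {Z | Z.card ≤ d} ∩ {Z | Z ⊆ f} := by
      ext Z
      simp only [Set.mem_inter_iff, Set.mem_ofPred_eq]
      constructor
      · rintro ⟨h, h'⟩
        refine ⟨?_, h'⟩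
        have := card_lt_card ⟨h', h⟩
        omega
      · rintro ⟨h, h'⟩
        refine ⟨fun h'' => ?_, h'⟩
        have := card_le_card h''
        omega
    rw [h3] at h1
    exact h1.trans h2.symm
  have e1 : P[ind (Y ∩ A) | 𝓒] =ᵐ[P] ind Y * P[ind A | 𝓒] := by
    rw [ind_inter]
    refine condExp_mul_of_stronglyMeasurable_left ?_ ?_ (integrable_ind hAm)
    · exact (@stronglyMeasurable_const _ _ 𝓒 _ _).indicator hYC
    · rw [← ind_inter]; exact integrable_ind (hYm.inter hAm)
  have e2 : P[ind (Y ∩ A) | 𝓖] =ᵐ[P] P[P[ind A | 𝓖] * ind Y | 𝓖] := by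
    refine (condExp_condExp_of_le hGC (sig_le _)).symm.trans (condExp_congr_ae ?_)
    filter_upwards [e1, hAC] with ω h1 h2
    rw [h1, Pi.mul_apply, Pi.mul_apply, h2, mul_comm]
  refine e2.trans (condExp_mul_of_stronglyMeasurable_left stronglyMeasurable_condExp ?_
    (integrable_ind hYm))
  exact ((memLp_ind hAm).condExp (by norm_num)).integrable_mul (memLp_ind hYm)

/-- Iterating `condExp_peel`: events living on distinct sets of size `d + 1` are conditionally
independent, jointly with `Y`, given the bits with at most `d` zeros. -/
lemma condExp_peel_prod {P : Measure (Arr J)} [IsProbabilityMeasure P] (hP : Exchangeable P)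
    {d : ℕ} {A : Finset J → Set (Arr J)} (hA : ∀ f, MeasurableSet[sig {Z | Z ⊆ f}] (A f))
    (Fs : Finset (Finset J)) (hFs : ∀ f ∈ Fs, f.card = d + 1) :
    ∀ Y : Set (Arr J), MeasurableSet[sig {Z | Z.card ≤ d + 1 ∧ Z ∉ Fs}] Y →
    P[ind (Y ∩ ⋂ f ∈ Fs, A f) | sig {Z : Finset J | Z.card ≤ d}] =ᵐ[P] fun ω =>
      (∏ f ∈ Fs, (P[ind (A f) | sig {Z : Finset J | Z.card ≤ d}]) ω) *
        (P[ind Y | sig {Z : Finset J | Z.card ≤ d}]) ω := by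
  induction Fs using Finset.induction_on with
  | empty =>
    intro Y hY
    simp
  | insert f Fs hf ih =>
    intro Y hY
    have hfc : f.card = d + 1 := hFs f (mem_insert_self _ _)
    have hY' : MeasurableSet[sig {Z | Z.card ≤ d + 1 ∧ Z ∉ Fs}] (Y ∩ A f) := by
      refine @MeasurableSet.inter _ (sig _) _ _ (sig_mono ?_ _ hY) (sig_mono ?_ _ (hA f))
      · intro Z hZ
        exact ⟨hZ.1, fun h => hZ.2 (mem_insert_of_mem h)⟩
      · intro Z hZ
        refine ⟨(card_le_card hZ).trans hfc.le, fun h => hf ?_⟩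
        have := hFs Z (mem_insert_of_mem h)
        rwa [← eq_of_subset_of_card_le hZ (by omega)]
    have h1 := ih (fun g hg => hFs g (mem_insert_of_mem hg)) _ hY'
    have h2 := condExp_peel hP hfc (hA f) (Y := Y)
      (by
        refine sig_mono ?_ _ hY
        exact fun Z hZ => ⟨hZ.1, fun h => hZ.2 (h ▸ mem_insert_self _ _)⟩)
    have h3 : Y ∩ ⋂ g ∈ insert f Fs, A g = Y ∩ A f ∩ ⋂ g ∈ Fs, A g := by
      rw [Finset.set_biInter_insert, Set.inter_assoc]
    rw [h3]
    filter_upwards [h1, h2] with ω e1 e2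
    rw [e1, e2, prod_insert hf, Pi.mul_apply]
    ring

/-- On an atom `A` of a finite set `S` of coordinates, conditioning on `Δ ∪ S` amounts to
conditioning on `Δ` and renormalising by the conditional mass of `A`. Hence, where the conditional
probability of `F` given `Δ ∪ S` exceeds `θ`, almost surely that of `F ∩ A` given `Δ` exceeds `θ`
times that of `A`. -/
lemma pattern_null {ι : Type*} [DecidableEq ι] {P : Measure (ι → Bool)} [IsProbabilityMeasure P]
    (Δ : Set ι) (S : Finset ι) (b : ι → Bool) {F : Set (ι → Bool)} (hF : MeasurableSet F)
    (θ : ℝ) :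
    P (({ω | θ < (P[ind F | cylinderEvents (Δ ∪ S)]) ω} ∩ {ω | ∀ i ∈ S, ω i = b i}) \
      {ω | θ * (P[ind {ω | ∀ i ∈ S, ω i = b i} | cylinderEvents Δ]) ω <
        (P[ind (F ∩ {ω | ∀ i ∈ S, ω i = b i}) | cylinderEvents Δ]) ω}) = 0 := by
  set A : Set (ι → Bool) := {ω | ∀ i ∈ S, ω i = b i} with hAdef
  set u := P[ind (F ∩ A) | cylinderEvents Δ] with hu
  set v := P[ind A | cylinderEvents Δ] with hv
  set g := P[ind F | cylinderEvents (Δ ∪ S)] with hg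
  have hle : cylinderEvents Δ ≤ cylinderEvents (Δ ∪ (S : Set ι)) :=
    (cylinderEvents_mono Set.subset_union_left : _ ≤ (cylinderEvents _ : MeasurableSpace (ι → Bool)))
  have hle' : cylinderEvents (Δ ∪ (S : Set ι)) ≤ (MeasurableSpace.pi : MeasurableSpace (ι → Bool)) :=
    cylinderEvents_le_pi
  have hAΔ : MeasurableSet[cylinderEvents (Δ ∪ (S : Set ι))] A := by
    have : A = ⋂ i ∈ S, (fun ω : ι → Bool => ω i) ⁻¹' {b i} := by ext; simp [A]
    rw [this]
    refine S.measurableSet_biInter fun i hi => ?_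
    exact measurable_cylinderEvent_apply (i := i) (Or.inr hi) (measurableSet_singleton _)
  have hAm : MeasurableSet A := hle' _ hAΔ
  have hUm : MeasurableSet[cylinderEvents Δ] {ω | θ * v ω < u ω} :=
    measurableSet_lt (stronglyMeasurable_condExp.measurable.const_mul θ)
      stronglyMeasurable_condExp.measurable
  have hGm : MeasurableSet[cylinderEvents (Δ ∪ (S : Set ι))] {ω | θ < g ω} :=
    measurableSet_lt measurable_const stronglyMeasurable_condExp.measurable
  set B := ({ω | θ < g ω} ∩ A) \ {ω | θ * v ω < u ω} with hB
  have hBm : MeasurableSet[cylinderEvents (Δ ∪ (S : Set ι))] B :=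
    MeasurableSet.diff (MeasurableSet.inter hGm hAΔ) (hle _ hUm)
  have hBm' : MeasurableSet B := hle' _ hBm
  let patch : (ι → Bool) → ι → Bool := fun ω i => if i ∈ S then b i else ω i
  have hpm : @Measurable _ _ (cylinderEvents Δ) (cylinderEvents (Δ ∪ (S : Set ι))) patch := by
    rw [measurable_cylinderEvents_iff]
    intro i hi
    by_cases h : i ∈ S
    · simp only [patch, h, if_true]; exact measurable_const
    · simp only [patch, h, if_false]
      exact measurable_cylinderEvent_apply (i := i) (hi.resolve_right h)
  set C := patch ⁻¹' B \ {ω | θ * v ω < u ω} with hC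
  have hCm : MeasurableSet[cylinderEvents Δ] C := MeasurableSet.diff (hpm hBm) hUm
  have hCm' : MeasurableSet C := (hle.trans hle') _ hCm
  have hpA : ∀ ω ∈ A, patch ω = ω := by
    intro ω hω
    funext i
    by_cases h : i ∈ S
    · simp [patch, h, hω i h]
    · simp [patch, h]
  have hBC : B = C ∩ A := by
    ext ω
    constructor
    · intro h
      refine ⟨⟨?_, h.2⟩, h.1.2⟩
      rw [Set.mem_preimage, hpA ω h.1.2]; exact h
    · rintro ⟨⟨h1, h2⟩, h3⟩
      rwa [Set.mem_preimage, hpA ω h3] at h1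
  have e1 : P.real (F ∩ B) = ∫ ω in C, u ω ∂P := by
    rw [hu, setIntegral_condExp (hle.trans hle') (integrable_ind (hF.inter hAm)) hCm, hBC]
    rw [setIntegral_indicator (hF.inter hAm)]
    simp only [setIntegral_const, smul_eq_mul, mul_one]
    congr 1; ext; simp; tauto
  have e2 : P.real B = ∫ ω in C, v ω ∂P := by
    rw [hv, setIntegral_condExp (hle.trans hle') (integrable_ind hAm) hCm, hBC]
    rw [setIntegral_indicator hAm]
    simp
  have e3 : P.real (F ∩ B) = ∫ ω in B, g ω ∂P := by
    rw [hg, setIntegral_condExp hle' (integrable_ind hF) hBm]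
    rw [setIntegral_indicator hF]
    simp [Set.inter_comm]
  have h1 : P.real (F ∩ B) ≤ θ * P.real B := by
    rw [e1, e2, ← integral_const_mul]
    refine setIntegral_mono_on integrable_condExp.integrableOn
      (integrable_condExp.const_mul θ).integrableOn hCm' fun ω hω => ?_
    exact not_lt.1 hω.2
  by_contra hne
  have hpos : 0 < P B := pos_iff_ne_zero.2 hne
  have h2 : 0 < ∫ ω in B, (g ω - θ) ∂P := by
    rw [setIntegral_pos_iff_support_of_nonneg_ae]
    · refine hpos.trans_le (measure_mono fun ω hω => ⟨?_, hω⟩)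
      have : θ < g ω := hω.1.1
      simp only [Function.mem_support]; linarith
    · filter_upwards [ae_restrict_mem hBm'] with ω hω
      have : θ < g ω := hω.1.1
      simp only [Pi.zero_apply]; linarith
    · exact (integrable_condExp.sub (integrable_const θ)).integrableOn
  rw [integral_sub integrable_condExp.integrableOn (integrable_const θ).integrableOn, ← e3] at h2
  simp only [setIntegral_const, smul_eq_mul] at h2
  linarith

/-! ### Reduction to finite patterns -/

/-- The event that the coordinates in `S` are given by `b`. -/
def pat (S : Finset (Idx J)) (b : Arr J) : Set (Arr J) := {ω | ∀ ι ∈ S, ω ι = b ι}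

lemma measurableSet_pat {S : Finset (Idx J)} {Δ : Set (Idx J)} (h : (S : Set (Idx J)) ⊆ Δ)
    (b : Arr J) : MeasurableSet[cylinderEvents Δ] (pat S b) := by
  have : pat S b = ⋂ i ∈ S, (fun ω : Arr J => ω i) ⁻¹' {b i} := by ext; simp [pat]
  rw [this]
  refine S.measurableSet_biInter fun i hi => ?_
  exact measurable_cylinderEvent_apply (i := i) (h hi) (measurableSet_singleton _)

/-- Reduction of the number of zeros from `d + 1` to `d`. By martingale convergence `F j` is, up to
a proportion `1 - θ`, determined by the bits with at most `d` zeros and finitely many bits with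
`d + 1` zeros; some pattern `b` of the latter has positive `Q`-probability together with all `F j`.
Only `P`-null events of proper faces have to be known to be `Q`-null. -/
lemma exists_pattern {P Q : Measure (Arr J)} [IsProbabilityMeasure P] [IsProbabilityMeasure Q]
    (hQ : ∀ j, ∀ C, MeasurableSet[sig {Z | Z ⊂ univ.erase j}] C → P C = 0 → Q C = 0)
    {d : ℕ} (hd : d + 3 ≤ Fintype.card J) {F : J → Set (Arr J)}
    (hF : ∀ j, MeasurableSet[sig {Z | Z ⊆ univ.erase j ∧ Z.card ≤ d + 1}] (F j))
    (hpos : 0 < Q (⋂ j, F j)) {θ : ℝ} (hθ : θ < 1) :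
    ∃ (S : Finset (Idx J)) (b : Arr J), (∀ ι ∈ S, (zeroSet ι.2).card = d + 1) ∧
      0 < Q (⋂ j, {ω | θ * (P[ind (pat (S.filter fun ι => zeroSet ι.2 ⊆ univ.erase j) b) |
          sig {Z | Z ⊆ univ.erase j ∧ Z.card ≤ d}]) ω <
        (P[ind (F j ∩ pat (S.filter fun ι => zeroSet ι.2 ⊆ univ.erase j) b) |
          sig {Z | Z ⊆ univ.erase j ∧ Z.card ≤ d}]) ω}) := by
  classical
  obtain ⟨enc, henc⟩ := exists_injective_nat (Idx J)
  have hfin : ∀ n : ℕ, {ι : Idx J | enc ι < n ∧ (zeroSet ι.2).card = d + 1}.Finite := fun n =>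
    ((Set.finite_Iio n).preimage henc.injOn).subset fun ι hι => hι.1
  let S : ℕ → Finset (Idx J) := fun n => (hfin n).toFinset
  have hS : ∀ n ι, ι ∈ S n ↔ enc ι < n ∧ (zeroSet ι.2).card = d + 1 := fun n ι => by simp [S]
  let Sj : J → ℕ → Finset (Idx J) := fun j n =>
    (S n).filter fun ι => zeroSet ι.2 ⊆ univ.erase j
  let Δ : J → Set (Idx J) := fun j =>
    {ι | zeroSet ι.2 ∈ {Z : Finset J | Z ⊆ univ.erase j ∧ Z.card ≤ d}}
  let ℱ : J → Filtration ℕ (MeasurableSpace.pi : MeasurableSpace (Arr J)) := fun j =>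
    { seq := fun n => cylinderEvents (Δ j ∪ (Sj j n : Set (Idx J)))
      mono' := fun n m hnm => cylinderEvents_mono (Set.union_subset_union_right _ (by
        intro ι hι
        simp only [Sj, mem_coe, mem_filter, hS] at hι ⊢
        exact ⟨⟨hι.1.1.trans_le hnm, hι.1.2⟩, hι.2⟩))
      le' := fun n => cylinderEvents_le_pi }
  have hsub : ∀ j, ∀ Z : Finset J, Z ⊆ univ.erase j → Z.card ≤ d + 1 → Z ⊂ univ.erase j := by
    intro j Z h1 h2
    refine h1.ssubset_of_ne fun h => ?_
    rw [h, card_erase_of_mem (mem_univ _), card_univ] at h2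
    omega
  have hℱ : ∀ j n, ℱ j n ≤ sig {Z | Z ⊂ univ.erase j} := by
    intro j n
    refine cylinderEvents_mono ?_
    rintro ι (hι | hι)
    · exact hsub j _ hι.1 (hι.2.trans (by omega))
    · simp only [Sj, mem_coe, mem_filter, hS] at hι
      exact hsub j _ hι.2 hι.1.2.le
  have hsup : ∀ j, sig {Z | Z ⊆ univ.erase j ∧ Z.card ≤ d + 1} ≤ ⨆ n, ℱ j n := by
    intro j
    refine iSup₂_le fun ι hι => ?_
    refine le_trans ?_ (le_iSup _ (enc ι + 1))
    refine (measurable_cylinderEvent_apply (i := ι) ?_).comap_le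
    by_cases hc : (zeroSet ι.2).card ≤ d
    · exact Or.inl ⟨hι.1, hc⟩
    · refine Or.inr ?_
      simp only [Sj, mem_coe, mem_filter, hS]
      exact ⟨⟨by omega, le_antisymm hι.2 (by omega)⟩, hι.1⟩
  let G : J → ℕ → Set (Arr J) := fun j n => {ω | θ < (P[ind (F j) | ℱ j n]) ω}
  have hG : ∀ j n, MeasurableSet[sig {Z | Z ⊂ univ.erase j}] (G j n) := fun j n =>
    hℱ j n _ (measurableSet_lt measurable_const stronglyMeasurable_condExp.measurable)
  have hFm : ∀ j, MeasurableSet[sig {Z | Z ⊂ univ.erase j}] (F j) := fun j =>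
    sig_mono (fun Z hZ => by exact hsub j Z hZ.1 hZ.2) _ (hF j)
  have hN : ∀ j, Q (F j \ ⋃ n, ⋂ m ≥ n, G j m) = 0 := by
    intro j
    refine hQ j _ ?_ ?_
    · refine MeasurableSet.diff (hFm j) (MeasurableSet.iUnion fun n =>
        MeasurableSet.iInter fun m => MeasurableSet.iInter fun _ => hG j m)
    · have := Integrable.tendsto_ae_condExp (ℱ := ℱ j) (μ := P) (g := ind (F j))
        (integrable_ind (sig_le _ _ (hF j)))
        ((@stronglyMeasurable_const _ _ (⨆ n, ℱ j n) _ _).indicator (hsup j _ (hF j)))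
      refine measure_mono_null ?_ (ae_iff.1 this)
      rintro ω ⟨hω, hω'⟩ ht
      apply hω'
      have h1 : ind (F j) ω = 1 := by simp [ind, hω]
      rw [h1] at ht
      obtain ⟨n, hn⟩ := Filter.eventually_atTop.1 (ht.eventually_const_lt hθ)
      simp only [Set.mem_iUnion, Set.mem_iInter]
      exact ⟨n, fun m hm => hn m hm⟩
  obtain ⟨n, hn⟩ : ∃ n, 0 < Q (⋂ j, G j n) := by
    by_contra! hcon
    have h0 : Q (⋃ n, ⋂ j, G j n) = 0 := measure_iUnion_null fun n => le_antisymm (hcon n) bot_le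
    refine hpos.ne' (measure_mono_null ?_
      (measure_union_null h0 (measure_iUnion_null hN)))
    intro ω hω
    simp only [Set.mem_iInter] at hω
    by_cases h : ∀ j, ω ∈ ⋃ n, ⋂ m ≥ n, G j m
    · left
      simp only [Set.mem_iUnion, Set.mem_iInter] at h ⊢
      choose N hN using h
      exact ⟨univ.sup N, fun j => hN j _ (Finset.le_sup (mem_univ j))⟩
    · right
      push Not at h
      obtain ⟨j, hj⟩ := h
      exact Set.mem_iUnion.2 ⟨j, hω j, hj⟩
  let ext' : (S n → Bool) → Arr J := fun b ι => if h : ι ∈ S n then b ⟨ι, h⟩ else false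
  obtain ⟨b, hb⟩ : ∃ b : S n → Bool, 0 < Q ((⋂ j, G j n) ∩ pat (S n) (ext' b)) := by
    by_contra! hcon
    have h0 : Q (⋃ b : S n → Bool, (⋂ j, G j n) ∩ pat (S n) (ext' b)) = 0 :=
      measure_iUnion_null fun b => le_antisymm (hcon b) bot_le
    refine hn.ne' (measure_mono_null ?_ h0)
    intro ω hω
    refine Set.mem_iUnion.2 ⟨fun ι => ω ι, hω, fun ι hι => ?_⟩
    simp [ext', hι]
  refine ⟨S n, ext' b, fun ι hι => ((hS n ι).1 hι).2, ?_⟩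
  by_contra hcon
  set U : J → Set (Arr J) := fun j => {ω | θ * (P[ind (pat (Sj j n) (ext' b)) |
          sig {Z | Z ⊆ univ.erase j ∧ Z.card ≤ d}]) ω <
        (P[ind (F j ∩ pat (Sj j n) (ext' b)) |
          sig {Z | Z ⊆ univ.erase j ∧ Z.card ≤ d}]) ω} with hU
  have hU0 : Q (⋂ j, U j) = 0 := by simpa using hcon
  have hUm : ∀ j, MeasurableSet[sig {Z | Z ⊂ univ.erase j}] (U j) := fun j => by
    refine sig_mono (D := {Z | Z ⊆ univ.erase j ∧ Z.card ≤ d}) (fun Z hZ => ?_) _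
      (measurableSet_lt (stronglyMeasurable_condExp.measurable.const_mul θ)
        stronglyMeasurable_condExp.measurable)
    exact hsub j Z hZ.1 (hZ.2.trans (by omega))
  have hnull : ∀ j, Q ((G j n ∩ pat (Sj j n) (ext' b)) \ U j) = 0 := by
    intro j
    refine hQ j _ ?_ (pattern_null (Δ j) (Sj j n) (ext' b) (sig_le _ _ (hF j)) θ)
    refine MeasurableSet.diff (MeasurableSet.inter (hG j n) (measurableSet_pat ?_ _)) (hUm j)
    intro ι hι
    simp only [Sj, mem_coe, mem_filter, hS] at hι
    exact hsub j _ hι.2 hι.1.2.le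
  refine hb.ne' (measure_mono_null ?_ (measure_union_null hU0 (measure_iUnion_null hnull)))
  rintro ω ⟨h1, h2⟩
  by_cases h : ∀ j, ω ∈ U j
  · exact Or.inl (Set.mem_iInter.2 h)
  · right
    push Not at h
    obtain ⟨j, hj⟩ := h
    exact Set.mem_iUnion.2 ⟨j, ⟨Set.mem_iInter.1 h1 j, fun ι hι => h2 ι (mem_filter.1 hι).1⟩, hj⟩

/-! ### Positivity in the limit -/

/-- `condExp_sig` for the family of sets of size at most `d`. -/
lemma condExp_low {P : Measure (Arr J)} [IsProbabilityMeasure P] (hP : Exchangeable P)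
    (e : Finset J) (d : ℕ) {A : Set (Arr J)} (hA : MeasurableSet[sig {Z | Z ⊆ e}] A) :
    P[ind A | sig {Z : Finset J | Z.card ≤ d}] =ᵐ[P] P[ind A | sig {Z | Z ⊆ e ∧ Z.card ≤ d}] := by
  have h := condExp_sig hP e (D := {Z : Finset J | Z.card ≤ d})
      (fun a b hba ha => (card_le_card hba).trans ha) hA
  have h3 : ({Z : Finset J | Z.card ≤ d} ∩ {Z | Z ⊆ e} : Set (Finset J)) =
        {Z | Z ⊆ e ∧ Z.card ≤ d} := by
    ext Z; simp [and_comm]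
  rwa [h3] at h

lemma setIntegral_condExp_ind {Ω : Type*} {m m0 : MeasurableSpace Ω} {P : Measure Ω}
    [IsProbabilityMeasure P] (hm : m ≤ m0) {A K : Set Ω} (hA : MeasurableSet[m0] A)
    (hK : MeasurableSet[m] K) : ∫ ω in K, (P[ind A | m]) ω ∂P = P.real (A ∩ K) := by
  rw [setIntegral_condExp hm (integrable_ind hA) hK, setIntegral_indicator hA]
  simp [Set.inter_comm]

/-- If with positive probability each `F j` fills a proportion `θ` of a common pattern of bits with
`d + 1` zeros, given the bits with at most `d` zeros, then the `F j` meet in positive measure: by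
conditional independence the bits outside the face opposite to `j` do not affect the proportion,
and a union bound applies. -/
theorem limit_step {P : Measure (Arr J)} [IsProbabilityMeasure P]
    (hP : Exchangeable P) {d : ℕ} (hd : d + 3 ≤ Fintype.card J) {F : J → Set (Arr J)}
    (hF : ∀ j, MeasurableSet[sig {Z | Z ⊆ univ.erase j ∧ Z.card ≤ d + 1}] (F j))
    (S : Finset (Idx J)) (b : Arr J) (hS : ∀ ι ∈ S, (zeroSet ι.2).card = d + 1)
    {θ : ℝ} (hθ : Fintype.card J * (1 - θ) < 1)
    (hK : 0 < P (⋂ j, {ω | θ * (P[ind (pat (S.filter fun ι => zeroSet ι.2 ⊆ univ.erase j) b) |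
          sig {Z | Z ⊆ univ.erase j ∧ Z.card ≤ d}]) ω <
        (P[ind (F j ∩ pat (S.filter fun ι => zeroSet ι.2 ⊆ univ.erase j) b) |
          sig {Z | Z ⊆ univ.erase j ∧ Z.card ≤ d}]) ω})) :
    0 < P (⋂ j, F j) := by
  set Sj : J → Finset (Idx J) := fun j => S.filter fun ι => zeroSet ι.2 ⊆ univ.erase j with hSj
  set K : Set (Arr J) := ⋂ j, {ω | θ * (P[ind (pat (Sj j) b) |
          sig {Z | Z ⊆ univ.erase j ∧ Z.card ≤ d}]) ω <
        (P[ind (F j ∩ pat (Sj j) b) |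
          sig {Z | Z ⊆ univ.erase j ∧ Z.card ≤ d}]) ω} with hKdef
  let A : Finset J → Set (Arr J) := fun f => pat (S.filter fun ι => zeroSet ι.2 = f) b
  have hA : ∀ f, MeasurableSet[sig {Z | Z ⊆ f}] (A f) := fun f =>
    measurableSet_pat (by
      intro ι hι
      have := (mem_filter.1 (mem_coe.1 hι)).2
      exact this.subset) _
  let all : Finset (Finset J) := univ.filter fun f => f.card = d + 1
  have hpatS : pat S b = ⋂ f ∈ all, A f := by
    ext ω
    simp only [pat, A, all, Set.mem_iInter, mem_filter, mem_univ, true_and]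
    constructor
    · rintro h f - ι ⟨hι, -⟩
      exact h ι hι
    · intro h ι hι
      exact h _ (hS ι hι) ι ⟨hι, rfl⟩
  have hpatSj : ∀ j, pat (Sj j) b = ⋂ f ∈ all.filter (fun f => f ⊆ univ.erase j), A f := by
    intro j
    ext ω
    simp only [pat, A, all, Sj, Set.mem_iInter, mem_filter, mem_univ, true_and]
    constructor
    · rintro h f ⟨-, hf⟩ ι ⟨hι, rfl⟩
      exact h ι ⟨hι, hf⟩
    · rintro h ι ⟨hι, hf⟩
      exact h _ ⟨hS ι hι, hf⟩ ι ⟨hι, rfl⟩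
  have hsplit : ∀ j, pat S b = pat (Sj j) b ∩
      ⋂ f ∈ all.filter (fun f => ¬ f ⊆ univ.erase j), A f := by
    intro j
    rw [hpatS, hpatSj]
    ext ω
    simp only [Set.mem_iInter, Set.mem_inter_iff, mem_filter]
    constructor
    · intro h
      exact ⟨fun f hf => h f hf.1, fun f hf => h f hf.1⟩
    · rintro ⟨h1, h2⟩ f hf
      by_cases h : f ⊆ univ.erase j
      · exact h1 f ⟨hf, h⟩
      · exact h2 f ⟨hf, h⟩
  have hSjm : ∀ j, MeasurableSet[sig {Z | Z ⊆ univ.erase j ∧ Z.card ≤ d + 1}] (pat (Sj j) b) :=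
    fun j => measurableSet_pat (by
      intro ι hι
      have := mem_filter.1 (mem_coe.1 hι)
      exact ⟨this.2, (hS ι this.1).le⟩) _
  have hSjm' : ∀ j, MeasurableSet (pat (Sj j) b) := fun j => sig_le _ _ (hSjm j)
  have hFm' : ∀ j, MeasurableSet (F j) := fun j => sig_le _ _ (hF j)
  have hSm : MeasurableSet (pat S b) :=
    cylinderEvents_le_pi _ (measurableSet_pat (Set.subset_univ _) b)
  let G : MeasurableSpace (Arr J) := sig {Z : Finset J | Z.card ≤ d}
  have hG : G ≤ MeasurableSpace.pi := sig_le _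
  let p : Finset J → Arr J → ℝ := fun f => P[ind (A f) | G]
  let u : J → Arr J → ℝ := fun j => P[ind (F j ∩ pat (Sj j) b) |
          sig {Z | Z ⊆ univ.erase j ∧ Z.card ≤ d}]
  let v : J → Arr J → ℝ := fun j => P[ind (pat (Sj j) b) |
          sig {Z | Z ⊆ univ.erase j ∧ Z.card ≤ d}]
  have hKm : MeasurableSet[G] K := by
    refine MeasurableSet.iInter fun j => ?_
    refine sig_mono (D := {Z | Z ⊆ univ.erase j ∧ Z.card ≤ d}) (fun Z hZ => ?_) _
      (measurableSet_lt (stronglyMeasurable_condExp.measurable.const_mul θ)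
        stronglyMeasurable_condExp.measurable)
    exact hZ.2
  have hKm' : MeasurableSet[MeasurableSpace.pi] K := hG _ hKm
  have hlow : ∀ j, ∀ X, MeasurableSet[sig {Z | Z ⊆ univ.erase j ∧ Z.card ≤ d + 1}] X →
      P[ind X | G] =ᵐ[P] P[ind X | sig {Z | Z ⊆ univ.erase j ∧ Z.card ≤ d}] ∧
      P[ind (X ∩ ⋂ f ∈ all.filter (fun f => ¬ f ⊆ univ.erase j), A f) | G] =ᵐ[P]
        fun ω => (∏ f ∈ all.filter (fun f => ¬ f ⊆ univ.erase j), p f ω) * (P[ind X | G]) ω := by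
    intro j X hX
    refine ⟨condExp_low hP _ d ?_, condExp_peel_prod hP hA _ ?_ X ?_⟩
    · refine sig_mono (fun Z hZ => ?_) _ hX
      exact hZ.1
    · intro f hf
      simp only [all, mem_filter] at hf
      exact hf.1.2
    · refine sig_mono (fun Z hZ => ?_) _ hX
      refine ⟨hZ.2, fun h => ?_⟩
      exact (mem_filter.1 h).2 hZ.1
  have hw1 : ∀ j, P[ind (pat S b) | G] =ᵐ[P] fun ω =>
      (∏ f ∈ all.filter (fun f => ¬ f ⊆ univ.erase j), p f ω) * v j ω := by
    intro j
    have h := hlow j _ (hSjm j)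
    rw [← hsplit] at h
    filter_upwards [h.1, h.2] with ω h1 h2
    rw [h2, h1]
  have hw2 : ∀ j, P[ind (F j ∩ pat S b) | G] =ᵐ[P] fun ω =>
      (∏ f ∈ all.filter (fun f => ¬ f ⊆ univ.erase j), p f ω) * u j ω := by
    intro j
    have h := hlow j (F j ∩ pat (Sj j) b) (MeasurableSet.inter (hF j) (hSjm j))
    rw [Set.inter_assoc, ← hsplit] at h
    filter_upwards [h.1, h.2] with ω h1 h2
    rw [h2, h1]
  have hv : ∀ j, v j =ᵐ[P] fun ω => ∏ f ∈ all.filter (fun f => f ⊆ univ.erase j), p f ω := by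
    intro j
    have h := condExp_peel_prod hP (d := d) hA (all.filter (fun f => f ⊆ univ.erase j)) (by
      intro f hf
      simp only [all, mem_filter] at hf
      exact hf.1.2) Set.univ MeasurableSet.univ
    rw [Set.univ_inter, ← hpatSj] at h
    have h1 : P[ind (Set.univ : Set (Arr J)) | sig {Z : Finset J | Z.card ≤ d}] = fun _ => 1 := by
      rw [ind, Set.indicator_univ]
      exact condExp_const (sig_le _) 1
    filter_upwards [h, (hlow j _ (hSjm j)).1] with ω e1 e2
    rw [h1, mul_one] at e1
    rw [← e1]; exact e2.symm
  have huv : ∀ j, u j ≤ᵐ[P] v j := by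
    intro j
    refine condExp_mono (integrable_ind ((hFm' j).inter (hSjm' j)))
      (integrable_ind (hSjm' j)) (ae_of_all _ fun ω => ?_)
    exact Set.indicator_le_indicator_of_subset Set.inter_subset_right (fun _ => zero_le_one) ω
  have hp0 : ∀ f, 0 ≤ᵐ[P] p f := fun f => condExp_ind_nonneg _ _
  have hcov : ∀ f ∈ all, ∃ j, f ⊆ univ.erase j := by
    intro f hf
    have hf' : f.card = d + 1 := (mem_filter.1 hf).2
    obtain ⟨j, hj⟩ : ∃ j, j ∉ f := by
      by_contra! h
      have : f = univ := by ext; simp [h]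
      rw [this, card_univ] at hf'
      omega
    exact ⟨j, fun i hi => by
      simp only [mem_erase, mem_univ, and_true]
      rintro rfl; exact hj hi⟩
  have hppos : ∀ᵐ ω ∂P, ω ∈ K → ∀ f ∈ all, 0 < p f ω := by
    filter_upwards [ae_all_iff.2 hv, ae_all_iff.2 huv, ae_all_iff.2 hp0] with ω h1 h2 h3 hω f hf
    obtain ⟨j, hj⟩ := hcov f hf
    have hω' : θ * v j ω < u j ω := Set.mem_iInter.1 hω j
    have hvpos : v j ω ≠ 0 := fun h => by
      have := h2 j
      rw [h] at hω' this
      linarith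
    rw [h1 j, prod_ne_zero_iff] at hvpos
    exact lt_of_le_of_ne (h3 f) (hvpos f (mem_filter.2 ⟨hf, hj⟩)).symm
  obtain ⟨j0⟩ : Nonempty J := Fintype.card_pos_iff.1 (by omega)
  have hwpos : 0 < P.real (pat S b ∩ K) := by
    rw [← setIntegral_condExp_ind hG hSm hKm, setIntegral_pos_iff_support_of_nonneg_ae]
    · refine hK.trans_le (measure_mono_ae ?_)
      have hk : ∀ᵐ ω ∂P, ω ∈ K → ω ∈ Function.support (P[ind (pat S b)|G]) ∩ K := by
        filter_upwards [hppos, hw1 j0, hv j0] with ω h1 h2 h3 hω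
        refine ⟨?_, hω⟩
        rw [Function.mem_support, h2, h3]
        exact (mul_pos (prod_pos fun f hf => h1 hω f (mem_filter.1 hf).1)
          (prod_pos fun f hf => h1 hω f (mem_filter.1 hf).1)).ne'
      exact hk
    · exact ae_restrict_of_ae (condExp_ind_nonneg _ _)
    · exact integrable_condExp.integrableOn
  have hge : ∀ j, θ * P.real (pat S b ∩ K) ≤ P.real (F j ∩ pat S b ∩ K) := by
    intro j
    rw [← setIntegral_condExp_ind hG hSm hKm,
      ← setIntegral_condExp_ind hG ((hFm' j).inter hSm) hKm, ← integral_const_mul]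
    refine integral_mono_ae (integrable_condExp.const_mul θ).integrableOn
      integrable_condExp.integrableOn ?_
    filter_upwards [ae_restrict_mem hKm', ae_restrict_of_ae (hw1 j), ae_restrict_of_ae (hw2 j),
      ae_restrict_of_ae (ae_all_iff.2 hp0)] with ω hω h1 h2 h3
    have hω' : θ * v j ω < u j ω := Set.mem_iInter.1 hω j
    rw [h1, h2]
    have : 0 ≤ ∏ f ∈ all.filter (fun f => ¬ f ⊆ univ.erase j), p f ω :=
      prod_nonneg fun f _ => h3 f
    nlinarith
  have hdiff : ∀ j, P.real ((pat S b ∩ K) \ F j) ≤ (1 - θ) * P.real (pat S b ∩ K) := by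
    intro j
    have h := measureReal_sdiff_add_inter (μ := P) (s := pat S b ∩ K) (hFm' j)
    have h2 : (pat S b ∩ K) ∩ F j = F j ∩ pat S b ∩ K := by
      rw [Set.inter_comm, Set.inter_assoc]
    rw [h2] at h
    linarith [hge j]
  by_contra hcon
  have h0 : P (⋂ j, F j) = 0 := by simpa using hcon
  have h0' : P.real (⋂ j, F j) = 0 := by simp [measureReal_def, h0]
  have hle : P.real (pat S b ∩ K) ≤ P.real (⋂ j, F j) + ∑ j, P.real ((pat S b ∩ K) \ F j) := by
    calc P.real (pat S b ∩ K) ≤ P.real ((⋂ j, F j) ∪ ⋃ j, (pat S b ∩ K) \ F j) := by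
          refine measureReal_mono fun ω hω => ?_
          by_cases h : ∀ j, ω ∈ F j
          · exact Or.inl (Set.mem_iInter.2 h)
          · push Not at h
            obtain ⟨j, hj⟩ := h
            exact Or.inr (Set.mem_iUnion.2 ⟨j, hω, hj⟩)
      _ ≤ _ := measureReal_union_le _ _
      _ ≤ _ := by gcongr; exact measureReal_iUnion_fintype_le _
  have hsum : ∑ j, P.real ((pat S b ∩ K) \ F j) ≤
      Fintype.card J * ((1 - θ) * P.real (pat S b ∩ K)) := by
    calc _ ≤ ∑ _j : J, (1 - θ) * P.real (pat S b ∩ K) := sum_le_sum fun j _ => hdiff j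
      _ = _ := by rw [sum_const, card_univ, nsmul_eq_mul]
  nlinarith

/-- Positivity passes from `Q` to `P` for intersections of face events, by induction on the number
of zeros, as soon as `Q` is absolutely continuous with respect to `P` on each proper face. -/
theorem limit_pos {P Q : Measure (Arr J)} [IsProbabilityMeasure P] [IsProbabilityMeasure Q]
    (hP : Exchangeable P)
    (hQ : ∀ j, ∀ C, MeasurableSet[sig {Z | Z ⊂ univ.erase j}] C → P C = 0 → Q C = 0)
    (d : ℕ) : d + 2 ≤ Fintype.card J → ∀ F : J → Set (Arr J),
    (∀ j, MeasurableSet[sig {Z | Z ⊆ univ.erase j ∧ Z.card ≤ d}] (F j)) →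
    0 < Q (⋂ j, F j) → 0 < P (⋂ j, F j) := by
  induction d with
  | zero =>
    intro hd F hF hpos
    obtain ⟨j⟩ : Nonempty J := Fintype.card_pos_iff.1 (by omega)
    by_contra hcon
    refine hpos.ne' (hQ j _ (MeasurableSet.iInter fun i => ?_) (by simpa using hcon))
    refine sig_mono (fun Z hZ => ?_) _ (hF i)
    have h0 : Z = ∅ := card_eq_zero.1 (Nat.le_zero.1 hZ.2)
    subst h0
    refine (empty_subset _).ssubset_of_ne fun h => ?_
    have := congrArg Finset.card h
    rw [card_erase_of_mem (mem_univ _), card_univ, card_empty] at this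
    omega
  | succ d ih =>
    intro hd F hF hpos
    have hk : (0 : ℝ) < Fintype.card J := by
      have : 0 < Fintype.card J := by omega
      exact_mod_cast this
    have hk1 : (1 : ℝ) ≤ Fintype.card J := by
      have : 1 ≤ Fintype.card J := by omega
      exact_mod_cast this
    set θ : ℝ := 1 - 1 / (2 * Fintype.card J) with hθ
    have hq : 1 / (2 * Fintype.card J : ℝ) ≤ 1 := by
      rw [div_le_one (by positivity)]; linarith
    have hq0 : 0 < 1 / (2 * Fintype.card J : ℝ) := by positivity
    obtain ⟨S, b, hS, hpos'⟩ := exists_pattern hQ (by omega) hF hpos (θ := θ) (by linarith)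
    refine limit_step hP (by omega) hF S b hS (θ := θ) ?_
      (ih (by omega) _ (fun j => ?_) hpos')
    · have : (Fintype.card J : ℝ) * (1 - θ) = 1 / 2 := by rw [hθ]; field_simp; ring
      rw [this]; norm_num
    · exact measurableSet_lt (stronglyMeasurable_condExp.measurable.const_mul θ)
        stronglyMeasurable_condExp.measurable

/-- Removal lemma in the limit: a probability measure `Q` that on each face opposite to `j` is
dominated by the restriction of `P` to `E j`, up to a small multiple of `P`, forces the sets `E j`
to have an intersection of positive `P`-measure. -/
theorem limit_thm {P Q : Measure (Arr J)} [IsProbabilityMeasure P] [IsProbabilityMeasure Q]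
    (hJ : 2 ≤ Fintype.card J) (hP : Exchangeable P) {E : J → Set (Arr J)}
    (hE : ∀ j, MeasurableSet[sig {Z | Z ⊆ univ.erase j}] (E j)) {a κ : ℝ}
    (hκ0 : 0 ≤ κ) (hκ : Fintype.card J * κ < 1)
    (hQ : ∀ j, ∀ C, MeasurableSet[sig {Z | Z ⊂ univ.erase j}] C →
      Q.real C ≤ a * P.real (C ∩ E j) + κ * P.real C) :
    0 < P (⋂ j, E j) := by
  obtain ⟨d, hd⟩ : ∃ d, Fintype.card J = d + 2 := ⟨Fintype.card J - 2, by omega⟩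
  have hcard : ∀ j : J, (univ.erase j).card = d + 1 := fun j => by
    rw [card_erase_of_mem (mem_univ _), card_univ]; omega
  have hsig : ∀ j : J, ({Z | Z ⊂ univ.erase j} : Set (Finset J)) =
      {Z | Z ⊆ univ.erase j ∧ Z.card ≤ d} := by
    intro j
    ext Z
    simp only [Set.mem_ofPred_eq]
    constructor
    · intro h
      have := card_lt_card h
      rw [hcard] at this
      exact ⟨h.1, by omega⟩
    · rintro ⟨h1, h2⟩
      refine h1.ssubset_of_ne fun h => ?_
      rw [h, hcard] at h2
      omega
  have hEm : ∀ j, MeasurableSet (E j) := fun j => sig_le _ _ (hE j)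
  have hQ0 : ∀ j, ∀ C, MeasurableSet[sig {Z | Z ⊂ univ.erase j}] C → P C = 0 → Q C = 0 := by
    intro j C hC h0
    have h := hQ j C hC
    have h1 : P.real C = 0 := by simp [measureReal_def, h0]
    have h2 : P.real (C ∩ E j) = 0 := by
      simp [measureReal_def, measure_mono_null Set.inter_subset_left h0]
    rw [h1, h2] at h
    have h3 : Q.real C = 0 := le_antisymm (by linarith) measureReal_nonneg
    simpa [measureReal_def, ENNReal.toReal_eq_zero_iff] using h3
  let F : J → Set (Arr J) := fun j =>
    {ω | 0 < (P[ind (E j) | sig {Z | Z ⊆ univ.erase j ∧ Z.card ≤ d}]) ω}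
  have hF : ∀ j, MeasurableSet[sig {Z | Z ⊆ univ.erase j ∧ Z.card ≤ d}] (F j) := fun j =>
    measurableSet_lt measurable_const stronglyMeasurable_condExp.measurable
  have hQF : ∀ j, Q.real (F j)ᶜ ≤ κ := by
    intro j
    have h := hQ j (F j)ᶜ (by rw [hsig]; exact MeasurableSet.compl (hF j))
    have h1 : P.real ((F j)ᶜ ∩ E j) = 0 := by
      refine le_antisymm ?_ measureReal_nonneg
      rw [Set.inter_comm, ← setIntegral_condExp_ind (sig_le _) (hEm j) (MeasurableSet.compl (hF j))]
      refine setIntegral_nonpos (sig_le _ _ (MeasurableSet.compl (hF j))) fun ω hω => ?_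
      exact not_lt.1 hω
    rw [h1, mul_zero, zero_add] at h
    exact h.trans (mul_le_of_le_one_right hκ0 measureReal_le_one)
  have hQpos : 0 < Q (⋂ j, F j) := by
    by_contra hcon
    have h0 : Q (⋂ j, F j) = 0 := by simpa using hcon
    have hle : Q.real Set.univ ≤ Q.real (⋂ j, F j) + ∑ j, Q.real (F j)ᶜ := by
      calc Q.real Set.univ ≤ Q.real ((⋂ j, F j) ∪ ⋃ j, (F j)ᶜ) := by
            refine measureReal_mono fun ω hω => ?_
            by_cases h : ∀ j, ω ∈ F j
            · exact Or.inl (Set.mem_iInter.2 h)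
            · push Not at h
              obtain ⟨j, hj⟩ := h
              exact Or.inr (Set.mem_iUnion.2 ⟨j, hj⟩)
        _ ≤ _ := measureReal_union_le _ _
        _ ≤ _ := by gcongr; exact measureReal_iUnion_fintype_le _
    have hs : ∑ j, Q.real (F j)ᶜ ≤ Fintype.card J * κ := by
      calc _ ≤ ∑ _j : J, κ := sum_le_sum fun j _ => hQF j
        _ = _ := by rw [sum_const, card_univ, nsmul_eq_mul]
    have h1 : Q.real (⋂ j, F j) = 0 := by simp [measureReal_def, h0]
    rw [h1, probReal_univ] at hle
    linarith
  have hPpos := limit_pos hP hQ0 d hd.ge F hF hQpos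
  have hinj : ∀ i j : J, univ.erase i = univ.erase j → i = j := by
    intro i j h
    by_contra hne
    have : i ∈ univ.erase j := by simp [hne]
    rw [← h] at this
    simp at this
  let A : Finset J → Set (Arr J) := fun f => ⋂ j, ⋂ _ : univ.erase j = f, E j
  have hA : ∀ f, MeasurableSet[sig {Z | Z ⊆ f}] (A f) := by
    intro f
    refine MeasurableSet.iInter fun j => MeasurableSet.iInter fun h => ?_
    subst h
    exact hE j
  have hAE : ∀ j, A (univ.erase j) = E j := by
    intro j
    ext ω
    simp only [A, Set.mem_iInter]
    exact ⟨fun h => h j rfl, fun h i hi => by rw [hinj i j hi]; exact h⟩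
  have hpeel := condExp_peel_prod hP (d := d) hA (univ.image fun j => univ.erase j) (by
      intro f hf
      obtain ⟨j, -, rfl⟩ := mem_image.1 hf
      exact hcard j) Set.univ MeasurableSet.univ
  have hI : (⋂ f ∈ (univ.image fun j : J => univ.erase j), A f) = ⋂ j, E j := by
    ext ω
    simp [hAE]
  rw [Set.univ_inter, hI] at hpeel
  have h1 : P[ind (Set.univ : Set (Arr J)) | sig {Z : Finset J | Z.card ≤ d}] = fun _ => 1 := by
    rw [ind, Set.indicator_univ]
    exact condExp_const (sig_le _) 1
  have hpr : 0 < P.real (⋂ j, E j) := by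
    have h2 := setIntegral_condExp_ind (P := P) (sig_le {Z : Finset J | Z.card ≤ d})
      (MeasurableSet.iInter hEm) (@MeasurableSet.univ _ (sig {Z : Finset J | Z.card ≤ d}))
    rw [Set.inter_univ, setIntegral_univ] at h2
    rw [← h2, integral_pos_iff_support_of_nonneg_ae (condExp_ind_nonneg _ _) integrable_condExp]
    refine hPpos.trans_le (measure_mono_ae ?_)
    have hk : ∀ᵐ ω ∂P, ω ∈ (⋂ j, F j) → ω ∈ Function.support
        (P[ind (⋂ j, E j) | sig {Z : Finset J | Z.card ≤ d}]) := by
      filter_upwards [hpeel, ae_all_iff.2 fun j => condExp_low hP _ d (hE j)] with ω e1 e2 hω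
      rw [Function.mem_support, e1, h1, mul_one]
      refine (prod_pos fun f hf => ?_).ne'
      obtain ⟨j, -, rfl⟩ := mem_image.1 hf
      rw [hAE, e2 j]
      exact Set.mem_iInter.1 hω j
    exact hk
  by_contra hcon
  have h0 : P (⋂ j, E j) = 0 := by simpa using hcon
  simp [measureReal_def, h0] at hpr

/-! ### Averages, box tests and finite measures -/

section avg
variable {α β : Type*} [Fintype α] [Fintype β]

lemma avg_add (f g : α → ℝ) : avg (fun x => f x + g x) = avg f + avg g := by
  simp [avg, sum_add_distrib, add_div]

lemma avg_sub (f g : α → ℝ) : avg (fun x => f x - g x) = avg f - avg g := by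
  simp [avg, sum_sub_distrib, sub_div]

lemma avg_const_mul (c : ℝ) (f : α → ℝ) : avg (fun x => c * f x) = c * avg f := by
  simp [avg, ← mul_sum, mul_div_assoc]

lemma avg_mul_const (c : ℝ) (f : α → ℝ) : avg (fun x => f x * c) = avg f * c := by
  simp_rw [mul_comm _ c, avg_const_mul]

lemma avg_const [Nonempty α] (c : ℝ) : avg (fun _ : α => c) = c := by
  simp [avg]

lemma avg_mono {f g : α → ℝ} (h : ∀ x, f x ≤ g x) : avg f ≤ avg g := by
  unfold avg; gcongr; exact h _

lemma avg_nonneg {f : α → ℝ} (h : ∀ x, 0 ≤ f x) : 0 ≤ avg f :=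
  div_nonneg (sum_nonneg fun x _ => h x) (by positivity)

lemma abs_avg_le (f : α → ℝ) : |avg f| ≤ avg (fun x => |f x|) := by
  unfold avg
  rw [abs_div, Nat.abs_cast]
  gcongr
  exact abs_sum_le_sum_abs _ _

lemma abs_avg_le_of_le [Nonempty α] {f : α → ℝ} {c : ℝ} (h : ∀ x, |f x| ≤ c) : |avg f| ≤ c :=
  (abs_avg_le f).trans ((avg_mono h).trans (avg_const c).le)

lemma avg_sum {κ : Type*} (s : Finset κ) (f : κ → α → ℝ) :
    avg (fun x => ∑ k ∈ s, f k x) = ∑ k ∈ s, avg (f k) := by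
  simp only [avg]
  rw [sum_comm, sum_div]

lemma avg_equiv (e : α ≃ β) (f : β → ℝ) : avg (fun x => f (e x)) = avg f := by
  simp only [avg]
  rw [Fintype.card_congr e, e.sum_comp]

lemma avg_prod (f : α × β → ℝ) : avg f = avg (fun a => avg (fun b => f (a, b))) := by
  simp only [avg]
  rw [Fintype.sum_prod_type, Fintype.card_prod, ← sum_div, div_div, Nat.cast_mul, mul_comm]

lemma avg_fst [Nonempty β] (f : α → ℝ) : avg (fun p : α × β => f p.1) = avg f := by
  rw [avg_prod]; simp_rw [avg_const]

/-- Resampling principle: if `get` reads a component of `x` and `set` overwrites it, then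
overwriting the component by a uniform value leaves averages unchanged. -/
lemma avg_resample [Nonempty β] (get : α → β) (set : α → β → α)
    (h1 : ∀ x y, get (set x y) = y) (h2 : ∀ x y y', set (set x y) y' = set x y')
    (h3 : ∀ x, set x (get x) = x) (f : α → ℝ) :
    avg (fun x => avg fun y => f (set x y)) = avg f := by
  let e : α × β ≃ α × β :=
    { toFun := fun p => (set p.1 p.2, get p.1)
      invFun := fun p => (set p.1 p.2, get p.1)
      left_inv := fun p => by simp [h1, h2, h3]
      right_inv := fun p => by simp [h1, h2, h3] }
  rw [← avg_prod (fun p : α × β => f (set p.1 p.2))]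
  exact (avg_equiv e (fun p : α × β => f p.1)).trans (avg_fst f)

lemma avg_update {Z : Type*} [Fintype Z] [Nonempty Z] (j : J) (f : (J → Z) → ℝ) :
    avg (fun x => avg fun z => f (Function.update x j z)) = avg f :=
  avg_resample (fun x => x j) (fun x z => Function.update x j z) (by simp) (by simp) (by simp) f

/-- Cauchy–Schwarz for averages. -/
lemma avg_mul_sq_le (f g : α → ℝ) :
    (avg fun x => f x * g x) ^ 2 ≤ (avg fun x => f x ^ 2) * avg fun x => g x ^ 2 := by
  simp only [avg]
  rw [div_pow, div_mul_div_comm, ← sq]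
  gcongr
  exact sum_mul_sq_le_sq_mul_sq _ _ _

/-- Cauchy–Schwarz with a nonnegative weight. -/
lemma avg_wmul_sq_le (w f g : α → ℝ) (hw : ∀ x, 0 ≤ w x) :
    (avg fun x => w x * (f x * g x)) ^ 2 ≤
      (avg fun x => w x * f x ^ 2) * avg fun x => w x * g x ^ 2 := by
  have h := avg_mul_sq_le (fun x => √(w x) * f x) (fun x => √(w x) * g x)
  have e : ∀ x, √(w x) * √(w x) = w x := fun x => Real.mul_self_sqrt (hw x)
  convert h using 3
  · funext x; linear_combination (- f x * g x) * e x
  · funext x; linear_combination (- f x ^ 2) * e x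
  · funext x; linear_combination (- g x ^ 2) * e x

end avg

/-- `f` does not depend on coordinate `j`. -/
def Indep {Z : Type*} (j : J) (f : (J → Z) → ℝ) : Prop :=
  ∀ x z, f (Function.update x j z) = f x

/-- Box test functions for the face opposite to `j`: products, over `i ≠ j`, of functions
bounded by `1` that depend on neither `x i` nor `x j`. -/
def IsTest {Z : Type*} (j : J) (φ : (J → Z) → ℝ) : Prop :=
  ∃ B : J → (J → Z) → ℝ, (∀ i x, |B i x| ≤ 1) ∧ (∀ i, Indep i (B i)) ∧ (∀ i, Indep j (B i)) ∧
    ∀ x, φ x = ∏ i ∈ univ.erase j, B i x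

section weighted
variable {X Ω : Type*} [Fintype X] [MeasurableSpace Ω]

/-- The image under `F` of the measure on the finite set `X` with density `w` relative to the
uniform probability measure. -/
noncomputable def wMeas (w : X → ℝ) (F : X → Ω) : Measure Ω :=
  ∑ x, ENNReal.ofReal (w x / Fintype.card X) • Measure.dirac (F x)

lemma wMeas_apply {w : X → ℝ} (hw : ∀ x, 0 ≤ w x) (F : X → Ω) {C : Set Ω} (hC : MeasurableSet C) :
    wMeas w F C = ENNReal.ofReal (avg fun x => w x * ind C (F x)) := by
  have h0 : ∀ x, 0 ≤ ind C (F x) := fun x => Set.indicator_nonneg (by simp) _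
  unfold wMeas avg
  rw [sum_div, ENNReal.ofReal_sum_of_nonneg
    (fun x _ => div_nonneg (mul_nonneg (hw x) (h0 x)) (by positivity)), Measure.finsetSum_apply]
  refine sum_congr rfl fun x _ => ?_
  rw [Measure.smul_apply, Measure.dirac_apply' _ hC, smul_eq_mul]
  by_cases h : F x ∈ C
  · simp [ind, h]
  · simp [ind, h]

lemma wMeas_real {w : X → ℝ} (hw : ∀ x, 0 ≤ w x) (F : X → Ω) {C : Set Ω} (hC : MeasurableSet C) :
    (wMeas w F).real C = avg fun x => w x * ind C (F x) := by
  rw [measureReal_def, wMeas_apply hw F hC, ENNReal.toReal_ofReal]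
  exact avg_nonneg fun x => mul_nonneg (hw x) (Set.indicator_nonneg (by simp) _)

lemma isProb_wMeas {w : X → ℝ} (hw : ∀ x, 0 ≤ w x) (h1 : avg w = 1) (F : X → Ω) :
    IsProbabilityMeasure (wMeas w F) := by
  refine ⟨?_⟩
  rw [wMeas_apply hw F MeasurableSet.univ]
  simp [ind, h1]
end weighted

/-- Domination of measures on a cylinder σ-algebra can be checked on events depending on finitely
many coordinates. -/
lemma cyl_le {ι : Type*} (Δ : Set ι) (μ ν : Measure (ι → Bool)) [IsFiniteMeasure μ]
    [IsFiniteMeasure ν] (h : ∀ S : Finset ι, (S : Set ι) ⊆ Δ → ∀ C,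
      MeasurableSet[cylinderEvents (S : Set ι)] C → μ.real C ≤ ν.real C) {C : Set (ι → Bool)}
    (hC : MeasurableSet[cylinderEvents Δ] C) : μ.real C ≤ ν.real C := by
  refine le_of_forall_pos_le_add fun ε hε => ?_
  obtain ⟨S, hS, C', hC', hlt⟩ := approx_cyl Δ (μ + ν) hC (half_pos hε)
  have h1 : ∀ (ρ : Measure (ι → Bool)), ρ ≤ μ + ν → ρ.real (symmDiff C C') ≤ ε / 2 := by
    intro ρ hρ
    exact ENNReal.toReal_le_of_le_ofReal (half_pos hε).le ((hρ _).trans hlt.le)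
  have hμ := h1 μ (Measure.le_add_right le_rfl)
  have hν := h1 ν (Measure.le_add_left le_rfl)
  have a1 : μ.real C ≤ μ.real C' + μ.real (symmDiff C C') := by
    refine (measureReal_mono ?_).trans (measureReal_union_le _ _)
    intro ω hω
    by_cases h' : ω ∈ C'
    · exact Or.inl h'
    · exact Or.inr (Or.inl ⟨hω, h'⟩)
  have a2 : ν.real C' ≤ ν.real C + ν.real (symmDiff C C') := by
    refine (measureReal_mono ?_).trans (measureReal_union_le _ _)
    intro ω hω
    by_cases h' : ω ∈ C
    · exact Or.inl h'
    · exact Or.inr (Or.inr ⟨hω, h'⟩)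
  linarith [h S hS C' hC']

lemma isClopen_cyl {ι : Type*} (S : Finset ι) {C : Set (ι → Bool)}
    (hC : MeasurableSet[cylinderEvents (S : Set ι)] C) : IsClopen C := by
  let r : (ι → Bool) → (S → Bool) := fun ω i => ω i
  have hr : Continuous r := by fun_prop
  have : C = r ⁻¹' (r '' C) := by
    refine Set.Subset.antisymm (Set.subset_preimage_image _ _) ?_
    rintro ω ⟨ω', hω', he⟩
    exact (cyl_mem_iff hC fun i hi => congrFun he ⟨i, hi⟩).1 hω'
  rw [this]
  exact (isClopen_discrete _).preimage hr

/-! ### Sampled arrays -/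

section sampling
variable {Z : Type} {n : ℕ}

/-- The point of `J → Z` with coordinates `x i (m i)`; indices are read modulo `n + 1`. -/
def pt (x : J → Fin (n + 1) → Z) (m : J → ℕ) : J → Z := fun i => x i (Fin.ofNat (n + 1) (m i))

open Classical in
/-- The array recording which of the points `pt x m` lie in which of the sets `E j`. -/
noncomputable def bits (E : J → Set (J → Z)) (x : J → Fin (n + 1) → Z) : Arr J :=
  fun ι => decide (pt x ι.2 ∈ E ι.1)

/-- Overwriting the zeroth row of a sample. -/
def setRow (x : J → Fin (n + 1) → Z) (y : J → Z) : J → Fin (n + 1) → Z :=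
  fun i => Function.update (x i) 0 (y i)

lemma avg_setRow [Fintype Z] [Nonempty Z] (f : (J → Fin (n + 1) → Z) → ℝ) :
    avg (fun x => avg fun y => f (setRow x y)) = avg f :=
  avg_resample (fun x i => x i 0) setRow (by intro x y; funext i; simp [setRow])
    (by intro x y y'; funext i; simp [setRow]) (by intro x; funext i; simp [setRow]) f

lemma avg_row [Fintype Z] [Nonempty Z] (f : (J → Z) → ℝ) :
    avg (fun x : J → Fin (n + 1) → Z => f (fun i => x i 0)) = avg f := by
  rw [← avg_setRow]
  simp [setRow, avg_const]

/-- An injection of `ℕ` agrees on finitely many small arguments with a permutation of the rows. -/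
lemma exists_perm (T : ℕ → ℕ) (hT : Function.Injective T) (s : Finset ℕ)
    (hs : ∀ m ∈ s, m ≤ n ∧ T m ≤ n) : ∃ σ : Equiv.Perm (Fin (n + 1)),
      ∀ m ∈ s, σ (Fin.ofNat (n + 1) m) = Fin.ofNat (n + 1) (T m) := by
  classical
  obtain ⟨g, hg⟩ := Finset.exists_equiv_extend_of_card_eq (α := Fin (n + 1))
    (t := (univ : Finset (Fin (n + 1)))) (by simp)
    (s := univ.filter fun t : Fin (n + 1) => t.val ∈ s)
    (f := fun t => Fin.ofNat (n + 1) (T t.val)) (subset_univ _) (by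
      intro a ha b hb hab
      simp only [coe_filter, mem_univ, true_and, Set.mem_ofPred_eq] at ha hb
      have := congrArg Fin.val hab
      simp only [Fin.val_ofNat] at this
      rw [Nat.mod_eq_of_lt (by have := (hs _ ha).2; omega),
        Nat.mod_eq_of_lt (by have := (hs _ hb).2; omega)] at this
      exact Fin.ext (hT this))
  refine ⟨g.trans (Equiv.subtypeUnivEquiv (by simp)), fun m hm => ?_⟩
  have hval : (Fin.ofNat (n + 1) m).val = m := by
    simp only [Fin.val_ofNat]; exact Nat.mod_eq_of_lt (by have := (hs _ hm).1; omega)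
  have := hg (Fin.ofNat (n + 1) m) (by simp only [mem_filter, mem_univ, true_and, hval, hm])
  rw [hval] at this
  exact this

/-- The law of the sampled array is invariant under relabellings that stay within the sample. -/
lemma bits_exch [Fintype Z] (E : J → Set (J → Z)) {T : J → ℕ → ℕ}
    (hT : ∀ i, Function.Injective (T i)) (S : Finset (Idx J))
    (hS : ∀ ι ∈ S, ∀ i, ι.2 i ≤ n ∧ T i (ι.2 i) ≤ n) {C : Set (Arr J)}
    (hC : MeasurableSet[cylinderEvents (S : Set (Idx J))] C) :
    avg (fun x : J → Fin (n + 1) → Z => ind C (shiftArr T (bits E x))) =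
      avg (fun x : J → Fin (n + 1) → Z => ind C (bits E x)) := by
  classical
  have := fun i => exists_perm (n := n) (T i) (hT i) (S.image fun ι => ι.2 i) (by
    intro m hm
    obtain ⟨ι, hι, rfl⟩ := mem_image.1 hm
    exact hS ι hι i)
  choose σ hσ using this
  let e : (J → Fin (n + 1) → Z) ≃ (J → Fin (n + 1) → Z) :=
    Equiv.piCongrRight fun i => Equiv.arrowCongr (σ i).symm (Equiv.refl Z)
  rw [← avg_equiv e (fun x => ind C (bits E x))]
  congr 1
  funext x
  have hmem : shiftArr T (bits E x) ∈ C ↔ bits E (e x) ∈ C := by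
    refine cyl_mem_iff hC fun ι hι => ?_
    have : pt (e x) ι.2 = pt x fun i => T i (ι.2 i) := by
      funext i
      have h := hσ i (ι.2 i) (mem_image_of_mem _ hι)
      change x i (σ i (Fin.ofNat (n + 1) (ι.2 i))) = x i (Fin.ofNat (n + 1) (T i (ι.2 i)))
      rw [h]
    simp [shiftArr, bits, this]
  by_cases h : shiftArr T (bits E x) ∈ C
  · simp [ind, h, hmem.1 h]
  · simp [ind, h, mt hmem.2 h]

lemma pt_setRow_update (x : J → Fin (n + 1) → Z) (y : J → Z) (i : J) (z : Z) {m : J → ℕ}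
    (hm : m i ≤ n) (hi : i ∉ zeroSet m) :
    pt (setRow x (Function.update y i z)) m = pt (setRow x y) m := by
  funext i'
  by_cases h : i' = i
  · subst h
    have h0 : m i' ≠ 0 := by simpa [zeroSet] using hi
    have : Fin.ofNat (n + 1) (m i') ≠ 0 := by
      intro h
      have := congrArg Fin.val h
      simp only [Fin.val_ofNat, Fin.val_zero] at this
      rw [Nat.mod_eq_of_lt (by omega)] at this
      exact h0 this
    simp only [pt, setRow, Function.update_of_ne this]
  · simp [pt, setRow, Function.update_of_ne h]

/-- With all but the zeroth row fixed, an atom of the array coordinates whose zero set is a proper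
subset of `univ.erase j` is a box test function of the zeroth row. -/
lemma isTest_atom (E : J → Set (J → Z)) (j : J) (S : Finset (Idx J))
    (hS : ∀ ι ∈ S, zeroSet ι.2 ⊂ univ.erase j) (hSn : ∀ ι ∈ S, ∀ i, ι.2 i ≤ n) (b : Arr J)
    (x : J → Fin (n + 1) → Z) :
    IsTest j (fun y => ∏ ι ∈ S, if bits E (setRow x y) ι = b ι then (1 : ℝ) else 0) := by
  classical
  have hex : ∀ ι : Idx J, ∃ i, ι ∈ S → i ∈ univ.erase j ∧ i ∉ zeroSet ι.2 := by
    intro ι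
    by_cases h : ι ∈ S
    · obtain ⟨i, hi, hi'⟩ := exists_of_ssubset (hS ι h)
      exact ⟨i, fun _ => ⟨hi, hi'⟩⟩
    · exact ⟨j, fun h' => absurd h' h⟩
  choose c hc using hex
  have hind : ∀ (ι : Idx J) (i : J), ι ∈ S → i ∉ zeroSet ι.2 → ∀ y z,
      bits E (setRow x (Function.update y i z)) ι = bits E (setRow x y) ι := by
    intro ι i hι hi y z
    simp [bits, pt_setRow_update x y i z (hSn ι hι i) hi]
  refine ⟨fun i y => ∏ ι ∈ S.filter (fun ι => c ι = i),
    if bits E (setRow x y) ι = b ι then (1 : ℝ) else 0, ?_, ?_, ?_, ?_⟩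
  · intro i y
    rw [abs_prod]
    refine prod_le_one (fun _ _ => abs_nonneg _) fun ι _ => ?_
    split_ifs <;> simp
  · intro i y z
    refine prod_congr rfl fun ι hι => ?_
    obtain ⟨h1, h2⟩ := mem_filter.1 hι
    rw [hind ι i h1 (h2 ▸ (hc ι h1).2)]
  · intro i y z
    refine prod_congr rfl fun ι hι => ?_
    obtain ⟨h1, h2⟩ := mem_filter.1 hι
    rw [hind ι j h1 (fun h => by simpa using (hS ι h1).1 h)]
  · intro y
    exact (prod_fiberwise_of_maps_to (fun ι hι => (hc ι hι).1) _).symm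

/-- A function `h` of the zeroth row that is small against box tests is small against every array
event depending on finitely many bits of a proper face: the event is split into atoms. -/
lemma key_fin [Fintype Z] [Nonempty Z] (E : J → Set (J → Z)) (j : J) (S : Finset (Idx J))
    (hS : ∀ ι ∈ S, zeroSet ι.2 ⊂ univ.erase j) (hSn : ∀ ι ∈ S, ∀ i, ι.2 i ≤ n)
    {C : Set (Arr J)} (hC : MeasurableSet[cylinderEvents (S : Set (Idx J))] C)
    {h : (J → Z) → ℝ} {ε : ℝ} (hh : ∀ φ, IsTest j φ → |avg fun y => h y * φ y| ≤ ε) :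
    |avg fun x : J → Fin (n + 1) → Z => h (fun i => x i 0) * ind C (bits E x)| ≤
      2 ^ S.card * ε := by
  classical
  let ext' : (S → Bool) → Arr J := fun b ι => if h : ι ∈ S then b ⟨ι, h⟩ else false
  have hdec : ∀ ω : Arr J, ind C ω =
      ∑ b : S → Bool, ind C (ext' b) * ∏ ι ∈ S, if ω ι = ext' b ι then (1 : ℝ) else 0 := by
    intro ω
    rw [Fintype.sum_eq_single (fun ι : S => ω ι)]
    · have h1 : ∀ ι ∈ S, ω ι = ext' (fun ι : S => ω ι) ι := fun ι hι => by simp [ext', hι]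
      rw [prod_eq_one fun ι hι => by rw [if_pos (h1 ι hι)], mul_one]
      have := cyl_mem_iff hC (fun ι hι => h1 ι hι)
      by_cases hω : ω ∈ C
      · simp [ind, hω, this.1 hω]
      · simp [ind, hω, mt this.2 hω]
    · intro b hb
      obtain ⟨ι, hι⟩ := Function.ne_iff.1 hb
      rw [prod_eq_zero ι.2, mul_zero]
      rw [if_neg]
      simp only [ext', ι.2, dif_pos]
      exact fun h => hι h.symm
  have hone : ∀ b : Arr J, |avg fun x : J → Fin (n + 1) → Z => h (fun i => x i 0) *
      ∏ ι ∈ S, if bits E x ι = b ι then (1 : ℝ) else 0| ≤ ε := by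
    intro b
    rw [← avg_setRow]
    refine abs_avg_le_of_le fun x => ?_
    have := hh _ (isTest_atom E j S hS hSn b x)
    simpa [setRow] using this
  have hrw : (avg fun x : J → Fin (n + 1) → Z => h (fun i => x i 0) * ind C (bits E x)) =
      ∑ b : S → Bool, ind C (ext' b) * avg fun x : J → Fin (n + 1) → Z => h (fun i => x i 0) *
        ∏ ι ∈ S, if bits E x ι = ext' b ι then (1 : ℝ) else 0 := by
    simp_rw [← avg_const_mul]
    rw [← avg_sum]
    congr 1
    funext x
    rw [hdec, mul_sum]
    exact sum_congr rfl fun b _ => by ring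
  rw [hrw]
  refine (abs_sum_le_sum_abs _ _).trans ?_
  calc _ ≤ ∑ _b : S → Bool, ε := by
        refine sum_le_sum fun b _ => ?_
        rw [abs_mul]
        have h1 : |ind C (ext' b)| ≤ 1 := by
          by_cases hb : ext' b ∈ C <;> simp [ind, hb]
        have h2 := hone (ext' b)
        have h3 := abs_nonneg (ind C (ext' b))
        nlinarith [abs_nonneg (avg fun x : J → Fin (n + 1) → Z => h (fun i => x i 0) *
          ∏ ι ∈ S, if bits E x ι = ext' b ι then (1 : ℝ) else 0)]
    _ = _ := by simp [card_univ]

end sampling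

/-- The array event attached to the set `E j`, placed at an index with zero set `univ.erase j`. -/
def topEv (j : J) : Set (Arr J) := {ω | ω (j, Pi.single j 1) = true}

lemma zeroSet_single (j : J) : zeroSet (Pi.single j 1 : J → ℕ) = univ.erase j := by
  ext i
  by_cases h : i = j
  · subst h; simp [zeroSet]
  · simp [zeroSet, h]

lemma measurableSet_topEv (j : J) {Δ : Set (Idx J)} (h : (j, Pi.single j 1) ∈ Δ) :
    MeasurableSet[cylinderEvents Δ] (topEv j) :=
  measurable_cylinderEvent_apply (X := fun _ : Idx J => Bool) (i := ((j, Pi.single j 1) : Idx J)) h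
    (measurableSet_singleton true)

/-- The two array laws attached to the data. `P` is the law of the array of the sets
`{κ < g j}` under uniform sampling; for `Q` the zeroth row is drawn with density `lam`. The closeness
of `δ * lam` to `g j` becomes an approximate domination of `Q` by `P` on `topEv j`. -/
lemma finite_stage {Z : Type} [Fintype Z] [Nonempty Z] (δ κ ε : ℝ) (hκ : 0 < κ) (n : ℕ)
    (lam : (J → Z) → ℝ) (hl0 : ∀ x, 0 ≤ lam x) (hl1 : avg lam = 1) (g : J → (J → Z) → ℝ)
    (hg : ∀ j x, 0 ≤ g j x ∧ g j x ≤ 1) (hgi : ∀ j, Indep j (g j))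
    (h : ∀ j φ, IsTest j φ → |avg fun x => (δ * lam x - g j x) * φ x| ≤ ε) :
    ∃ P Q : ProbabilityMeasure (Arr J),
      (∀ (T : J → ℕ → ℕ) (S : Finset (Idx J)) (C : Set (Arr J)), (∀ i, Function.Injective (T i)) →
        (∀ ι ∈ S, ∀ i, ι.2 i ≤ n ∧ T i (ι.2 i) ≤ n) →
        MeasurableSet[cylinderEvents (S : Set (Idx J))] C →
        (P : Measure (Arr J)).real (shiftArr T ⁻¹' C) = (P : Measure (Arr J)).real C) ∧
      (∀ (j : J) (S : Finset (Idx J)) (C : Set (Arr J)), (∀ ι ∈ S, zeroSet ι.2 ⊂ univ.erase j) →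
        (∀ ι ∈ S, ∀ i, ι.2 i ≤ n) → 1 ≤ n →
        MeasurableSet[cylinderEvents (S : Set (Idx J))] C →
        δ * (Q : Measure (Arr J)).real C ≤ (P : Measure (Arr J)).real (C ∩ topEv j) +
          κ * (P : Measure (Arr J)).real C + 2 ^ S.card * ε) ∧
      (1 ≤ n → κ ^ Fintype.card J * (P : Measure (Arr J)).real (⋂ j, topEv j) ≤
        avg fun x => ∏ j, g j x) := by
  classical
  let E : J → Set (J → Z) := fun j => {x | κ < g j x}
  let F : (J → Fin (n + 1) → Z) → Arr J := bits E
  have h1 : ∀ x : J → Fin (n + 1) → Z, (0 : ℝ) ≤ (fun _ => 1) x := fun _ => zero_le_one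
  have h2 : ∀ x : J → Fin (n + 1) → Z, 0 ≤ (fun x => lam fun i => x i 0) x := fun x => hl0 _
  have p1 : IsProbabilityMeasure (wMeas (fun _ => 1) F) := isProb_wMeas h1 (avg_const 1) F
  have p2 : IsProbabilityMeasure (wMeas (fun x => lam fun i => x i 0) F) :=
    isProb_wMeas h2 ((avg_row lam).trans hl1) F
  have htop : 1 ≤ n → ∀ (x : J → Fin (n + 1) → Z) j, F x ∈ topEv j ↔ κ < g j fun i => x i 0 := by
    intro hn x j
    have : pt x (Pi.single j 1) = Function.update (fun i => x i 0) j (x j (Fin.ofNat (n + 1) 1)) := by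
      funext i
      by_cases hi : i = j
      · subst hi; simp [pt]
      · simp [pt, hi]
    simp only [topEv, F, bits, E, Set.mem_ofPred_eq, decide_eq_true_eq, this]
    rw [hgi j]
  refine ⟨⟨_, p1⟩, ⟨_, p2⟩, ?_, ?_, ?_⟩
  · intro T S C hT hS hC
    have hCm : MeasurableSet C := cylinderEvents_le_pi _ hC
    simp only [ProbabilityMeasure.coe_mk]
    rw [wMeas_real h1 F hCm, wMeas_real h1 F (measurable_shiftArr T hCm)]
    simp only [one_mul]
    exact bits_exch E hT S hS hC
  · intro j S C hS hSn hn hC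
    have hCm : MeasurableSet C := cylinderEvents_le_pi _ hC
    have hTm : MeasurableSet (topEv j) :=
      cylinderEvents_le_pi _ (measurableSet_topEv j (Set.mem_univ _))
    simp only [ProbabilityMeasure.coe_mk]
    rw [wMeas_real h1 F hCm, wMeas_real h2 F hCm, wMeas_real h1 F (hCm.inter hTm)]
    have hk := key_fin E j S hS hSn hC (h j)
    have hk' := (abs_le.1 hk).2
    have hle : avg (fun x : J → Fin (n + 1) → Z => g j (fun i => x i 0) * ind C (F x)) ≤
        avg (fun x => 1 * ind (C ∩ topEv j) (F x)) + κ * avg (fun x => 1 * ind C (F x)) := by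
      rw [← avg_const_mul, ← avg_add]
      refine avg_mono fun x => ?_
      by_cases hC' : F x ∈ C
      · by_cases hT' : F x ∈ topEv j
        · have := (hg j fun i => x i 0).2
          simp [ind, hC', hT']; linarith
        · have := mt (htop hn x j).2 hT'
          simp [ind, hC', hT']; linarith
      · simp [ind, hC']
    have heq : avg (fun x : J → Fin (n + 1) → Z => (δ * lam (fun i => x i 0) - g j fun i => x i 0) *
        ind C (bits E x)) = δ * avg (fun x : J → Fin (n + 1) → Z => lam (fun i => x i 0) * ind C (F x)) -
        avg (fun x : J → Fin (n + 1) → Z => g j (fun i => x i 0) * ind C (F x)) := by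
      rw [← avg_const_mul, ← avg_sub]
      congr 1; funext x; simp only [F]; ring
    rw [heq] at hk'
    linarith
  · intro hn
    have hTm : MeasurableSet (⋂ j : J, topEv j) := MeasurableSet.iInter fun j =>
      cylinderEvents_le_pi _ (measurableSet_topEv j (Set.mem_univ _))
    simp only [ProbabilityMeasure.coe_mk]
    rw [wMeas_real h1 F hTm, ← avg_row (n := n) (fun x => ∏ j, g j x), ← avg_const_mul]
    refine avg_mono fun x => ?_
    by_cases hx : F x ∈ ⋂ j, topEv j
    · simp only [ind, Set.indicator_of_mem hx, mul_one]
      rw [← card_univ, ← prod_const]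
      refine prod_le_prod (fun _ _ => hκ.le) fun j _ => ?_
      exact ((htop hn x j).1 (Set.mem_iInter.1 hx j)).le
    · simp only [ind, Set.indicator_of_notMem hx, mul_zero]
      exact prod_nonneg fun j _ => (hg j _).1

/-! ### The removal lemma by compactness -/

open Filter Topology in
lemma tendsto_cyl {l : Filter ℕ} {Ps : ℕ → ProbabilityMeasure (Arr J)}
    {P : ProbabilityMeasure (Arr J)} (h : Tendsto Ps l (𝓝 P)) (S : Finset (Idx J))
    {C : Set (Arr J)} (hC : MeasurableSet[cylinderEvents (S : Set (Idx J))] C) :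
    Tendsto (fun n => (Ps n : Measure (Arr J)).real C) l (𝓝 ((P : Measure (Arr J)).real C)) := by
  have hcl := isClopen_cyl S hC
  have := ProbabilityMeasure.tendsto_measure_of_null_frontier_of_tendsto' h
    (E := C) (by rw [hcl.frontier_eq]; simp)
  exact (ENNReal.tendsto_toReal (measure_ne_top _ _)).comp this

open Filter Topology in
/-- Measure-theoretic removal lemma. If a probability density `lam` on `J → Z`, rescaled by `δ`,
is close on each face to a function `g j` with values in `[0, 1]`, as far as box tests can see,
then the average of `∏ g j` is bounded below. A sequence of counterexamples would have array laws
converging, along an ultrafilter, to measures violating `limit_thm`. -/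
theorem measure_removal (hJ : 2 ≤ Fintype.card J) (δ : ℝ) (hδ : 0 < δ) :
    ∃ c : ℝ, 0 < c ∧ ∃ ε : ℝ, 0 < ε ∧ ∀ (Z : Type) [Fintype Z] [Nonempty Z],
      ∀ lam : (J → Z) → ℝ, (∀ x, 0 ≤ lam x) → avg lam = 1 → ∀ g : J → (J → Z) → ℝ,
      (∀ j x, 0 ≤ g j x ∧ g j x ≤ 1) → (∀ j, Indep j (g j)) →
      (∀ j φ, IsTest j φ → |avg fun x => (δ * lam x - g j x) * φ x| ≤ ε) →
      c ≤ avg fun x => ∏ j, g j x := by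
  by_contra hcon
  set k := Fintype.card J with hk
  have hkpos : (0 : ℝ) < k := by
    have : 0 < k := by omega
    exact_mod_cast this
  -- Level sets are cut at `κ`, small enough that the loss `k * κ / δ = 1 / 2` is below `1`.
  set κ : ℝ := δ / (2 * k) with hκ
  have hκpos : 0 < κ := by positivity
  have H : ∀ n : ℕ, ∃ P Q : ProbabilityMeasure (Arr J),
      (∀ (T : J → ℕ → ℕ) (S : Finset (Idx J)) (C : Set (Arr J)), (∀ i, Function.Injective (T i)) →
        (∀ ι ∈ S, ∀ i, ι.2 i ≤ n ∧ T i (ι.2 i) ≤ n) →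
        MeasurableSet[cylinderEvents (S : Set (Idx J))] C →
        (P : Measure (Arr J)).real (shiftArr T ⁻¹' C) = (P : Measure (Arr J)).real C) ∧
      (∀ (j : J) (S : Finset (Idx J)) (C : Set (Arr J)), (∀ ι ∈ S, zeroSet ι.2 ⊂ univ.erase j) →
        (∀ ι ∈ S, ∀ i, ι.2 i ≤ n) → 1 ≤ n →
        MeasurableSet[cylinderEvents (S : Set (Idx J))] C →
        δ * (Q : Measure (Arr J)).real C ≤ (P : Measure (Arr J)).real (C ∩ topEv j) +
          κ * (P : Measure (Arr J)).real C + 2 ^ S.card * (1 / ((n : ℝ) + 1))) ∧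
      (1 ≤ n → κ ^ k * (P : Measure (Arr J)).real (⋂ j, topEv j) ≤ 1 / ((n : ℝ) + 1)) := by
    intro n
    have hn : (0 : ℝ) < 1 / ((n : ℝ) + 1) := Nat.one_div_pos_of_nat
    by_contra hno
    refine hcon ⟨1 / ((n : ℝ) + 1), hn, 1 / ((n : ℝ) + 1), hn, ?_⟩
    intro Z _ _ lam hl0 hl1 g hg hgi h
    by_contra hlt
    obtain ⟨P, Q, h1, h2, h3⟩ := finite_stage δ κ (1 / ((n : ℝ) + 1)) hκpos n lam hl0 hl1 g hg hgi h
    exact hno ⟨P, Q, h1, h2, fun h => (h3 h).trans (not_le.1 hlt).le⟩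
  choose Ps Qs hexch hdom hsmall using H
  obtain ⟨P, -, hP⟩ := isCompact_univ.ultrafilter_le_nhds ((hyperfilter ℕ).map Ps) (by simp)
  obtain ⟨Q, -, hQ⟩ := isCompact_univ.ultrafilter_le_nhds ((hyperfilter ℕ).map Qs) (by simp)
  have hP' : Tendsto Ps (hyperfilter ℕ) (𝓝 P) := hP
  have hQ' : Tendsto Qs (hyperfilter ℕ) (𝓝 Q) := hQ
  have hev : ∀ M : ℕ, ∀ᶠ n in (hyperfilter ℕ : Filter ℕ), M ≤ n := fun M =>
    Nat.hyperfilter_le_atTop (eventually_ge_atTop M)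
  have hlim0 : Tendsto (fun n : ℕ => 1 / ((n : ℝ) + 1)) (hyperfilter ℕ) (𝓝 0) :=
    tendsto_one_div_add_atTop_nhds_zero_nat.mono_left Nat.hyperfilter_le_atTop
  have hbound : ∀ S : Finset (Idx J), ∀ T : J → ℕ → ℕ, ∃ M : ℕ, ∀ ι ∈ S, ∀ i, T i (ι.2 i) ≤ M := by
    intro S T
    refine ⟨S.sup fun ι => univ.sup fun i => T i (ι.2 i), fun ι hι i => ?_⟩
    exact (Finset.le_sup (f := fun i => T i (ι.2 i)) (mem_univ i)).trans
      (Finset.le_sup (f := fun ι : Idx J => univ.sup fun i => T i (ι.2 i)) hι)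
  have hPexch : Exchangeable (P : Measure (Arr J)) := by
    intro T hT
    have heq : ∀ (S : Finset (Idx J)) (C : Set (Arr J)),
        MeasurableSet[cylinderEvents (S : Set (Idx J))] C →
        (P : Measure (Arr J)).real (shiftArr T ⁻¹' C) = (P : Measure (Arr J)).real C := by
      intro S C hC
      obtain ⟨M₁, hM₁⟩ := hbound S T
      obtain ⟨M₂, hM₂⟩ := hbound S fun _ m => m
      have t1 := tendsto_cyl hP' S hC
      have t2 := tendsto_cyl hP' (S.image fun ι => (ι.1, fun i => T i (ι.2 i)))
        (C := shiftArr T ⁻¹' C) (by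
          have : @Measurable _ _ (cylinderEvents
              ((S.image fun ι => ((ι.1, fun i => T i (ι.2 i)) : Idx J) : Finset (Idx J)) :
                Set (Idx J))) (cylinderEvents (S : Set (Idx J))) (shiftArr T) := by
            rw [measurable_cylinderEvents_iff]
            intro ι hι
            exact measurable_cylinderEvent_apply (i := ((ι.1, fun i => T i (ι.2 i)) : Idx J))
              (mem_coe.2 (mem_image_of_mem (fun ι => ((ι.1, fun i => T i (ι.2 i)) : Idx J)) hι))
          exact this hC)
      refine tendsto_nhds_unique t2 (t1.congr' ?_)
      filter_upwards [hev M₁, hev M₂] with n h1 h2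
      exact (hexch n T S C hT (fun ι hι i => ⟨(hM₂ ι hι i).trans h2, (hM₁ ι hι i).trans h1⟩) hC).symm
    have hm := measurable_shiftArr T (J := J)
    have : IsProbabilityMeasure ((P : Measure (Arr J)).map (shiftArr T)) :=
      Measure.isProbabilityMeasure_map hm.aemeasurable
    ext A hA
    have hAu : MeasurableSet[cylinderEvents Set.univ] A := by
      rw [cylinderEvents_univ]; exact hA
    have hmap : ∀ C, MeasurableSet C → ((P : Measure (Arr J)).map (shiftArr T)).real C =
        (P : Measure (Arr J)).real (shiftArr T ⁻¹' C) := fun C hC => by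
      rw [measureReal_def, Measure.map_apply hm hC, measureReal_def]
    have l1 := cyl_le Set.univ ((P : Measure (Arr J)).map (shiftArr T)) (P : Measure (Arr J))
      (fun S _ C hC => by
        rw [hmap C (cylinderEvents_le_pi _ hC)]; exact (heq S C hC).le) hAu
    have l2 := cyl_le Set.univ (P : Measure (Arr J)) ((P : Measure (Arr J)).map (shiftArr T))
      (fun S _ C hC => by
        rw [hmap C (cylinderEvents_le_pi _ hC)]; exact (heq S C hC).ge) hAu
    have l3 := le_antisymm l1 l2
    rw [measureReal_def, measureReal_def] at l3
    exact (ENNReal.toReal_eq_toReal_iff' (measure_ne_top _ _) (measure_ne_top _ _)).1 l3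
  have hdomlim : ∀ j, ∀ C, MeasurableSet[sig {Z | Z ⊂ univ.erase j}] C →
      δ * (Q : Measure (Arr J)).real C ≤ (P : Measure (Arr J)).real (C ∩ topEv j) +
        κ * (P : Measure (Arr J)).real C := by
    intro j C hC
    have hTm : MeasurableSet (topEv j) :=
      cylinderEvents_le_pi _ (measurableSet_topEv j (Set.mem_univ _))
    have hr1 : ∀ C, (ENNReal.ofReal δ • (Q : Measure (Arr J))).real C =
        δ * (Q : Measure (Arr J)).real C := fun C => by
      rw [measureReal_ennreal_smul_apply, ENNReal.toReal_ofReal hδ.le]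
    have hr2 : ∀ C, MeasurableSet C → ((P : Measure (Arr J)).restrict (topEv j) +
        ENNReal.ofReal κ • (P : Measure (Arr J))).real C =
        (P : Measure (Arr J)).real (C ∩ topEv j) + κ * (P : Measure (Arr J)).real C := fun C hC => by
      have : IsFiniteMeasure (ENNReal.ofReal κ • (P : Measure (Arr J))) :=
        Measure.smul_finite _ ENNReal.ofReal_ne_top
      rw [measureReal_add_apply, measureReal_ennreal_smul_apply, ENNReal.toReal_ofReal hκpos.le,
        measureReal_restrict_apply hC]
    have : IsFiniteMeasure (ENNReal.ofReal κ • (P : Measure (Arr J))) :=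
        Measure.smul_finite _ ENNReal.ofReal_ne_top
    have : IsFiniteMeasure (ENNReal.ofReal δ • (Q : Measure (Arr J))) :=
        Measure.smul_finite _ ENNReal.ofReal_ne_top
    have := cyl_le {ι : Idx J | zeroSet ι.2 ∈ {Z | Z ⊂ univ.erase j}}
      (ENNReal.ofReal δ • (Q : Measure (Arr J)))
      ((P : Measure (Arr J)).restrict (topEv j) + ENNReal.ofReal κ • (P : Measure (Arr J)))
      (fun S hS C hC => by
        rw [hr1, hr2 C (cylinderEvents_le_pi _ hC)]
        obtain ⟨M, hM⟩ := hbound S fun _ m => m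
        have t1 := (tendsto_cyl hQ' S hC).const_mul δ
        have t2 := (tendsto_cyl hP' S hC).const_mul κ
        have t3 := tendsto_cyl hP' (insert (j, Pi.single j 1) S) (C := C ∩ topEv j)
          (MeasurableSet.inter (cylinderEvents_mono (by simp) _ hC)
            (measurableSet_topEv j (by simp)))
        have t4 := (t3.add t2).add (hlim0.const_mul (2 ^ S.card))
        rw [mul_zero, add_zero] at t4
        refine le_of_tendsto_of_tendsto t1 t4 ?_
        filter_upwards [hev M, hev 1] with n h1 h2
        exact hdom n j S C (fun ι hι => hS hι) (fun ι hι i => (hM ι hι i).trans h1) h2 hC) hC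
    rwa [hr1, hr2 C (sig_le _ _ hC)] at this
  have hpos := limit_thm (P := (P : Measure (Arr J))) (Q := (Q : Measure (Arr J))) hJ hPexch
    (E := topEv) (a := 1 / δ) (κ := κ / δ)
    (fun j => measurableSet_topEv j (by simp [zeroSet_single])) (by positivity)
    (by
      rw [hκ, ← hk]
      have : (k : ℝ) * (δ / (2 * k) / δ) = 1 / 2 := by field_simp
      rw [this]; norm_num)
    (fun j C hC => by
      have := hdomlim j C hC
      have e : 1 / δ * (P : Measure (Arr J)).real (C ∩ topEv j) +
          κ / δ * (P : Measure (Arr J)).real C = ((P : Measure (Arr J)).real (C ∩ topEv j) +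
        κ * (P : Measure (Arr J)).real C) / δ := by ring
      rw [e, le_div_iff₀ hδ]; linarith)
  have hzero : κ ^ k * (P : Measure (Arr J)).real (⋂ j, topEv j) ≤ 0 := by
    have t1 := (tendsto_cyl hP' (univ.image fun j : J => ((j, Pi.single j 1) : Idx J))
      (C := ⋂ j, topEv j) (MeasurableSet.iInter fun j => measurableSet_topEv j (by simp))).const_mul
      (κ ^ k)
    refine le_of_tendsto_of_tendsto t1 hlim0 ?_
    filter_upwards [hev 1] with n h1
    exact hsmall n h1
  have hpr : 0 < (P : Measure (Arr J)).real (⋂ j, topEv j) :=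
    ENNReal.toReal_pos hpos.ne' (measure_ne_top _ _)
  have : 0 < κ ^ k * (P : Measure (Arr J)).real (⋂ j, topEv j) := by positivity
  linarith

/-! ### Weighted Gowers–Cauchy–Schwarz -/

section doubled
variable {Z : Type} [Fintype Z] [Nonempty Z]

/-- The point of `J → Z` taking its coordinates in `D` from the second member of the pair `p`
and the others from the first. -/
def mix (D : Finset J) (p : (J → Z) × (J → Z)) : J → Z := D.piecewise p.2 p.1

/-- Replace coordinate `i` of the first member of the pair by that of the second. -/
def copy (i : J) (p : (J → Z) × (J → Z)) : (J → Z) × (J → Z) :=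
  (Function.update p.1 i (p.2 i), p.2)

/-- `F` does not depend on coordinate `i` of the first member of the pair. -/
def Indep₀ (i : J) (F : (J → Z) × (J → Z) → ℝ) : Prop :=
  ∀ p z, F (Function.update p.1 i z, p.2) = F p

/-- `F` does not depend on coordinate `i` of the second member of the pair. -/
def Indep₁ (i : J) (F : (J → Z) × (J → Z) → ℝ) : Prop :=
  ∀ p z, F (p.1, Function.update p.2 i z) = F p

/-- The monomial `∏_k ∏_{D ∈ T k} N_k(x^{(D)})` in the weights. -/
def mono (N : J → (J → Z) → ℝ) (T : J → Finset (Finset J)) (p : (J → Z) × (J → Z)) : ℝ :=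
  ∏ k, ∏ D ∈ T k, N k (mix D p)

/-- The linear forms condition for a family of weights on `J → Z`, written with monomials: the
exponent of `N_k(x^{(D)})` is `1` exactly when `D ∈ T k`. -/
def LF (N : J → (J → Z) → ℝ) (η : ℝ) : Prop :=
  ∀ T : J → Finset (Finset J), (∀ k, ∀ D ∈ T k, k ∉ D) → |avg (mono N T) - 1| ≤ η

lemma mix_copy (D : Finset J) (i : J) (p : (J → Z) × (J → Z)) :
    mix D (copy i p) = mix (insert i D) p := by
  funext k
  simp only [mix, copy, Finset.piecewise, mem_insert, Function.update_apply]
  by_cases h : k = i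
  · subst h; simp
  · simp [h]

lemma mix_upd₀ {D : Finset J} {i : J} (h : i ∉ D) (p : (J → Z) × (J → Z)) (z : Z) :
    mix D (Function.update p.1 i z, p.2) = Function.update (mix D p) i z := by
  funext k
  simp only [mix, Finset.piecewise, Function.update_apply]
  by_cases hk : k = i
  · subst hk; simp [h]
  · simp [hk]

lemma mix_upd₁ {D : Finset J} {i : J} (h : i ∉ D) (p : (J → Z) × (J → Z)) (z : Z) :
    mix D (p.1, Function.update p.2 i z) = mix D p := by
  funext k
  simp only [mix, Finset.piecewise, Function.update_apply]
  by_cases hk : k = i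
  · subst hk; simp [h]
  · simp [hk]

lemma avg_upd₀ (i : J) (F : (J → Z) × (J → Z) → ℝ) :
    avg (fun p : (J → Z) × (J → Z) => avg fun z => F (Function.update p.1 i z, p.2)) = avg F :=
  avg_resample (fun p : (J → Z) × (J → Z) => p.1 i)
    (fun p z => (Function.update p.1 i z, p.2))
    (by simp) (by simp) (by simp) F

lemma avg_upd₁ (i : J) (F : (J → Z) × (J → Z) → ℝ) :
    avg (fun p : (J → Z) × (J → Z) => avg fun z => F (p.1, Function.update p.2 i z)) = avg F :=
  avg_resample (fun p : (J → Z) × (J → Z) => p.2 i)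
    (fun p z => (p.1, Function.update p.2 i z))
    (by simp) (by simp) (by simp) F

/-- One weighted Cauchy–Schwarz step: eliminating the factor `U` duplicates coordinate `i`. -/
lemma cs_step (i : J) (U W F : (J → Z) × (J → Z) → ℝ) (hUW : ∀ p, |U p| ≤ W p)
    (hU : Indep₀ i U) (hW0 : Indep₀ i W) (hW1 : Indep₁ i W) (hF : Indep₁ i F) :
    (avg fun p => U p * F p) ^ 2 ≤ avg W * avg fun p => W p * (F p * F (copy i p)) := by
  have hWn : ∀ p, 0 ≤ W p := fun p => (abs_nonneg _).trans (hUW p)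
  let F' : (J → Z) × (J → Z) → ℝ := fun p => avg fun z => F (Function.update p.1 i z, p.2)
  have e1 : avg (fun p => U p * F p) = avg fun p => U p * F' p := by
    rw [← avg_upd₀ i]
    congr 1; funext p
    simp only [F']
    rw [← avg_const_mul]
    congr 1; funext z
    rw [hU]
  have e2 : |avg fun p => U p * F' p| ≤ avg fun p => W p * (1 * |F' p|) := by
    refine (abs_avg_le _).trans (avg_mono fun p => ?_)
    rw [abs_mul, one_mul]
    exact mul_le_mul_of_nonneg_right (hUW p) (abs_nonneg _)
  have e3 := avg_wmul_sq_le W (fun _ => 1) (fun p => |F' p|) hWn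
  have e4 : (avg fun p => W p * |F' p| ^ 2) = avg fun p => W p * (F p * F (copy i p)) := by
    rw [← avg_upd₀ i (fun p => W p * (F p * F (copy i p)))]
    rw [← avg_upd₁ i (fun p => avg fun z => _)]
    congr 1; funext p
    rw [sq_abs]
    have : ∀ y z : Z, W (Function.update p.1 i z, Function.update p.2 i y) *
        (F (Function.update p.1 i z, Function.update p.2 i y) *
          F (copy i (Function.update p.1 i z, Function.update p.2 i y))) =
        W p * F (Function.update p.1 i z, p.2) * F (Function.update p.1 i y, p.2) := by
      intro y z
      have a1 : W (Function.update p.1 i z, Function.update p.2 i y) = W p := by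
        have := hW1 (Function.update p.1 i z, p.2) y
        rw [hW0] at this; exact this
      have a2 := hF (Function.update p.1 i z, p.2) y
      have a3 := hF (Function.update p.1 i y, p.2) y
      simp only at a2 a3
      simp only [copy, Function.update_self, Function.update_idem]
      rw [a1, a2, a3, mul_assoc]
    simp only [this]
    simp_rw [avg_mul_const]
    rw [avg_const_mul, avg_const_mul]
    simp only [F']
    ring
  rw [e1]
  calc (avg fun p => U p * F' p) ^ 2 = |avg fun p => U p * F' p| ^ 2 := (sq_abs _).symm
    _ ≤ (avg fun p => W p * (1 * |F' p|)) ^ 2 := by gcongr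
    _ ≤ _ := e3
    _ = _ := by rw [e4]; simp

variable {N : J → (J → Z) → ℝ}

lemma mono_indep₁ {T : J → Finset (Finset J)} {i : J} (h : ∀ k, ∀ D ∈ T k, i ∉ D) :
    Indep₁ i (mono N T) := by
  intro p z
  refine prod_congr rfl fun k _ => prod_congr rfl fun D hD => ?_
  rw [mix_upd₁ (h k D hD)]

/-- Multiplying a product by its copy adds to the index family all sets enlarged by `i`. -/
lemma prod_copy {G : (J → Z) → ℝ} {S : Finset (Finset J)} {i : J} (h : ∀ D ∈ S, i ∉ D)
    (p : (J → Z) × (J → Z)) :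
    ∏ D ∈ S ∪ S.image (insert i), G (mix D p) =
      (∏ D ∈ S, G (mix D p)) * ∏ D ∈ S, G (mix D (copy i p)) := by
  rw [prod_union, prod_image]
  · simp_rw [mix_copy]
  · intro D hD D' hD' e
    have := congrArg (fun A => A.erase i) e
    simpa [h D hD, h D' hD'] using this
  · rw [disjoint_left]
    rintro D hD hD'
    obtain ⟨E, -, rfl⟩ := mem_image.1 hD'
    exact h _ hD (mem_insert_self _ _)

/-- Bound in the weighted Gowers–Cauchy–Schwarz argument after eliminating `n` factors. -/
noncomputable def gcsBound : ℕ → ℝ → ℝ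
  | 0, q => q
  | n + 1, q => √(2 * gcsBound n q)

/-- Expanding the factors `N_j - 1` leaves an alternating sum of monomials, each of mean close
to `1`. -/
lemma prod_sub_one_mono {η : ℝ} (hη : LF N η) (j : J) (S : Finset (Finset J)) (hS : S.Nonempty)
    (hSj : ∀ D ∈ S, j ∉ D) (T : J → Finset (Finset J)) (hT : ∀ k, ∀ D ∈ T k, k ∉ D)
    (hTj : T j = ∅) :
    |avg fun p => (∏ D ∈ S, (N j (mix D p) - 1)) * mono N T p| ≤ 2 ^ S.card * η := by
  have key : ∀ S' ∈ S.powerset, (avg fun p => (∏ D ∈ S', N j (mix D p)) * mono N T p) =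
      avg (mono N (Function.update T j S')) := by
    intro S' _
    congr 1; funext p
    unfold mono
    rw [← mul_prod_erase univ _ (mem_univ j), hTj,
      ← mul_prod_erase univ (fun k => ∏ D ∈ Function.update T j S' k, _) (mem_univ j)]
    simp only [prod_empty, one_mul, Function.update_self]
    congr 1
    refine prod_congr rfl fun k hk => ?_
    rw [Function.update_of_ne (ne_of_mem_erase hk)]
  have key2 : ∀ S' ∈ S.powerset, |avg (mono N (Function.update T j S')) - 1| ≤ η := by
    intro S' hS'
    refine hη _ fun k D hD => ?_
    by_cases hk : k = j
    · subst hk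
      rw [Function.update_self] at hD
      exact hSj D (mem_powerset.1 hS' hD)
    · rw [Function.update_of_ne hk] at hD
      exact hT k D hD
  have hz : ∑ S' ∈ S.powerset, (-1 : ℝ) ^ (S \ S').card = 0 := by
    have := prod_add (fun _ : Finset J => (1 : ℝ)) (fun _ => -1) S
    simp only [prod_const_one, one_mul, add_neg_cancel, prod_const] at this
    rw [← this, zero_pow (card_ne_zero.2 hS)]
  have e : (avg fun p => (∏ D ∈ S, (N j (mix D p) - 1)) * mono N T p) =
      ∑ S' ∈ S.powerset, (-1 : ℝ) ^ (S \ S').card *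
        (avg (mono N (Function.update T j S')) - 1) := by
    simp_rw [mul_sub, sum_sub_distrib, mul_one]
    rw [hz, sub_zero]
    simp_rw [sub_eq_add_neg, prod_add, sum_mul]
    rw [avg_sum]
    refine sum_congr rfl fun S' hS' => ?_
    rw [← key S' hS', ← avg_const_mul]
    congr 1; funext p
    simp only [prod_const]
    ring
  rw [e]
  refine (abs_sum_le_sum_abs _ _).trans ?_
  refine (sum_le_card_nsmul _ _ η fun S' hS' => ?_).trans ?_
  · rw [abs_mul, abs_pow, abs_neg, abs_one, one_pow, one_mul]
    exact key2 S' hS'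
  · rw [card_powerset]; simp

/-- Weighted Gowers–Cauchy–Schwarz: a product of factors `N_j - 1` and a monomial is nearly
uncorrelated with products of functions `U k` that each ignore one coordinate of the first point
and are dominated by products of copies of the weight `N_k`.
Each factor `U k` is removed by `cs_step`. -/
lemma gcs {η : ℝ} (hN0 : ∀ k x, 0 ≤ N k x) (hN : ∀ k, Indep k (N k)) (hη : LF N η) (hη1 : η ≤ 1) (j : J)
    (s : Finset J) : ∀ (_ : j ∉ s) (S : Finset (Finset J)) (T B : J → Finset (Finset J))
    (U : J → (J → Z) × (J → Z) → ℝ), S.Nonempty → (∀ D ∈ S, j ∉ D) → (∀ k, ∀ D ∈ T k, k ∉ D) →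
    T j = ∅ → (∀ k ∈ s, T k = ∅) → (∀ k, ∀ D ∈ B k, k ∉ D) →
    (∀ i ∈ s, ∀ D ∈ S, i ∉ D) → (∀ i ∈ s, ∀ k, ∀ D ∈ T k, i ∉ D) →
    (∀ i ∈ s, ∀ k, ∀ D ∈ B k, i ∉ D) →
    (∀ k ∈ s, ∀ p, |U k p| ≤ ∏ D ∈ B k, N k (mix D p)) → (∀ k ∈ s, Indep₀ k (U k)) →
    (∀ i ∈ s, ∀ k ∈ s, Indep₁ i (U k)) →
    |avg fun p => ((∏ D ∈ S, (N j (mix D p) - 1)) * mono N T p) * ∏ k ∈ s, U k p| ≤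
      gcsBound s.card (2 ^ 2 ^ Fintype.card J * η) := by
  have hη0 : 0 ≤ η := (abs_nonneg _).trans (hη (fun _ => ∅) (by simp))
  induction s using Finset.induction_on with
  | empty =>
    intro _ S T B U hS hSj hT hTj _ _ _ _ _ _ _ _
    simp only [prod_empty, mul_one, card_empty, gcsBound]
    refine (prod_sub_one_mono hη j S hS hSj T hT hTj).trans ?_
    gcongr
    · norm_num
    · calc S.card ≤ Fintype.card (Finset J) := card_le_univ S
        _ = _ := Fintype.card_finset
  | insert i s his ih =>
    intro hj S T B U hS hSj hT hTj hTs hB hSs hTss hBs hUB hU0 hU1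
    have hji : j ≠ i := fun h => hj (h ▸ mem_insert_self _ _)
    have hjs : j ∉ s := fun h => hj (mem_insert_of_mem h)
    have hii : i ∈ insert i s := mem_insert_self _ _
    set F : (J → Z) × (J → Z) → ℝ := fun p =>
      ((∏ D ∈ S, (N j (mix D p) - 1)) * mono N T p) * ∏ k ∈ s, U k p with hF
    set W : (J → Z) × (J → Z) → ℝ := fun p => ∏ D ∈ B i, N i (mix D p) with hW
    have hF1 : Indep₁ i F := by
      intro p z
      simp only [hF]
      rw [mono_indep₁ (hTss i hii)]
      have a1 : ∏ D ∈ S, (N j (mix D (p.1, Function.update p.2 i z)) - 1) =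
          ∏ D ∈ S, (N j (mix D p) - 1) :=
        prod_congr rfl fun D hD => by rw [mix_upd₁ (hSs i hii D hD)]
      have a2 : ∏ k ∈ s, U k (p.1, Function.update p.2 i z) = ∏ k ∈ s, U k p :=
        prod_congr rfl fun k hk => hU1 i hii k (mem_insert_of_mem hk) p z
      rw [a1, a2]
    have hW0 : Indep₀ i W := by
      intro p z
      refine prod_congr rfl fun D hD => ?_
      rw [mix_upd₀ (hB i D hD), hN]
    have hW1 : Indep₁ i W := by
      intro p z
      refine prod_congr rfl fun D hD => ?_
      rw [mix_upd₁ (hB i D hD)]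
    have cs := cs_step i (U i) W F (hUB i hii) (hU0 i hii) hW0 hW1 hF1
    have hWm : avg W ≤ 2 := by
      have := hη (Function.update (fun _ => ∅) i (B i)) (by
        intro k D hD
        by_cases hk : k = i
        · subst hk; rw [Function.update_self] at hD; exact hB k D hD
        · rw [Function.update_of_ne hk] at hD; simp at hD)
      have e : mono N (Function.update (fun _ => ∅) i (B i)) = W := by
        funext p
        unfold mono
        rw [prod_eq_single i (fun k _ hk => by rw [Function.update_of_ne hk, prod_empty])
          (by simp), Function.update_self]
      rw [e] at this
      linarith [(abs_le.1 this).2]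
    set S' := S ∪ S.image (insert i)
    set T' : J → Finset (Finset J) := fun k => if k = i then B i else T k ∪ (T k).image (insert i)
    set B' : J → Finset (Finset J) := fun k => if k = i then ∅ else B k ∪ (B k).image (insert i)
    set U' : J → (J → Z) × (J → Z) → ℝ := fun k p => U k p * U k (copy i p)
    have hdbl : ∀ (A : J → Finset (Finset J)), (∀ k, ∀ D ∈ A k, k ∉ D) → ∀ k ≠ i,
        ∀ D ∈ A k ∪ (A k).image (insert i), k ∉ D := by
      intro A hA k hk D hD
      rcases mem_union.1 hD with hD | hD
      · exact hA k D hD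
      · obtain ⟨E, hE, rfl⟩ := mem_image.1 hD
        simp [hk, hA k E hE]
    have hdbl2 : ∀ (A : Finset (Finset J)) (i' : J), i' ≠ i → (∀ D ∈ A, i' ∉ D) →
        ∀ D ∈ A ∪ A.image (insert i), i' ∉ D := by
      intro A i' hi' hA D hD
      rcases mem_union.1 hD with hD | hD
      · exact hA D hD
      · obtain ⟨E, hE, rfl⟩ := mem_image.1 hD
        simp [hi', hA E hE]
    have hne : ∀ k ∈ s, k ≠ i := fun k hk h => his (h ▸ hk)
    have main := ih hjs S' T' B' U' (hS.mono subset_union_left)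
      (hdbl2 S j hji hSj)
      (by
        intro k D hD
        by_cases hk : k = i
        · subst hk; simp only [T', if_true] at hD; exact hB k D hD
        · simp only [T', if_neg hk] at hD; exact hdbl T hT k hk D hD)
      (by simp [T', hji, hTj])
      (by intro k hk; simp [T', hne k hk, hTs k (mem_insert_of_mem hk)])
      (by
        intro k D hD
        by_cases hk : k = i
        · subst hk; simp [B'] at hD
        · simp only [B', if_neg hk] at hD; exact hdbl B hB k hk D hD)
      (fun k hk => hdbl2 S k (hne k hk) (hSs k (mem_insert_of_mem hk)))
      (by
        intro i' hi' k D hD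
        by_cases hk : k = i
        · subst hk; simp only [T', if_true] at hD
          exact hBs i' (mem_insert_of_mem hi') k D hD
        · simp only [T', if_neg hk] at hD
          exact hdbl2 _ i' (hne i' hi') (hTss i' (mem_insert_of_mem hi') k) D hD)
      (by
        intro i' hi' k D hD
        by_cases hk : k = i
        · subst hk; simp [B'] at hD
        · simp only [B', if_neg hk] at hD
          exact hdbl2 _ i' (hne i' hi') (hBs i' (mem_insert_of_mem hi') k) D hD)
      (by
        intro k hk p
        simp only [B', if_neg (hne k hk), U']
        rw [prod_copy (hBs i hii k), abs_mul]
        exact mul_le_mul (hUB k (mem_insert_of_mem hk) p) (hUB k (mem_insert_of_mem hk) _)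
          (abs_nonneg _) (prod_nonneg fun D _ => hN0 _ _))
      (by
        intro k hk p z
        simp only [U']
        have h0 := hU0 k (mem_insert_of_mem hk)
        rw [h0 p z]
        congr 1
        have : copy i (Function.update p.1 k z, p.2) =
            (Function.update (copy i p).1 k z, (copy i p).2) := by
          simp only [copy]
          rw [Function.update_comm (hne k hk)]
        rw [this, h0])
      (by
        intro i' hi' k hk p z
        simp only [U']
        have h1 := hU1 i' (mem_insert_of_mem hi') k (mem_insert_of_mem hk)
        rw [h1 p z]
        congr 1
        have : copy i (p.1, Function.update p.2 i' z) =
            ((copy i p).1, Function.update (copy i p).2 i' z) := by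
          simp only [copy]
          rw [Function.update_of_ne (hne i' hi').symm]
        rw [this, h1])
    have hprod : ∀ p, W p * (F p * F (copy i p)) =
        ((∏ D ∈ S', (N j (mix D p) - 1)) * mono N T' p) * ∏ k ∈ s, U' k p := by
      intro p
      have hm : mono N T' p = W p * (mono N T p * mono N T (copy i p)) := by
        unfold mono
        rw [← mul_prod_erase univ (fun k => ∏ D ∈ T' k, N k (mix D p)) (mem_univ i),
          ← mul_prod_erase univ (fun k => ∏ D ∈ T k, N k (mix D p)) (mem_univ i),
          ← mul_prod_erase univ (fun k => ∏ D ∈ T k, N k (mix D (copy i p))) (mem_univ i)]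
        simp only [T', if_true, hTs i hii, prod_empty, one_mul, ← prod_mul_distrib]
        congr 1
        refine prod_congr rfl fun k hk => ?_
        rw [if_neg (ne_of_mem_erase hk), prod_copy (hTss i hii k), prod_mul_distrib]
      rw [hm, prod_copy (G := fun x => N j x - 1) (hSs i hii)]
      simp only [U', prod_mul_distrib, hF]
      ring
    simp_rw [hprod] at cs
    rw [card_insert_of_notMem his]
    have e : (avg fun p => ((∏ D ∈ S, (N j (mix D p) - 1)) * mono N T p) *
        ∏ k ∈ insert i s, U k p) = avg fun p => U i p * F p := by
      congr 1; funext p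
      rw [prod_insert his]; simp only [hF]; ring
    rw [e]
    simp only [gcsBound]
    refine Real.abs_le_sqrt (cs.trans ?_)
    have hWn : 0 ≤ avg W := avg_nonneg fun p => prod_nonneg fun D _ => hN0 _ _
    calc _ ≤ avg W * |_| := mul_le_mul_of_nonneg_left (le_abs_self _) hWn
      _ ≤ 2 * _ := mul_le_mul hWm main (abs_nonneg _) (by norm_num)

lemma avg_pair_fst (f : (J → Z) → ℝ) : avg (fun p : (J → Z) × (J → Z) => f p.1) = avg f :=
  avg_fst f

/-- Under the linear forms condition, `N_j - 1` has small correlation with all box tests. -/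
lemma lf_test {η : ℝ} (hN0 : ∀ k x, 0 ≤ N k x) (hN : ∀ k, Indep k (N k)) (hη : LF N η) (hη1 : η ≤ 1)
    (j : J) (φ : (J → Z) → ℝ) (hφ : IsTest j φ) :
    |avg fun x => (N j x - 1) * φ x| ≤
      gcsBound (Fintype.card J - 1) (2 ^ 2 ^ Fintype.card J * η) := by
  obtain ⟨B, hB1, hB, -, hφB⟩ := hφ
  have h := gcs hN0 hN hη hη1 j (univ.erase j) (by simp) {∅} (fun _ => ∅) (fun _ => ∅)
    (fun k p => B k p.1) (by simp) (by simp) (by simp) (by simp) (by simp) (by simp) (by simp)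
    (by simp) (by simp) (fun k _ p => by simpa using hB1 k p.1) (fun k _ p z => hB k p.1 z)
    (fun i _ k _ p z => rfl)
  rw [card_erase_of_mem (mem_univ j), card_univ] at h
  rw [← avg_pair_fst]
  convert h using 4 with p
  simp [hφB, mono, mix]

end doubled

/-! ### The dense model theorem -/

section dense

lemma continuous_avg {α E : Type*} [Fintype α] [TopologicalSpace E] {F : E → α → ℝ}
    (h : ∀ x, Continuous fun e => F e x) : Continuous fun e => avg (F e) := by
  unfold avg
  exact (continuous_finsetSum _ fun x _ => h x).div_const _

/-- The closed convex hull of a multiplicatively closed class is multiplicatively closed. -/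
lemma closedHull_mul {X : Type*} {𝓣 : Set (X → ℝ)}
    (hmul : ∀ φ ∈ 𝓣, ∀ ψ ∈ 𝓣, φ * ψ ∈ 𝓣) {φ ψ : X → ℝ}
    (hφ : φ ∈ closedConvexHull ℝ 𝓣) (hψ : ψ ∈ closedConvexHull ℝ 𝓣) :
    φ * ψ ∈ closedConvexHull ℝ 𝓣 := by
  have hcl : IsClosed (closedConvexHull ℝ 𝓣 : Set (X → ℝ)) := isClosed_closedConvexHull
  have hcv : Convex ℝ (closedConvexHull ℝ 𝓣 : Set (X → ℝ)) := convex_closedConvexHull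
  have gen : ∀ τ : X → ℝ, (∀ σ ∈ 𝓣, σ * τ ∈ closedConvexHull ℝ 𝓣) →
      ∀ σ ∈ closedConvexHull ℝ 𝓣, σ * τ ∈ closedConvexHull ℝ 𝓣 := by
    intro τ h
    have : closedConvexHull ℝ 𝓣 ⊆ (fun σ : X → ℝ => σ * τ) ⁻¹' (closedConvexHull ℝ 𝓣) := by
      refine closedConvexHull_min h ?_ (hcl.preimage (by fun_prop))
      exact hcv.is_linear_preimage ⟨fun a b => add_mul _ _ _, fun c a => smul_mul_assoc _ _ _⟩
    exact this
  have step1 : ∀ τ ∈ 𝓣, ∀ σ ∈ closedConvexHull ℝ 𝓣, σ * τ ∈ closedConvexHull ℝ 𝓣 :=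
    fun τ hτ => gen τ fun σ hσ => subset_closedConvexHull (hmul σ hσ τ hτ)
  exact gen ψ (fun σ hσ => by rw [mul_comm]; exact step1 σ hσ ψ hψ) φ hφ

/-- Abstract dense model theorem: if `N` is close to `1` when tested against a multiplicatively
closed symmetric class of bounded functions, then every `0 ≤ f ≤ N` is modelled by a function
with values in `[0, 1]`. The model is one side of a saddle point of `(g, ψ) ↦ E (f - g) ψ`, and
the other side is controlled by a polynomial approximation of the positive part. -/
lemma dense_model_abstract (ε : ℝ) (hε : 0 < ε) : ∃ η : ℝ, 0 < η ∧
    ∀ (X : Type) [Fintype X] [Nonempty X] (𝓣 : Set (X → ℝ)), (∀ φ ∈ 𝓣, ∀ x, |φ x| ≤ 1) →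
    (1 : X → ℝ) ∈ 𝓣 → (∀ φ ∈ 𝓣, -φ ∈ 𝓣) → (∀ φ ∈ 𝓣, ∀ ψ ∈ 𝓣, φ * ψ ∈ 𝓣) →
    ∀ N f : X → ℝ, (∀ x, 0 ≤ f x ∧ f x ≤ N x) →
    (∀ φ ∈ 𝓣, |avg fun x => (N x - 1) * φ x| ≤ η) →
    ∃ g : X → ℝ, (∀ x, 0 ≤ g x ∧ g x ≤ 1) ∧ ∀ φ ∈ 𝓣, |avg fun x => (f x - g x) * φ x| ≤ ε := by
  obtain ⟨P, hP⟩ := exists_polynomial_near_of_continuousOn (-1) 1 (fun t => max t 0)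
    (by fun_prop) (ε / 6) (by positivity)
  set A : ℝ := ∑ n ∈ range (P.natDegree + 1), |P.coeff n| with hA
  have hA0 : 0 ≤ A := sum_nonneg fun _ _ => abs_nonneg _
  refine ⟨min 1 (ε / (2 * (A + 1))), by positivity, ?_⟩
  intro X _ _ 𝓣 hb h1 hneg hmul N f hf hN
  set η := min 1 (ε / (2 * (A + 1)))
  have hη0 : 0 < η := by positivity
  have hAη : A * η ≤ ε / 2 := by
    calc A * η ≤ (A + 1) * (ε / (2 * (A + 1))) := by
          gcongr
          · linarith
          · exact min_le_right _ _
      _ = ε / 2 := by field_simp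
  have hN0 : ∀ x, 0 ≤ N x := fun x => (hf x).1.trans (hf x).2
  set Y : Set (X → ℝ) := closedConvexHull ℝ 𝓣 with hY
  set K : Set (X → ℝ) := Set.Icc 0 1 with hK
  have hYb : Y ⊆ Set.Icc (-1) 1 := by
    refine closedConvexHull_min ?_ (convex_Icc _ _) isClosed_Icc
    intro φ hφ
    exact ⟨fun x => (abs_le.1 (hb φ hφ x)).1, fun x => (abs_le.1 (hb φ hφ x)).2⟩
  have hYc : IsCompact Y := isCompact_Icc.of_isClosed_subset isClosed_closedConvexHull hYb
  have hYN : ∀ ψ ∈ Y, |avg fun x => (N x - 1) * ψ x| ≤ η := by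
    have : Y ⊆ {ψ | |avg fun x => (N x - 1) * ψ x| ≤ η} := by
      refine closedConvexHull_min hN ?_ ?_
      · have e : {ψ : X → ℝ | |avg fun x => (N x - 1) * ψ x| ≤ η} =
            (fun ψ : X → ℝ => avg fun x => (N x - 1) * ψ x) ⁻¹' Set.Icc (-η) η := by
          ext ψ; simp [abs_le]
        rw [e]
        refine (convex_Icc _ _).is_linear_preimage ⟨fun a b => ?_, fun c a => ?_⟩
        · rw [← avg_add]; congr 1; funext x; simp; ring
        · rw [smul_eq_mul, ← avg_const_mul]; congr 1; funext x; simp; ring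
      · exact isClosed_le (continuous_avg fun x => by fun_prop).abs continuous_const
    exact this
  have hYpow : ∀ ψ ∈ Y, ∀ n : ℕ, ψ ^ n ∈ Y := by
    intro ψ hψ n
    induction n with
    | zero => rw [pow_zero]; exact subset_closedConvexHull h1
    | succ n ih => rw [pow_succ]; exact closedHull_mul hmul ih hψ
  obtain ⟨g, hg, ψ, hψ, hs⟩ := Sion.exists_isSaddlePointOn (X := K) (Y := Y)
    (f := fun g ψ => avg fun x => (f x - g x) * ψ x) ⟨0, by simp [hK]⟩ (convex_Icc _ _)
    isCompact_Icc
    (fun ψ _ => (continuous_avg fun x => by fun_prop).lowerSemicontinuous.lowerSemicontinuousOn _)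
    (fun ψ _ => ConvexOn.quasiconvexOn ⟨convex_Icc _ _, fun a _ b _ s t _ _ hst => le_of_eq (by
      beta_reduce
      rw [smul_eq_mul, smul_eq_mul, ← avg_const_mul, ← avg_const_mul, ← avg_add]
      congr 1; funext x; simp only [Pi.add_apply, Pi.smul_apply, smul_eq_mul]
      linear_combination (- f x * ψ x) * hst)⟩)
    convex_closedConvexHull ⟨1, subset_closedConvexHull h1⟩ hYc
    (fun g _ => (continuous_avg fun x => by fun_prop).upperSemicontinuous.upperSemicontinuousOn _)
    (fun g _ => ConcaveOn.quasiconcaveOn ⟨convex_closedConvexHull,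
      fun a _ b _ s t _ _ hst => le_of_eq (by
      beta_reduce
      rw [smul_eq_mul, smul_eq_mul, ← avg_const_mul, ← avg_const_mul, ← avg_add]
      congr 1; funext x; simp only [Pi.add_apply, Pi.smul_apply, smul_eq_mul]
      ring)⟩)
  have hψb : ∀ x, ψ x ∈ Set.Icc (-1 : ℝ) 1 := fun x => ⟨(hYb hψ).1 x, (hYb hψ).2 x⟩
  -- The value of the saddle point is at most `E (N - 1) ψ₊`.
  have hval : (avg fun x => (f x - if 0 < ψ x then 1 else 0) * ψ x) ≤
      avg fun x => (N x - 1) * max (ψ x) 0 := by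
    refine avg_mono fun x => ?_
    split_ifs with h
    · rw [max_eq_left h.le]
      exact mul_le_mul_of_nonneg_right (by linarith [(hf x).2]) h.le
    · rw [max_eq_right (not_lt.1 h), mul_zero, sub_zero]
      exact mul_nonpos_of_nonneg_of_nonpos (hf x).1 (not_lt.1 h)
  have hpoly : |avg fun x => (N x - 1) * P.eval (ψ x)| ≤ A * η := by
    have e : (avg fun x => (N x - 1) * P.eval (ψ x)) =
        ∑ n ∈ range (P.natDegree + 1), P.coeff n * avg fun x => (N x - 1) * (ψ ^ n) x := by
      simp_rw [← avg_const_mul, ← avg_sum, Polynomial.eval_eq_sum_range, mul_sum]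
      congr 1; funext x
      refine sum_congr rfl fun n _ => ?_
      simp only [Pi.pow_apply]; ring
    rw [e, hA, sum_mul]
    refine (abs_sum_le_sum_abs _ _).trans (sum_le_sum fun n _ => ?_)
    rw [abs_mul]
    exact mul_le_mul_of_nonneg_left (hYN _ (hYpow ψ hψ n)) (abs_nonneg _)
  have hEN : avg (fun x => |N x - 1|) ≤ 3 := by
    have a := hN 1 h1
    have b : (avg fun x => (N x - 1) * (1 : X → ℝ) x) = avg N - 1 := by
      simp only [Pi.one_apply, mul_one]
      rw [avg_sub, avg_const]
    rw [b] at a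
    calc avg (fun x => |N x - 1|) ≤ avg fun x => N x + 1 := avg_mono fun x => by
          rw [abs_le]; constructor <;> linarith [hN0 x]
      _ = avg N + 1 := by rw [avg_add, avg_const]
      _ ≤ 3 := by linarith [(abs_le.1 a).2, min_le_left (1 : ℝ) (ε / (2 * (A + 1)))]
  have hdiff : |avg fun x => (N x - 1) * (P.eval (ψ x) - max (ψ x) 0)| ≤ ε / 2 := by
    refine (abs_avg_le _).trans ?_
    calc _ ≤ avg fun x => |N x - 1| * (ε / 6) := avg_mono fun x => by
          rw [abs_mul]
          exact mul_le_mul_of_nonneg_left (hP _ (hψb x)).le (abs_nonneg _)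
      _ ≤ 3 * (ε / 6) := by rw [avg_mul_const]; gcongr
      _ = ε / 2 := by ring
  have hfin : (avg fun x => (N x - 1) * max (ψ x) 0) ≤ ε := by
    have e : (avg fun x => (N x - 1) * max (ψ x) 0) = (avg fun x => (N x - 1) * P.eval (ψ x)) -
        avg fun x => (N x - 1) * (P.eval (ψ x) - max (ψ x) 0) := by
      rw [← avg_sub]; congr 1; funext x; ring
    rw [e]
    linarith [(abs_le.1 hpoly).2, (abs_le.1 hdiff).1]
  have hup : ∀ φ ∈ 𝓣, (avg fun x => (f x - g x) * φ x) ≤ ε := by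
    intro φ hφ
    have := hs (fun x => if 0 < ψ x then 1 else 0)
      ⟨fun x => by simp only [Pi.zero_apply]; split_ifs <;> norm_num,
        fun x => by simp only [Pi.one_apply]; split_ifs <;> norm_num⟩ φ
      (subset_closedConvexHull hφ)
    exact this.trans (hval.trans hfin)
  refine ⟨g, fun x => ⟨hg.1 x, hg.2 x⟩, fun φ hφ => abs_le.2 ⟨?_, hup φ hφ⟩⟩
  have := hup _ (hneg φ hφ)
  simp only [Pi.neg_apply, mul_neg] at this
  have e : (avg fun x => -((f x - g x) * φ x)) = - avg fun x => (f x - g x) * φ x := by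
    rw [← neg_one_mul, ← avg_const_mul]; congr 1; funext x; ring
  linarith

variable {Z : Type}

lemma IsTest.indep {j : J} {φ : (J → Z) → ℝ} (h : IsTest j φ) : Indep j φ := by
  obtain ⟨B, -, -, hB, e⟩ := h
  intro x z
  rw [e, e]
  exact prod_congr rfl fun i _ => hB i x z

lemma IsTest.abs_le {j : J} {φ : (J → Z) → ℝ} (h : IsTest j φ) (x : J → Z) : |φ x| ≤ 1 := by
  obtain ⟨B, hB, -, -, e⟩ := h
  rw [e, abs_prod]
  exact prod_le_one (fun _ _ => abs_nonneg _) fun i _ => hB i x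

lemma IsTest.mul {j : J} {φ ψ : (J → Z) → ℝ} (h : IsTest j φ) (h' : IsTest j ψ) :
    IsTest j (φ * ψ) := by
  obtain ⟨B, h1, h2, h3, e⟩ := h
  obtain ⟨B', h1', h2', h3', e'⟩ := h'
  refine ⟨fun i x => B i x * B' i x, fun i x => ?_, fun i x z => ?_, fun i x z => ?_, fun x => ?_⟩
  · rw [abs_mul]; exact mul_le_one₀ (h1 i x) (abs_nonneg _) (h1' i x)
  · simp only [h2 i x z, h2' i x z]
  · simp only [h3 i x z, h3' i x z]
  · rw [Pi.mul_apply, e, e', prod_mul_distrib]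

lemma isTest_one (j : J) : IsTest j (1 : (J → Z) → ℝ) :=
  ⟨fun _ _ => 1, by simp, fun _ _ _ => rfl, fun _ _ _ => rfl, by simp⟩

lemma IsTest.neg (hJ : 2 ≤ Fintype.card J) {j : J} {φ : (J → Z) → ℝ} (h : IsTest j φ) :
    IsTest j (-φ) := by
  obtain ⟨k, hk⟩ : ∃ k, k ≠ j := Fintype.exists_ne_of_one_lt_card (by omega) j
  -- The sign is carried by the factor of index `k`.
  have hs : IsTest j (-1 : (J → Z) → ℝ) := by
    refine ⟨fun i _ => if i = k then -1 else 1, fun i x => ?_, fun _ _ _ => rfl,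
      fun _ _ _ => rfl, fun x => ?_⟩
    · beta_reduce; split_ifs <;> simp
    · rw [prod_ite_eq' (univ.erase j) k (fun _ => (-1 : ℝ))]
      simp [hk]
  have := hs.mul h
  rwa [neg_one_mul] at this

/-- Dense model theorem for box tests. -/
lemma dense_model (hJ : 2 ≤ Fintype.card J) (ε : ℝ) (hε : 0 < ε) : ∃ η : ℝ, 0 < η ∧
    ∀ (Z : Type) [Fintype Z] [Nonempty Z] (j : J) (N f : (J → Z) → ℝ),
    (∀ x, 0 ≤ f x ∧ f x ≤ N x) →
    (∀ φ, IsTest j φ → |avg fun x => (N x - 1) * φ x| ≤ η) →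
    ∃ g : (J → Z) → ℝ, (∀ x, 0 ≤ g x ∧ g x ≤ 1) ∧ Indep j g ∧
      ∀ φ, IsTest j φ → |avg fun x => (f x - g x) * φ x| ≤ ε := by
  obtain ⟨η, hη, H⟩ := dense_model_abstract ε hε
  refine ⟨η, hη, ?_⟩
  intro Z _ _ j N f hf hN
  obtain ⟨g, hg, hgφ⟩ := H (J → Z) {φ | IsTest j φ} (fun φ hφ => hφ.abs_le) (isTest_one j)
    (fun φ hφ => IsTest.neg hJ hφ) (fun φ hφ ψ hψ => IsTest.mul hφ hψ) N f hf hN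
  refine ⟨fun x => avg fun z => g (Function.update x j z), fun x => ⟨?_, ?_⟩, ?_, ?_⟩
  · exact avg_nonneg fun z => (hg _).1
  · exact (avg_mono fun z => (hg _).2).trans (avg_const _).le
  · intro x z; simp
  · intro φ hφ
    have e : (avg fun x => (f x - avg fun z => g (Function.update x j z)) * φ x) =
        avg fun x => (f x - g x) * φ x := by
      simp_rw [sub_mul]
      rw [avg_sub, avg_sub, ← avg_update j (fun x => g x * φ x)]
      congr 2; funext x
      rw [← avg_mul_const]
      congr 1; funext z
      rw [hφ.indep]
    rw [e]; exact hgφ φ hφ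

end dense

/-! ### The relative counting lemma -/

section counting
variable {Z : Type} [Fintype Z] [Nonempty Z]

/-- Average of `u` over coordinate `j`. -/
noncomputable def cav (j : J) (u : (J → Z) → ℝ) (x : J → Z) : ℝ :=
  avg fun z => u (Function.update x j z)

lemma cav_indep (j : J) (u : (J → Z) → ℝ) : Indep j (cav j u) := by
  intro x z; simp [cav]

lemma avg_cav (j : J) (u : (J → Z) → ℝ) : avg (cav j u) = avg u := avg_update j u

lemma avg_mul_cav {j : J} {k : (J → Z) → ℝ} (hk : Indep j k) (u : (J → Z) → ℝ) :
    (avg fun x => k x * cav j u x) = avg fun x => k x * u x := by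
  rw [← avg_update j (fun x => k x * u x)]
  congr 1; funext x
  unfold cav
  rw [← avg_const_mul]
  congr 1; funext z
  rw [hk]

lemma cav_mono {j : J} {u v : (J → Z) → ℝ} (h : ∀ x, u x ≤ v x) (x : J → Z) :
    cav j u x ≤ cav j v x := avg_mono fun _ => h _

lemma cav_nonneg {j : J} {u : (J → Z) → ℝ} (h : ∀ x, 0 ≤ u x) (x : J → Z) :
    0 ≤ cav j u x := avg_nonneg fun _ => h _

lemma cav_le_one {j : J} {u : (J → Z) → ℝ} (h : ∀ x, u x ≤ 1) (x : J → Z) :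
    cav j u x ≤ 1 := (avg_mono fun _ => h _).trans (avg_const _).le

/-- A product of two coordinate averages unfolds to an average over the doubled coordinate. -/
lemma avg_cav_mul_cav {j : J} {k : (J → Z) → ℝ} (hk : Indep j k) (u v : (J → Z) → ℝ) :
    (avg fun x => k x * (cav j u x * cav j v x)) =
      avg fun p : (J → Z) × (J → Z) => k p.1 * (u p.1 * v (mix {j} p)) := by
  rw [← avg_upd₀ j (fun p => k p.1 * (u p.1 * v (mix {j} p))), ← avg_upd₁ j (fun p => avg fun z => _)]
  rw [← avg_pair_fst]
  congr 1; funext p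
  have hm : ∀ y z : Z, mix {j} (Function.update p.1 j z, Function.update p.2 j y) =
      Function.update p.1 j y := by
    intro y z
    funext i
    by_cases h : i = j
    · subst h; simp [mix]
    · simp [mix, h]
  simp only [hm, hk p.1 _]
  simp_rw [avg_const_mul, avg_mul_const, avg_const_mul]
  rfl

variable {N : J → (J → Z) → ℝ}

lemma mono_erase {j : J} {T : J → Finset (Finset J)} (hT : T j = ∅) (p : (J → Z) × (J → Z)) :
    mono N T p = ∏ i ∈ univ.erase j, ∏ D ∈ T i, N i (mix D p) := by
  unfold mono
  rw [← mul_prod_erase univ _ (mem_univ j), hT, prod_empty, one_mul]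

/-- Strong linear forms: `N_j - 1` is uncorrelated with products over two copies of coordinate
`j` of functions dominated either by the weights or by `1`. -/
lemma strong_lf {η : ℝ} (hN0 : ∀ k x, 0 ≤ N k x) (hN : ∀ k, Indep k (N k)) (hη : LF N η)
    (hη1 : η ≤ 1) (j : J) (A A' : Finset J) (u v : J → (J → Z) → ℝ) (hu : ∀ i, Indep i (u i))
    (hv : ∀ i, Indep i (v i)) (hu0 : ∀ i x, 0 ≤ u i x) (hv0 : ∀ i x, 0 ≤ v i x)
    (huN : ∀ i x, u i x ≤ if i ∈ A then N i x else 1)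
    (hvN : ∀ i x, v i x ≤ if i ∈ A' then N i x else 1) :
    |avg fun x => (N j x - 1) * (cav j (fun x => ∏ i ∈ univ.erase j, u i x) x *
        cav j (fun x => ∏ i ∈ univ.erase j, v i x) x)| ≤
      gcsBound (Fintype.card J - 1) (2 ^ 2 ^ Fintype.card J * η) := by
  set B : J → Finset (Finset J) := fun i => if i = j then ∅ else
    (if i ∈ A then {∅} else ∅) ∪ (if i ∈ A' then {{j}} else ∅) with hBdef
  have hBmem : ∀ k, ∀ D ∈ B k, k ≠ j ∧ (D = ∅ ∨ D = {j}) := by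
    intro k D hD
    simp only [hBdef] at hD
    split_ifs at hD <;> simp_all
  have h := gcs hN0 hN hη hη1 j (univ.erase j) (by simp) {∅} (fun _ => ∅) B
    (fun k p => u k p.1 * v k (mix {j} p)) (by simp) (by simp) (by simp) (by simp) (by simp)
    (by
      intro k D hD
      obtain ⟨hk, rfl | rfl⟩ := hBmem k D hD <;> simp [hk])
    (by simp) (by simp)
    (by
      intro i hi k D hD
      have hij := ne_of_mem_erase hi
      obtain ⟨hk, rfl | rfl⟩ := hBmem k D hD <;> simp [hij])
    (by
      intro k hk p
      rw [abs_of_nonneg (mul_nonneg (hu0 _ _) (hv0 _ _))]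
      have hkj := ne_of_mem_erase hk
      have h1 := huN k p.1
      have h2 := hvN k (mix {j} p)
      have hm : mix ∅ p = p.1 := by simp [mix]
      have hne : (∅ : Finset J) ≠ {j} := (singleton_ne_empty j).symm
      simp only [hBdef, if_neg hkj]
      by_cases hA : k ∈ A <;> by_cases hA' : k ∈ A' <;>
        simp only [hA, hA', if_true, if_false] at h1 h2 ⊢
      · rw [prod_union (by simp), prod_singleton, prod_singleton, hm]
        exact mul_le_mul h1 h2 (hv0 _ _) (hN0 _ _)
      · rw [union_empty, prod_singleton, hm]
        exact (mul_le_mul h1 h2 (hv0 _ _) (hN0 _ _)).trans (mul_one _).le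
      · rw [empty_union, prod_singleton]
        exact (mul_le_mul h1 h2 (hv0 _ _) zero_le_one).trans (one_mul _).le
      · rw [empty_union, prod_empty]
        exact (mul_le_mul h1 h2 (hv0 _ _) zero_le_one).trans (one_mul _).le)
    (by
      intro k hk p z
      have hkj := ne_of_mem_erase hk
      simp only
      rw [mix_upd₀ (by simpa using hkj), hu, hv])
    (by
      intro i hi k hk p z
      have hij := ne_of_mem_erase hi
      simp only
      rw [mix_upd₁ (by simpa using hij)])
  rw [card_erase_of_mem (mem_univ j), card_univ] at h
  rw [avg_cav_mul_cav (k := fun x => N j x - 1) (fun x z => by simp only [hN j x z])]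
  convert h using 4 with p
  simp [mono, mix, prod_mul_distrib]

/-- Error term of the relative counting lemma with `n` weighted factors. -/
noncomputable def kap : ℕ → ℝ → ℝ
  | 0, _ => 0
  | n + 1, t => t + √(12 * t + 4 * kap n t)

/-- The coordinate average of a product of weights is close to `1` in `L²`. -/
lemma lf_mass {η : ℝ} (hη : LF N η) (j : J) (S : Finset J) :
    (avg fun x => (cav j (fun x => ∏ i ∈ univ.erase j, if i ∈ S then N i x else 1) x - 1) ^ 2) ≤
      3 * η := by
  set W : (J → Z) → ℝ := fun x => ∏ i ∈ univ.erase j, if i ∈ S then N i x else 1 with hW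
  set T1 : J → Finset (Finset J) := fun i => if i = j then ∅ else if i ∈ S then {∅} else ∅ with hT1
  set T2 : J → Finset (Finset J) :=
    fun i => if i = j then ∅ else if i ∈ S then {∅, {j}} else ∅ with hT2
  have h1 := hη T1 (by
    intro k D hD
    simp only [hT1] at hD
    split_ifs at hD <;> simp_all)
  have h2 := hη T2 (by
    intro k D hD
    simp only [hT2] at hD
    split_ifs at hD with h h'
    · simp at hD
    · rcases mem_insert.1 hD with rfl | hD
      · simp
      · rw [mem_singleton] at hD; subst hD; simpa using h
    · simp at hD)
  have hne : (∅ : Finset J) ≠ {j} := (singleton_ne_empty j).symm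
  have hm : ∀ p : (J → Z) × (J → Z), mix ∅ p = p.1 := fun p => by simp [mix]
  have e1 : avg (mono N T1) = avg (cav j W) := by
    rw [avg_cav, ← avg_pair_fst]
    congr 1; funext p
    rw [mono_erase (j := j) (by simp [hT1])]
    refine prod_congr rfl fun i hi => ?_
    simp only [hT1, if_neg (ne_of_mem_erase hi)]
    split_ifs <;> simp [hm]
  have e2 : avg (mono N T2) = avg fun x => cav j W x ^ 2 := by
    have := avg_cav_mul_cav (j := j) (k := fun _ => 1) (fun _ _ => rfl) W W
    simp only [one_mul, ← sq] at this
    rw [this]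
    congr 1; funext p
    rw [mono_erase (j := j) (by simp [hT2]), hW]
    simp only
    rw [← prod_mul_distrib]
    refine prod_congr rfl fun i hi => ?_
    simp only [hT2, if_neg (ne_of_mem_erase hi)]
    split_ifs
    · rw [prod_pair hne, hm]
    · simp
  have e3 : (avg fun x => (cav j W x - 1) ^ 2) =
      (avg fun x => cav j W x ^ 2) - 2 * avg (cav j W) + 1 := by
    have h := avg_const (α := J → Z) 1
    rw [← avg_const_mul, ← avg_sub]
    refine Eq.trans ?_ (congrArg _ h)
    rw [← avg_add]
    congr 1; funext x; ring
  rw [e3, ← e1, ← e2]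
  linarith [(abs_le.1 h1).1, (abs_le.1 h2).2]

/-- With coordinate `j` frozen, the other factors of a product form a box test. -/
lemma isTest_slice (j : J) (g : J → (J → Z) → ℝ) (hg : ∀ i, Indep i (g i))
    (hg1 : ∀ i x, 0 ≤ g i x ∧ g i x ≤ 1) (z : Z) :
    IsTest j fun x => ∏ i ∈ univ.erase j, g i (Function.update x j z) := by
  refine ⟨fun i x => g i (Function.update x j z), fun i x => ?_, fun i x y => ?_, fun i x y => ?_,
    fun x => rfl⟩
  · rw [abs_of_nonneg (hg1 _ _).1]; exact (hg1 _ _).2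
  · by_cases h : i = j
    · subst h; simp
    · simp only
      rw [Function.update_comm h, hg]
  · simp

lemma avg_comm {α β : Type*} [Fintype α] [Fintype β] (F : α → β → ℝ) :
    (avg fun a => avg fun b => F a b) = avg fun b => avg fun a => F a b := by
  rw [← avg_prod (fun p : α × β => F p.1 p.2), ← avg_prod (fun p : β × α => F p.2 p.1),
    ← avg_equiv (Equiv.prodComm α β)]
  rfl

/-- Relative counting lemma. The factors indexed by `S` are replaced by their dense models one at
a time; Cauchy–Schwarz removes the weight `N_j` at the cost of doubling coordinate `j`, and
truncating the coordinate average at `1` reduces to fewer weighted factors. -/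
lemma counting {η t : ℝ} (hN0 : ∀ k x, 0 ≤ N k x) (hN : ∀ k, Indep k (N k)) (hη : LF N η)
    (hη1 : η ≤ 1) (ht : 3 * η ≤ t) (ht' : √(3 * η) ≤ t)
    (htb : gcsBound (Fintype.card J - 1) (2 ^ 2 ^ Fintype.card J * η) ≤ t) (n : ℕ) :
    ∀ (S : Finset J), S.card = n → ∀ g g' : J → (J → Z) → ℝ, (∀ j, Indep j (g j)) →
    (∀ j, Indep j (g' j)) → (∀ j x, 0 ≤ g j x) → (∀ j ∈ S, ∀ x, g j x ≤ N j x) →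
    (∀ j, j ∉ S → g j = g' j) → (∀ j x, 0 ≤ g' j x ∧ g' j x ≤ 1) →
    (∀ j ∈ S, ∀ φ, IsTest j φ → |avg fun x => (g j x - g' j x) * φ x| ≤ t) →
    |(avg fun x => ∏ j, g j x) - avg fun x => ∏ j, g' j x| ≤ kap n t := by
  induction n with
  | zero =>
    intro S hS g g' _ _ _ _ hgg _ _
    rw [card_eq_zero] at hS
    subst hS
    have : g = g' := funext fun j => hgg j (by simp)
    subst this
    simp [kap]
  | succ n ih =>
    intro S hS g g' hg hg' hg0 hgN hgg hg1' hd
    obtain ⟨j, hj⟩ : S.Nonempty := card_pos.1 (by omega)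
    set P : (J → Z) → ℝ := fun x => ∏ i ∈ univ.erase j, g i x with hP
    set P' : (J → Z) → ℝ := fun x => ∏ i ∈ univ.erase j, g' i x with hP'
    set W : (J → Z) → ℝ := fun x => ∏ i ∈ univ.erase j, if i ∈ S then N i x else 1 with hW
    set a := cav j P with ha
    set a' := cav j P' with ha'
    set w := cav j W with hw
    have hgS : ∀ i x, g i x ≤ if i ∈ S then N i x else 1 := by
      intro i x
      split_ifs with h
      · exact hgN i h x
      · rw [hgg i h]; exact (hg1' i x).2
    have hPW : ∀ x, P x ≤ W x := fun x => prod_le_prod (fun i _ => hg0 i x) fun i _ => hgS i x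
    have ha0 : ∀ x, 0 ≤ a x := cav_nonneg fun x => prod_nonneg fun i _ => hg0 i x
    have ha0' : ∀ x, 0 ≤ a' x := cav_nonneg fun x => prod_nonneg fun i _ => (hg1' i x).1
    have ha1' : ∀ x, a' x ≤ 1 := cav_le_one fun x =>
      prod_le_one (fun i _ => (hg1' i x).1) fun i _ => (hg1' i x).2
    have haw : ∀ x, a x ≤ w x := cav_mono hPW
    -- The error with weight `k` at position `j`, for `k` with values in `[0, 1]`.
    have hrec : ∀ k : (J → Z) → ℝ, Indep j k → (∀ x, 0 ≤ k x ∧ k x ≤ 1) →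
        |avg fun x => k x * (a x - a' x)| ≤ kap n t := by
      intro k hk hk1
      have e : ∀ G : J → (J → Z) → ℝ, (avg fun x => ∏ i, Function.update G j k i x) =
          avg fun x => k x * cav j (fun x => ∏ i ∈ univ.erase j, G i x) x := by
        intro G
        rw [avg_mul_cav hk]
        congr 1; funext x
        rw [← mul_prod_erase univ _ (mem_univ j), Function.update_self]
        congr 1
        refine prod_congr rfl fun i hi => ?_
        rw [Function.update_of_ne (ne_of_mem_erase hi)]
      have hupd : ∀ (G : J → (J → Z) → ℝ) (Q : (i : J) → ((J → Z) → ℝ) → Prop), Q j k →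
          (∀ i, Q i (G i)) → ∀ i, Q i (Function.update G j k i) := by
        intro G Q h1 h2 i
        by_cases h : i = j
        · subst h; rwa [Function.update_self]
        · rw [Function.update_of_ne h]; exact h2 i
      have := ih (S.erase j) (by rw [card_erase_of_mem hj, hS]; rfl) (Function.update g j k)
        (Function.update g' j k) (hupd g Indep hk hg) (hupd g' Indep hk hg')
        (hupd g (fun _ f => ∀ x, 0 ≤ f x) (fun x => (hk1 x).1) hg0)
        (by
          intro i hi x
          rw [Function.update_of_ne (ne_of_mem_erase hi)]
          exact hgN i (mem_of_mem_erase hi) x)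
        (by
          intro i hi
          by_cases h : i = j
          · subst h; simp
          · rw [Function.update_of_ne h, Function.update_of_ne h]
            exact hgg i fun h' => hi (mem_erase.2 ⟨h, h'⟩))
        (hupd g' (fun _ f => ∀ x, 0 ≤ f x ∧ f x ≤ 1) hk1 hg1')
        (by
          intro i hi
          rw [Function.update_of_ne (ne_of_mem_erase hi), Function.update_of_ne (ne_of_mem_erase hi)]
          exact hd i (mem_of_mem_erase hi))
      rw [e, e, ← avg_sub] at this
      simpa only [mul_sub] using this
    have hmass := (lf_mass hη j S).trans ht
    have hmass' : (avg fun x => |w x - 1|) ≤ t := by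
      refine le_trans ?_ ht'
      refine Real.le_sqrt_of_sq_le ?_
      have h := avg_mul_sq_le (fun x => |w x - 1|) (fun _ => 1)
      simp only [mul_one, one_pow, sq_abs, avg_const] at h
      exact h.trans (lf_mass hη j S)
    -- `E (a - a')²` is small.
    have hL2 : (avg fun x => (a x - a' x) ^ 2) ≤ 2 * t + 2 * kap n t := by
      have e : (avg fun x => (a x - a' x) ^ 2) = (avg fun x => (a x - min (a x) 1) * (a x - a' x)) +
          ((avg fun x => min (a x) 1 * (a x - a' x)) - avg fun x => a' x * (a x - a' x)) := by
        rw [← avg_sub, ← avg_add]; congr 1; funext x; ring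
      have h1 := hrec (fun x => min (a x) 1) (fun x z => by simp only [ha, cav_indep j P x z])
        fun x => ⟨le_min (ha0 x) zero_le_one, min_le_right _ _⟩
      have h2 := hrec a' (cav_indep j P') fun x => ⟨ha0' x, ha1' x⟩
      have h3 : (avg fun x => (a x - min (a x) 1) * (a x - a' x)) ≤ 2 * t := by
        calc _ ≤ avg fun x => |w x - 1| + (w x - 1) ^ 2 := avg_mono fun x => by
              have b0 : 0 ≤ a x - min (a x) 1 := by linarith [min_le_left (a x) 1]
              have b1 : a x - min (a x) 1 ≤ |w x - 1| := by
                rcases le_total (a x) 1 with h | h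
                · rw [min_eq_left h, sub_self]; exact abs_nonneg _
                · rw [min_eq_right h]
                  exact le_trans (by linarith [haw x]) (le_abs_self _)
              have b2 : a x - a' x ≤ 1 + |w x - 1| := by
                linarith [haw x, ha0' x, le_abs_self (w x - 1)]
              calc (a x - min (a x) 1) * (a x - a' x) ≤ (a x - min (a x) 1) * (1 + |w x - 1|) :=
                    mul_le_mul_of_nonneg_left b2 b0
                _ ≤ |w x - 1| * (1 + |w x - 1|) :=
                    mul_le_mul_of_nonneg_right b1 (by positivity)
                _ = |w x - 1| + (w x - 1) ^ 2 := by rw [← sq_abs (w x - 1)]; ring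
          _ = (avg fun x => |w x - 1|) + avg fun x => (w x - 1) ^ 2 := avg_add _ _
          _ ≤ 2 * t := by linarith
      rw [e]
      linarith [(abs_le.1 h1).2, (abs_le.1 h2).1]
    -- `E (N_j - 1) (a - a')²` is small.
    have hNL2 : (avg fun x => (N j x - 1) * (a x - a' x) ^ 2) ≤ 4 * t := by
      have hg1i : ∀ i x, g' i x ≤ if i ∈ (∅ : Finset J) then N i x else 1 := by
        intro i x; simpa using (hg1' i x).2
      have h0 : ∀ i x, 0 ≤ g' i x := fun i x => (hg1' i x).1
      have q1 := (strong_lf hN0 hN hη hη1 j S S g g hg hg hg0 hg0 hgS hgS).trans htb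
      have q2 := (strong_lf hN0 hN hη hη1 j S ∅ g g' hg hg' hg0 h0 hgS hg1i).trans htb
      have q3 := (strong_lf hN0 hN hη hη1 j ∅ S g' g hg' hg h0 hg0 hg1i hgS).trans htb
      have q4 := (strong_lf hN0 hN hη hη1 j ∅ ∅ g' g' hg' hg' h0 h0 hg1i hg1i).trans htb
      have e : (avg fun x => (N j x - 1) * (a x - a' x) ^ 2) =
          (avg fun x => (N j x - 1) * (a x * a x)) - (avg fun x => (N j x - 1) * (a x * a' x)) -
          (avg fun x => (N j x - 1) * (a' x * a x)) + avg fun x => (N j x - 1) * (a' x * a' x) := by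
        rw [← avg_sub, ← avg_sub, ← avg_add]; congr 1; funext x; ring
      rw [e]
      linarith [(abs_le.1 q1).2, (abs_le.1 q2).1, (abs_le.1 q3).1, (abs_le.1 q4).2]
    have hNmass : avg (N j) ≤ 2 := by
      have h := hη (Function.update (fun _ => ∅) j {∅}) (by
        intro k D hD
        by_cases hk : k = j
        · subst hk; simp at hD; simp [hD]
        · rw [Function.update_of_ne hk] at hD; simp at hD)
      have e : avg (mono N (Function.update (fun _ => ∅) j {∅})) = avg (N j) := by
        rw [← avg_pair_fst]
        congr 1; funext p
        unfold mono
        rw [prod_eq_single j (fun k _ hk => by rw [Function.update_of_ne hk, prod_empty])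
          (by simp), Function.update_self]
        simp [mix]
      rw [e] at h
      linarith [(abs_le.1 h).2]
    have hfirst : |avg fun x => g j x * (a x - a' x)| ≤ √(12 * t + 4 * kap n t) := by
      refine Real.le_sqrt_of_sq_le ?_
      have b1 : |avg fun x => g j x * (a x - a' x)| ≤ avg fun x => N j x * (1 * |a x - a' x|) := by
        refine (abs_avg_le _).trans (avg_mono fun x => ?_)
        rw [abs_mul, one_mul, abs_of_nonneg (hg0 j x)]
        exact mul_le_mul_of_nonneg_right (hgN j hj x) (abs_nonneg _)
      have b2 := avg_wmul_sq_le (N j) (fun _ => 1) (fun x => |a x - a' x|) (hN0 j)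
      have b3 : (avg fun x => N j x * |a x - a' x| ^ 2) ≤ 6 * t + 2 * kap n t := by
        have e : (avg fun x => N j x * |a x - a' x| ^ 2) =
            (avg fun x => (N j x - 1) * (a x - a' x) ^ 2) + avg fun x => (a x - a' x) ^ 2 := by
          rw [← avg_add]; congr 1; funext x; rw [sq_abs]; ring
        rw [e]; linarith
      have b4 : 0 ≤ avg fun x => N j x * |a x - a' x| ^ 2 :=
        avg_nonneg fun x => mul_nonneg (hN0 j x) (sq_nonneg _)
      simp only [one_pow, mul_one] at b2
      calc _ ≤ (avg fun x => N j x * (1 * |a x - a' x|)) ^ 2 := by gcongr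
        _ ≤ avg (N j) * avg fun x => N j x * |a x - a' x| ^ 2 := b2
        _ ≤ 2 * (6 * t + 2 * kap n t) := mul_le_mul hNmass b3 b4 (by norm_num)
        _ = _ := by ring
    have hsecond : |avg fun x => (g j x - g' j x) * a' x| ≤ t := by
      have e : (avg fun x => (g j x - g' j x) * a' x) =
          avg fun z => avg fun x => (g j x - g' j x) * P' (Function.update x j z) := by
        rw [avg_comm]
        congr 1; funext x
        rw [avg_const_mul]; rfl
      rw [e]
      exact abs_avg_le_of_le fun z => hd j hj _ (isTest_slice j g' hg' hg1' z)
    have e1 : (avg fun x => ∏ i, g i x) = avg fun x => g j x * a x := by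
      rw [avg_mul_cav (hg j)]; congr 1; funext x
      exact (mul_prod_erase univ (fun i => g i x) (mem_univ j)).symm
    have e2 : (avg fun x => ∏ i, g' i x) = avg fun x => g' j x * a' x := by
      rw [avg_mul_cav (hg' j)]; congr 1; funext x
      exact (mul_prod_erase univ (fun i => g' i x) (mem_univ j)).symm
    have e3 : (avg fun x => g j x * a x) - (avg fun x => g' j x * a' x) =
        (avg fun x => (g j x - g' j x) * a' x) + avg fun x => g j x * (a x - a' x) := by
      rw [← avg_sub, ← avg_add]; congr 1; funext x; ring
    rw [e1, e2, e3]
    exact (abs_add_le _ _).trans (add_le_add hsecond hfirst)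

end counting

/-! ### Configurations and the conclusion -/

section glue
open Filter Topology

lemma gcsBound_zero (n : ℕ) : gcsBound n 0 = 0 := by
  induction n with
  | zero => rfl
  | succ n ih => simp [gcsBound, ih]

lemma continuous_gcsBound (n : ℕ) : Continuous (gcsBound n) := by
  induction n with
  | zero => exact continuous_id
  | succ n ih => exact (continuous_const.mul ih).sqrt

lemma kap_zero (n : ℕ) : kap n 0 = 0 := by
  induction n with
  | zero => rfl
  | succ n ih => simp [kap, ih]

lemma continuous_kap (n : ℕ) : Continuous (kap n) := by
  induction n with
  | zero => exact continuous_const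
  | succ n ih =>
    exact continuous_id.add ((continuous_const.mul continuous_id).add (continuous_const.mul ih)).sqrt

/-- A continuous function vanishing at `0` is small at some small positive argument. -/
lemma eventually_small {F : ℝ → ℝ} (hF : Continuous F) (h0 : F 0 = 0) {c : ℝ} (hc : 0 < c) :
    ∀ᶠ t in 𝓝[>] (0 : ℝ), F t ≤ c := by
  have : Tendsto F (𝓝[>] 0) (𝓝 0) := by
    have := hF.tendsto 0
    rw [h0] at this
    exact this.mono_left nhdsWithin_le_nhds
  exact (this.eventually (gt_mem_nhds hc)).mono fun _ h => le_of_lt h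

variable {Z Z' : Type} [AddCommGroup Z] [Fintype Z] [DecidableEq Z] [AddCommGroup Z'] [Fintype Z']

/-- The point `∑ φ_i(x_i) - φ_j(∑ x_i)` of the configuration attached to `x`; it does not depend
on `x_j`. -/
def cfgPt (φ : J → Z →+ Z') (j : J) (x : J → Z) : Z' := ∑ i, φ i (x i) - φ j (∑ i, x i)

lemma cfgPt_eq (φ : J → Z →+ Z') (j : J) (x : J → Z) :
    cfgPt φ j x = ∑ i ∈ univ.erase j, φ i (x i) - φ j (∑ i ∈ univ.erase j, x i) := by
  unfold cfgPt
  rw [← add_sum_erase univ (fun i => φ i (x i)) (mem_univ j),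
    ← add_sum_erase univ x (mem_univ j), map_add]
  abel

lemma cfgPt_update (φ : J → Z →+ Z') (j : J) (x : J → Z) (z : Z) :
    cfgPt φ j (Function.update x j z) = cfgPt φ j x := by
  rw [cfgPt_eq, cfgPt_eq]
  congr 1
  · exact sum_congr rfl fun i hi => by rw [Function.update_of_ne (ne_of_mem_erase hi)]
  · congr 1
    exact sum_congr rfl fun i hi => by rw [Function.update_of_ne (ne_of_mem_erase hi)]

/-- The edges of the complete hypergraph are the complements of single vertices. -/
lemma powersetCard_pred_eq_image (hJ : 1 ≤ Fintype.card J) :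
    (univ : Finset J).powersetCard (Fintype.card J - 1) = univ.image fun j => univ.erase j := by
  ext e
  simp only [mem_powersetCard, subset_univ, true_and, mem_image, mem_univ]
  constructor
  · intro h
    have : eᶜ.card = 1 := by rw [card_compl, h]; omega
    obtain ⟨j, hj⟩ := card_eq_one.1 this
    refine ⟨j, ?_⟩
    rw [← compl_compl e, hj]
    ext i; simp
  · rintro ⟨j, rfl⟩
    rw [card_erase_of_mem (mem_univ j), card_univ]

/-- The set of coordinates chosen by `ω`, as a subset of `J`. -/
def supp (e : Finset J) (ω : ↥e → Bool) : Finset J := univ.filter fun i => ∃ h : i ∈ e, ω ⟨i, h⟩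

/-- The `H`-linear forms condition of the induced hypergraph, in terms of monomials. An edge
`univ.erase j` and `ω` correspond to the colour `j` and the set of coordinates taken from the second
point. -/
lemma lf_of_hlinearForms (hJ : 1 ≤ Fintype.card J) (φ : J → Z →+ Z') (ν : Z' → ℝ) (η : ℝ)
    (h : HLinearForms (V := fun _ : J => Z)
      (Finset.univ.powersetCard (Fintype.card J - 1)) (inducedNu φ ν) η) :
    LF (fun j (x : J → Z) => ν (cfgPt φ j x)) η := by
  classical
  intro T hT
  have h' := h fun e ω => decide (∃ j, e = univ.erase j ∧ supp e ω ∈ T j)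
  convert h' using 4 with p
  funext p
  rw [powersetCard_pred_eq_image hJ, prod_image]
  swap
  · intro i _ j _ hij
    by_contra hne
    have : i ∈ univ.erase j := mem_erase.2 ⟨hne, mem_univ i⟩
    have hij' : univ.erase i = univ.erase j := hij
    rw [← hij'] at this
    simp at this
  unfold mono
  refine prod_congr rfl fun j _ => ?_
  have herase : ∀ j' : J, (univ.erase j : Finset J) = univ.erase j' → j' = j := by
    intro j' hj
    by_contra hne
    have : j' ∈ (univ.erase j : Finset J) := mem_erase.2 ⟨hne, mem_univ _⟩
    rw [hj] at this
    simp at this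
  rw [← prod_filter]
  symm
  refine prod_bij' (fun ω _ => supp (univ.erase j) ω) (fun D _ => fun i => decide (i.1 ∈ D))
    ?_ ?_ ?_ ?_ ?_
  · intro ω hω
    simp only [mem_filter, mem_univ, true_and, decide_eq_true_eq] at hω
    obtain ⟨j', hj', hm⟩ := hω
    rwa [herase j' hj'] at hm
  · intro D hD
    simp only [mem_filter, mem_univ, true_and, decide_eq_true_eq]
    refine ⟨j, rfl, ?_⟩
    convert hD
    ext i
    simp only [supp, mem_filter, mem_univ, true_and, decide_eq_true_eq, mem_erase, and_true,
      exists_prop, and_iff_right_iff_imp]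
    rintro hi rfl
    exact hT _ _ hD hi
  · intro ω _
    funext i
    simp [supp, ne_of_mem_erase i.2]
  · intro D hD
    ext i
    simp only [supp, mem_filter, mem_univ, true_and, decide_eq_true_eq, mem_erase, and_true,
      exists_prop, and_iff_right_iff_imp]
    rintro hi rfl
    exact hT _ _ hD hi
  · intro ω _
    have hcompl : (univ \ univ.erase j : Finset J) = {j} := by
      ext i; simp
    have hval : ∀ i : ↥(univ.erase j : Finset J),
        (if ω i then p.2 i.1 else p.1 i.1) = mix (supp (univ.erase j) ω) p i.1 := by
      intro i
      have : i.1 ∈ supp (univ.erase j) ω ↔ ω i = true := by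
        simp [supp, ne_of_mem_erase i.2]
      simp only [mix, Finset.piecewise, this]
    unfold inducedNu
    simp only [hval]
    rw [hcompl, sum_singleton, cfgPt_eq, ← sum_coe_sort (univ.erase j),
      ← sum_coe_sort (univ.erase j)]

/-- The parametrization `x ↦ (∑ φ_i(x_i), -∑ x_i)` of base point and dilation. -/
def param (φ : J → Z →+ Z') : (J → Z) →+ Z' × Z where
  toFun x := (∑ i, φ i (x i), - ∑ i, x i)
  map_zero' := by simp
  map_add' x y := by simp [sum_add_distrib, add_comm]

/-- The generation hypothesis makes base point and dilation jointly surjective in `x`. -/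
lemma param_surjective [Nonempty J] (φ : J → Z →+ Z')
    (hgen : AddSubgroup.closure {z : Z' | ∃ i j : J, ∃ d : Z, z = φ i d - φ j d} = ⊤) :
    Function.Surjective (param φ) := by
  have hs : ∀ i z, param φ (Pi.single i z) = (φ i z, -z) := by
    intro i z
    have h1 : ∑ k, φ k ((Pi.single i z : J → Z) k) = φ i z := by
      rw [sum_eq_single i (fun k _ hk => by simp [Pi.single_eq_of_ne hk]) (by simp)]
      simp
    have h2 : ∑ k, (Pi.single i z : J → Z) k = z := by simp
    change (_, _) = _
    rw [h1, h2]
  have h0 : ∀ a : Z', ((a, 0) : Z' × Z) ∈ (param φ).range := by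
    have : AddSubgroup.closure {z : Z' | ∃ i j : J, ∃ d : Z, z = φ i d - φ j d} ≤
        (param φ).range.comap (AddMonoidHom.inl Z' Z) := by
      rw [AddSubgroup.closure_le]
      rintro _ ⟨i, j, d, rfl⟩
      refine ⟨Pi.single i d - Pi.single j d, ?_⟩
      rw [map_sub, hs, hs]
      simp
    intro a
    exact this (hgen ▸ AddSubgroup.mem_top a)
  rintro ⟨a, d⟩
  obtain ⟨i⟩ := ‹Nonempty J›
  have := (param φ).range.add_mem (h0 (a - φ i (-d))) ⟨Pi.single i (-d), hs i (-d)⟩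
  simpa using this

/-- A surjective homomorphism of finite groups preserves averages. -/
lemma avg_surjective {A B : Type*} [AddCommGroup A] [Fintype A] [AddCommGroup B] [Fintype B]
    (Ψ : A →+ B) (h : Function.Surjective Ψ) (G : B → ℝ) : avg (fun x => G (Ψ x)) = avg G := by
  choose s hs using h
  have h1 : (avg fun p => avg fun x => G (Ψ x + p)) = avg fun x => G (Ψ x) := by
    have : ∀ p, (avg fun x => G (Ψ x + p)) = avg fun x => G (Ψ x) := by
      intro p
      rw [← avg_equiv (Equiv.addRight (s p)) (fun x => G (Ψ x))]
      congr 1; funext x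
      simp [hs]
    simp_rw [this, avg_const]
  have h2 : (avg fun x => avg fun p => G (Ψ x + p)) = avg G := by
    have : ∀ x, (avg fun p => G (Ψ x + p)) = avg G := fun x => avg_equiv (Equiv.addLeft (Ψ x)) G
    simp_rw [this, avg_const]
  rw [← h1, avg_comm, h2]

lemma cfgPt_param (φ : J → Z →+ Z') (j : J) (x : J → Z) :
    cfgPt φ j x = (param φ x).1 + φ j (param φ x).2 := by
  simp [cfgPt, param, sub_eq_add_neg]

lemma avg_cfgPt [Nonempty J] (φ : J → Z →+ Z')
    (hgen : AddSubgroup.closure {z : Z' | ∃ i j : J, ∃ d : Z, z = φ i d - φ j d} = ⊤)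
    (f : Z' → ℝ) (j : J) : (avg fun x => f (cfgPt φ j x)) = avg f := by
  simp_rw [cfgPt_param]
  rw [avg_surjective (param φ) (param_surjective φ hgen) (fun p => f (p.1 + φ j p.2)), avg_prod,
    avg_comm]
  have : ∀ d : Z, (avg fun a => f (a + φ j d)) = avg f :=
    fun d => avg_equiv (Equiv.addRight (φ j d)) f
  simp only [this, avg_const]

/-- The density of the subspace `∑ x_i = 0`, on which all points `cfgPt φ j x` coincide. -/
noncomputable def diagW (x : J → Z) : ℝ := if ∑ i, x i = 0 then (Fintype.card Z : ℝ) else 0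

lemma diagW_mul (φ : J → Z →+ Z') (f : Z' → ℝ) (j : J) (x : J → Z) :
    diagW x * f (∑ i, φ i (x i)) = diagW x * f (cfgPt φ j x) := by
  unfold diagW cfgPt
  split_ifs with h
  · rw [h, map_zero, sub_zero]
  · simp

/-- Functions ignoring one coordinate do not see the restriction to `∑ x_i = 0`. -/
lemma avg_diagW_mul {j : J} {B : (J → Z) → ℝ} (hB : Indep j B) :
    (avg fun x => diagW x * B x) = avg B := by
  rw [← avg_update j]
  congr 1; funext x
  simp_rw [hB x]
  rw [avg_mul_const]
  have : (avg fun z => diagW (Function.update x j z)) = 1 := by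
    unfold diagW avg
    have e : ∀ z, (∑ i, Function.update x j z i = 0) ↔ z = -∑ i ∈ univ \ {j}, x i := by
      intro z
      rw [sum_update_of_mem (mem_univ j), add_eq_zero_iff_eq_neg]
    simp_rw [e]
    rw [sum_ite_eq' univ]
    simp
  rw [this, one_mul]

end glue

/-- **Relative multidimensional Szemerédi theorem.** For every finite `J` with
`|J| ≥ 2` and every `δ > 0` there exist `c > 0` and `η > 0` such that: for all finite
abelian groups `Z, Z'`, homomorphisms `φ_j : Z →+ Z'` whose differences
`φ_i(d) - φ_j(d)` generate `Z'`, and `ν : Z' → ℝ≥0` whose induced weighted hypergraph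
(on the system with `V_j = Z`, `r = |J| - 1`, `H` all `r`-subsets of `J`) satisfies the
`H`-linear forms condition within `η`: every `f` with `0 ≤ f ≤ ν` and `E[f] ≥ δ`
satisfies `E[∏_{j ∈ J} f(a + φ_j(d)) | a ∈ Z', d ∈ Z] ≥ c`. -/
theorem relative_multidim_szemeredi (J : Type) [Fintype J] [DecidableEq J]
    (hJ : 2 ≤ Fintype.card J) (δ : ℝ) (hδ : 0 < δ) :
    ∃ c : ℝ, 0 < c ∧ ∃ η : ℝ, 0 < η ∧
    ∀ (Z Z' : Type) [AddCommGroup Z] [Fintype Z] [DecidableEq Z]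
      [AddCommGroup Z'] [Fintype Z'] [DecidableEq Z'],
    ∀ φ : J → Z →+ Z',
      AddSubgroup.closure {z : Z' | ∃ i j : J, ∃ d : Z, z = φ i d - φ j d} = ⊤ →
    ∀ ν : Z' → ℝ, (∀ y, 0 ≤ ν y) →
      HLinearForms (V := fun _ : J => Z)
        (Finset.univ.powersetCard (Fintype.card J - 1)) (inducedNu φ ν) η →
    ∀ f : Z' → ℝ, (∀ x, 0 ≤ f x ∧ f x ≤ ν x) → δ ≤ avg f →
    c ≤ avg (fun p : Z' × Z => ∏ j : J, f (p.1 + φ j p.2)) := by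
  obtain ⟨c, hc, ε, hε, removal⟩ := measure_removal hJ δ hδ
  -- `t` bounds the discrepancy of the dense models.
  obtain ⟨t, htε, htk, ht0⟩ : ∃ t : ℝ, t ≤ ε ∧ kap (Fintype.card J) t ≤ c / 2 ∧ 0 < t :=
    ((eventually_small continuous_id rfl hε).and ((eventually_small (continuous_kap _)
      (kap_zero _) (half_pos hc)).and self_mem_nhdsWithin)).exists
  obtain ⟨η₁, hη₁, dense⟩ := dense_model hJ t ht0
  have hcb : Continuous fun η : ℝ =>
      gcsBound (Fintype.card J - 1) (2 ^ 2 ^ Fintype.card J * η) :=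
    (continuous_gcsBound _).comp (continuous_const.mul continuous_id)
  have hb0 : gcsBound (Fintype.card J - 1) (2 ^ 2 ^ Fintype.card J * 0) = 0 := by
    rw [mul_zero, gcsBound_zero]
  obtain ⟨η, h1, h3, hs, hbt, hb1, hη0⟩ : ∃ η : ℝ, η ≤ 1 ∧ 3 * η ≤ t ∧ √(3 * η) ≤ t ∧
      gcsBound (Fintype.card J - 1) (2 ^ 2 ^ Fintype.card J * η) ≤ t ∧
      gcsBound (Fintype.card J - 1) (2 ^ 2 ^ Fintype.card J * η) ≤ η₁ ∧ 0 < η :=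
    ((eventually_small continuous_id rfl one_pos).and
      ((eventually_small (continuous_const.mul continuous_id) (by simp) ht0).and
      ((eventually_small (continuous_const.mul continuous_id).sqrt (by simp) ht0).and
      ((eventually_small hcb hb0 ht0).and ((eventually_small hcb hb0 hη₁).and
        self_mem_nhdsWithin))))).exists
  refine ⟨c / 2, half_pos hc, η, hη0, ?_⟩
  intro Z Z' _ _ _ _ _ _ φ hgen ν hν hlf f₀ hf₀ hδf₀
  have : Nonempty J := Fintype.card_pos_iff.1 (by omega)
  -- Normalize `f₀` to have mean exactly `δ`.
  set f : Z' → ℝ := fun y => (δ / avg f₀) * f₀ y with hf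
  have hm0 : 0 < avg f₀ := hδ.trans_le hδf₀
  have hr0 : 0 ≤ δ / avg f₀ := by positivity
  have hr1 : δ / avg f₀ ≤ 1 := (div_le_one hm0).2 hδf₀
  have hff₀ : ∀ y, 0 ≤ f y ∧ f y ≤ f₀ y := fun y =>
    ⟨mul_nonneg hr0 (hf₀ y).1, mul_le_of_le_one_left (hf₀ y).1 hr1⟩
  have hfm : avg f = δ := by
    rw [hf, avg_const_mul]; field_simp
  set N : J → (J → Z) → ℝ := fun j x => ν (cfgPt φ j x) with hNdef
  set F : J → (J → Z) → ℝ := fun j x => f (cfgPt φ j x) with hFdef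
  have hN0 : ∀ k x, 0 ≤ N k x := fun k x => hν _
  have hN : ∀ k, Indep k (N k) := fun k x z => by simp only [hNdef, cfgPt_update]
  have hF : ∀ k, Indep k (F k) := fun k x z => by simp only [hFdef, cfgPt_update]
  have hFN : ∀ k x, 0 ≤ F k x ∧ F k x ≤ N k x := fun k x =>
    ⟨(hff₀ _).1, (hff₀ _).2.trans (hf₀ _).2⟩
  have hLF : LF N η := lf_of_hlinearForms (by omega) φ ν η hlf
  have hdense : ∀ j, ∃ g : (J → Z) → ℝ, (∀ x, 0 ≤ g x ∧ g x ≤ 1) ∧ Indep j g ∧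
      ∀ ψ, IsTest j ψ → |avg fun x => (F j x - g x) * ψ x| ≤ t := fun j =>
    dense Z j (N j) (F j) (hFN j) fun ψ hψ => (lf_test hN0 hN hLF h1 j ψ hψ).trans hb1
  choose g hg01 hg hgt using hdense
  -- The measure on `∑ x_i = 0` given by `f`, which projects to the density `F j` for each `j`.
  set lam : (J → Z) → ℝ := fun x => δ⁻¹ * (diagW x * f (∑ i, φ i (x i))) with hlam
  have hlamj : ∀ j x, δ * lam x = diagW x * F j x := by
    intro j x
    rw [hlam]
    simp only [hFdef]
    rw [mul_inv_cancel_left₀ hδ.ne', diagW_mul φ f j]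
  have hlam0 : ∀ x, 0 ≤ lam x := by
    intro x
    refine mul_nonneg (by positivity) (mul_nonneg ?_ (hff₀ _).1)
    unfold diagW; split_ifs <;> positivity
  have hlam1 : avg lam = 1 := by
    obtain ⟨j⟩ := ‹Nonempty J›
    have e : δ * avg lam = δ := by
      rw [← avg_const_mul]
      simp_rw [hlamj j]
      rw [avg_diagW_mul (hF j), ← hfm]
      exact avg_cfgPt φ hgen f j
    exact mul_left_cancel₀ hδ.ne' (e.trans (mul_one δ).symm)
  have hrem := removal Z lam hlam0 hlam1 g hg01 hg (by
    intro j ψ hψ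
    have e : (avg fun x => (δ * lam x - g j x) * ψ x) = avg fun x => (F j x - g j x) * ψ x := by
      simp_rw [sub_mul]
      rw [avg_sub, avg_sub]
      congr 1
      simp_rw [hlamj j, mul_assoc]
      exact avg_diagW_mul (j := j) (B := fun x => F j x * ψ x)
        fun x z => by simp only [hF j x z, hψ.indep x z]
    rw [e]
    exact (hgt j ψ hψ).trans htε)
  have hcount := counting hN0 hN hLF h1 h3 hs hbt (Fintype.card J) univ card_univ F g hF hg
    (fun j x => (hFN j x).1) (fun j _ x => (hFN j x).2) (fun j hj => absurd (mem_univ j) hj) hg01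
    (fun j _ => hgt j)
  have hfin : c / 2 ≤ avg fun x => ∏ j, F j x := by
    linarith [(abs_le.1 hcount).1]
  calc c / 2 ≤ avg fun x => ∏ j, F j x := hfin
    _ = avg fun p : Z' × Z => ∏ j, f (p.1 + φ j p.2) := by
      rw [← avg_surjective (param φ) (param_surjective φ hgen)]
      simp only [hFdef, cfgPt_param]
    _ ≤ _ := avg_mono fun p => prod_le_prod (fun j _ => (hff₀ _).1) fun j _ => (hff₀ _).2
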